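/- (Korn–Maxwell–Sobolev at p = 1) Let 𝔸 be an elliptic first-order homogeneous operator on ℝ³ with matrix representative A. Then there is c > 0 such that ‖F‖_{L^{3/2}(ℝ³)} ≤ c(‖A[F]‖_{L^{3/2}(ℝ³)} + ‖curl F‖_{L¹(ℝ³)}) for all F ∈ C_c^∞(ℝ³; ℝ^{3×3}). -/

import Mathlib

open MeasureTheory
open scoped ENNReal

noncomputable def pd (j : Fin 3) (f : (Fin 3 → ℝ) → ℝ) (x : Fin 3 → ℝ) : ℝ :=
  fderiv ℝ f x (Pi.single j 1)

/-- The row-wise curl of a matrix field `F : ℝ³ → ℝ^{3×3}`. -/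
noncomputable def mcurl (F : (Fin 3 → ℝ) → Fin 3 → Fin 3 → ℝ) (x : Fin 3 → ℝ) :
    Fin 3 → Fin 3 → ℝ :=
  fun i => ![pd 1 (fun y => F y i 2) x - pd 2 (fun y => F y i 1) x,
             pd 2 (fun y => F y i 0) x - pd 0 (fun y => F y i 2) x,
             pd 0 (fun y => F y i 1) x - pd 1 (fun y => F y i 0) x]

/-- Ellipticity of the operator induced by `A`. -/
def IsElliptic {N : ℕ} (A : (Fin 3 → Fin 3 → ℝ) →ₗ[ℝ] (Fin N → ℝ)) : Prop :=
  ∀ ξ : Fin 3 → ℝ, ξ ≠ 0 →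
    Function.Injective (fun v : Fin 3 → ℝ => A (fun i j => v i * ξ j))

/-!
On the Fourier side, ellipticity provides the left inverse `(𝔸[ξ]* 𝔸[ξ])⁻¹ 𝔸[ξ]*` of the symbol
`𝔸[ξ]`, and pairing an entry `F_ab` with a test function `G` splits it into zero-homogeneous
multipliers acting on `A[F]` and a remainder which annihilates gradients. For fixed `ξ` the latter
sees each row of `F` only through `ξ × F_i`, so it is a pairing of `curl F` with a potential `U`
such that `G ↦ ∇ U` is again given by zero-homogeneous multipliers. These multipliers are bounded on
`L³` by Calderón–Zygmund theory, uniformly over the truncations of a Littlewood–Paley resolution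
`1 = ∑ j, ψ (2⁻ʲ ξ)`, which keep every kernel a Schwartz function. The first part is then controlled
by Hölder's inequality and the second one by the estimate `|∫ f · φ| ≲ ‖f‖_{L¹} ‖∇ φ‖_{L³}` for
divergence-free `f`, which is dual to the inequality of Bourgain and Brezis and is obtained from
the divergence theorem on half-spaces by slicing. Taking the supremum over `G` gives the `L^{3/2}`
bound.
-/

section DyadicCubes

variable {ι : Type*}

/-- The index of the dyadic cube of side `2 ^ (-k)` containing `x`. -/
noncomputable def dyadicIndex (k : ℤ) (x : ι → ℝ) : ι → ℤ := fun i => ⌊(2 : ℝ) ^ k * x i⌋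

/-- The half-open dyadic cube of side `2 ^ (-k)` with lower corner `2 ^ (-k) • m`. -/
def dyadicCube (k : ℤ) (m : ι → ℤ) : Set (ι → ℝ) := {x | dyadicIndex k x = m}

/-- The lower corner of `dyadicCube k m`. -/
noncomputable def dyadicCorner (k : ℤ) (m : ι → ℤ) : ι → ℝ := fun i => m i * (2 : ℝ) ^ (-k)

lemma mem_dyadicCube_dyadicIndex (k : ℤ) (x : ι → ℝ) : x ∈ dyadicCube k (dyadicIndex k x) := rfl

lemma dyadicCube_eq_pi (k : ℤ) (m : ι → ℤ) :
    dyadicCube k m = Set.univ.pi fun i =>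
      Set.Ico ((m i : ℝ) * (2 : ℝ) ^ (-k)) (((m i : ℝ) + 1) * (2 : ℝ) ^ (-k)) := by
  ext x
  have h2 : (0 : ℝ) < 2 ^ k := by positivity
  simp only [dyadicCube, dyadicIndex, funext_iff, Set.mem_ofPred_eq, Set.mem_pi, Set.mem_univ,
    true_implies, Set.mem_Ico, Int.floor_eq_iff, zpow_neg, ← div_eq_mul_inv, div_le_iff₀ h2,
    lt_div_iff₀ h2, mul_comm (x _)]

lemma dyadicIndex_eq_of_le {m k : ℤ} (hmk : m ≤ k) {x y : ι → ℝ}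
    (h : dyadicIndex k x = dyadicIndex k y) : dyadicIndex m x = dyadicIndex m y := by
  obtain ⟨d, rfl⟩ : ∃ d : ℕ, k = m + d := ⟨(k - m).toNat, by omega⟩
  have floor_eq (t : ℝ) : ⌊(2 : ℝ) ^ m * t⌋ = ⌊(2 : ℝ) ^ (m + d) * t⌋ / (2 ^ d : ℕ) := by
    rw [← Int.floor_div_natCast, zpow_add₀ two_ne_zero, zpow_natCast]
    congr 1
    push_cast
    field_simp
  funext i
  simp only [dyadicIndex, floor_eq]
  exact congrArg (· / _) (congrFun h i)

lemma dyadicCube_subset_dyadicCube {m k : ℤ} (hmk : m ≤ k) (x : ι → ℝ) :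
    dyadicCube k (dyadicIndex k x) ⊆ dyadicCube m (dyadicIndex m x) :=
  fun _ hy => dyadicIndex_eq_of_le hmk hy

lemma measurableSet_dyadicCube [Countable ι] (k : ℤ) (m : ι → ℤ) :
    MeasurableSet (dyadicCube k m) := by
  rw [dyadicCube_eq_pi]
  exact MeasurableSet.univ_pi fun i => measurableSet_Ico

variable [Fintype ι]

lemma norm_sub_dyadicCorner_le {k : ℤ} {m : ι → ℤ} {x : ι → ℝ} (hx : x ∈ dyadicCube k m) :
    ‖x - dyadicCorner k m‖ ≤ (2 : ℝ) ^ (-k) := by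
  rw [dyadicCube_eq_pi] at hx
  refine (pi_norm_le_iff_of_nonneg (by positivity)).2 fun i => ?_
  have hxi := hx i (Set.mem_univ _)
  have h2 : (0 : ℝ) < 2 ^ (-k) := by positivity
  rw [Pi.sub_apply, dyadicCorner, Real.norm_eq_abs, abs_le]
  constructor <;> linarith [hxi.1, hxi.2]

lemma norm_sub_le_of_mem_dyadicCube {k : ℤ} {m : ι → ℤ} {x y : ι → ℝ} (hx : x ∈ dyadicCube k m)
    (hy : y ∈ dyadicCube k m) : ‖x - y‖ ≤ 2 * (2 : ℝ) ^ (-k) := by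
  rw [← sub_sub_sub_cancel_right x y (dyadicCorner k m), two_mul]
  exact (norm_sub_le _ _).trans
    (add_le_add (norm_sub_dyadicCorner_le hx) (norm_sub_dyadicCorner_le hy))

lemma volume_dyadicCube (k : ℤ) (m : ι → ℤ) :
    volume (dyadicCube k m) = ENNReal.ofReal ((2 : ℝ) ^ (-k)) ^ Fintype.card ι := by
  rw [dyadicCube_eq_pi, Real.volume_pi_Ico]
  simp only [← sub_mul, add_sub_cancel_left, one_mul, Finset.prod_const, Finset.card_univ]

lemma volume_dyadicCube_ne_zero (k : ℤ) (m : ι → ℤ) : volume (dyadicCube k m) ≠ 0 := by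
  rw [volume_dyadicCube]
  exact pow_ne_zero _ (ENNReal.ofReal_pos.2 (by positivity)).ne'

lemma volume_dyadicCube_ne_top (k : ℤ) (m : ι → ℤ) : volume (dyadicCube k m) ≠ ⊤ := by
  rw [volume_dyadicCube]
  exact ENNReal.pow_ne_top ENNReal.ofReal_ne_top

lemma volume_dyadicCube_pred (k : ℤ) (m m' : ι → ℤ) :
    volume (dyadicCube (k - 1) m') = 2 ^ Fintype.card ι * volume (dyadicCube k m) := by
  have hside : (2 : ℝ) ^ (-(k - 1)) = 2 * 2 ^ (-k) := by
    rw [neg_sub, sub_eq_add_neg, zpow_add₀ two_ne_zero, zpow_one]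
  rw [volume_dyadicCube, volume_dyadicCube, hside, ENNReal.ofReal_mul zero_le_two, mul_pow,
    ENNReal.ofReal_ofNat]

lemma volume_ball_dyadicCorner (k : ℤ) (m : ι → ℤ) :
    volume (Metric.ball (dyadicCorner k m) (2 * 2 ^ (-k))) =
      4 ^ Fintype.card ι * volume (dyadicCube k m) := by
  rw [Real.volume_pi_ball _ (by positivity), volume_dyadicCube, ENNReal.ofReal_pow (by positivity),
    ← mul_assoc, ENNReal.ofReal_mul (by norm_num), mul_pow]
  norm_num

/-- The maximal dyadic cubes on which the average of `u` exceeds `l`, encoded by their generation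
and index: these are the stopping cubes of the Calderón–Zygmund decomposition at height `l`. -/
def stoppingCubes (u : (ι → ℝ) → ℝ≥0∞) (l : ℝ≥0∞) : Set (ℤ × (ι → ℤ)) :=
  {s | l * volume (dyadicCube s.1 s.2) < ∫⁻ x in dyadicCube s.1 s.2, u x ∧
    ∀ m < s.1, ∀ x ∈ dyadicCube s.1 s.2,
      ∫⁻ y in dyadicCube m (dyadicIndex m x), u y ≤
        l * volume (dyadicCube m (dyadicIndex m x))}

variable {u : (ι → ℝ) → ℝ≥0∞} {l : ℝ≥0∞}

lemma pairwise_disjoint_stoppingCubes :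
    Pairwise (Function.onFun Disjoint fun s : stoppingCubes u l => dyadicCube s.1.1 s.1.2) := by
  rintro ⟨⟨k, m⟩, hs⟩ ⟨⟨k', m'⟩, hs'⟩ hne
  refine Set.disjoint_left.2 fun x (hx : dyadicIndex k x = m) (hx' : dyadicIndex k' x = m') => ?_
  subst hx hx'
  rcases lt_trichotomy k k' with h | rfl | h
  · exact (hs'.2 k h x rfl).not_gt hs.1
  · exact hne rfl
  · exact (hs.2 k' h x rfl).not_gt hs'.1

lemma lintegral_stoppingCube_le (s : stoppingCubes u l) :
    ∫⁻ x in dyadicCube s.1.1 s.1.2, u x ≤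
      2 ^ Fintype.card ι * l * volume (dyadicCube s.1.1 s.1.2) := by
  obtain ⟨⟨k, m⟩, -, hs⟩ := s
  obtain ⟨x, rfl⟩ := nonempty_of_measure_ne_zero (volume_dyadicCube_ne_zero k m)
  calc ∫⁻ y in dyadicCube k (dyadicIndex k x), u y
      ≤ ∫⁻ y in dyadicCube (k - 1) (dyadicIndex (k - 1) x), u y :=
        lintegral_mono_set (dyadicCube_subset_dyadicCube (by omega) x)
    _ ≤ l * volume (dyadicCube (k - 1) (dyadicIndex (k - 1) x)) := hs _ (by simp) x rfl
    _ = 2 ^ Fintype.card ι * l * volume (dyadicCube k (dyadicIndex k x)) := by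
        rw [volume_dyadicCube_pred k (dyadicIndex k x), mul_left_comm, mul_assoc]

lemma exists_mul_volume_dyadicCube_lt_lintegral (hu : LowerSemicontinuous u) (hl : l ≠ ⊤)
    {x : ι → ℝ} (hx : l < u x) :
    ∃ k : ℤ, l * volume (dyadicCube k (dyadicIndex k x)) <
      ∫⁻ y in dyadicCube k (dyadicIndex k x), u y := by
  obtain ⟨ε, hε, hball⟩ := Metric.isOpen_iff.1 (hu.isOpen_preimage l) x hx
  obtain ⟨k, hk⟩ := exists_pow_lt_of_lt_one (half_pos hε) one_half_lt_one
  set Q := dyadicCube (k : ℤ) (dyadicIndex k x)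
  have hsub : Q ⊆ u ⁻¹' Set.Ioi l := fun y hy => hball <| by
    rw [Metric.mem_ball, dist_eq_norm]
    have := norm_sub_le_of_mem_dyadicCube hy (mem_dyadicCube_dyadicIndex _ x)
    rw [zpow_neg, zpow_natCast, ← inv_pow, inv_eq_one_div] at this
    linarith
  refine ⟨k, ?_⟩
  rw [← setLIntegral_const]
  refine setLIntegral_strict_mono (measurableSet_dyadicCube _ _) (volume_dyadicCube_ne_zero _ _)
    hu.measurable ?_ (Filter.Eventually.of_forall hsub)
  rw [setLIntegral_const]
  exact ENNReal.mul_ne_top hl (volume_dyadicCube_ne_top _ _)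

/-- Large dyadic cubes have small averages, so that maximal cubes exist. -/
lemma exists_forall_mul_volume_dyadicCube_lt_imp_le [Nonempty ι] (hu : ∫⁻ x, u x ≠ ⊤) (hl : l ≠ 0) :
    ∃ b : ℤ, ∀ (k : ℤ) (m : ι → ℤ),
      l * volume (dyadicCube k m) < ∫⁻ x in dyadicCube k m, u x → b ≤ k := by
  obtain ⟨M, hM⟩ := ENNReal.exists_nat_mul_gt hl hu
  refine ⟨-M, fun k m hk => ?_⟩
  by_contra! hkM
  have hside : (M : ℝ) ≤ 2 ^ (-k) := by
    calc (M : ℝ) ≤ 2 ^ M := by exact_mod_cast Nat.lt_two_pow_self.le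
      _ = (2 : ℝ) ^ (M : ℤ) := (zpow_natCast _ _).symm
      _ ≤ 2 ^ (-k) := zpow_le_zpow_right₀ one_le_two (by omega)
  have hvol : (M : ℝ≥0∞) ≤ volume (dyadicCube k m) := by
    rw [volume_dyadicCube, ← ENNReal.ofReal_pow (by positivity), ← ENNReal.ofReal_natCast]
    exact ENNReal.ofReal_le_ofReal (hside.trans
      (le_self_pow₀ (one_le_zpow₀ one_le_two (by omega)) Fintype.card_ne_zero))
  refine hk.not_ge ?_
  calc ∫⁻ x in dyadicCube k m, u x ≤ ∫⁻ x, u x := setLIntegral_le_lintegral _ _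
    _ ≤ M * l := hM.le
    _ ≤ l * volume (dyadicCube k m) := by rw [mul_comm]; gcongr

lemma exists_mem_stoppingCube [Nonempty ι] (hu : LowerSemicontinuous u) (hui : ∫⁻ x, u x ≠ ⊤)
    (hl₀ : l ≠ 0) (hl : l ≠ ⊤) {x : ι → ℝ} (hx : l < u x) :
    ∃ s : stoppingCubes u l, x ∈ dyadicCube s.1.1 s.1.2 := by
  obtain ⟨b, hb⟩ := exists_forall_mul_volume_dyadicCube_lt_imp_le hui hl₀
  obtain ⟨k, hk, hmin⟩ := Int.exists_least_of_bdd ⟨b, fun k => hb k (dyadicIndex k x)⟩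
    (exists_mul_volume_dyadicCube_lt_lintegral hu hl hx)
  refine ⟨⟨(k, dyadicIndex k x), hk, fun m hm y hy => ?_⟩, rfl⟩
  rw [dyadicIndex_eq_of_le hm.le hy]
  exact not_lt.1 fun h => (hmin m h).not_gt hm

end DyadicCubes

section AverageOn

variable {α κ : Type*} [MeasurableSpace α] {μ : Measure α} {Q : κ → Set α} {f : α → ℝ}

open scoped Classical in
/-- The function obtained from `f` by replacing it on each member of the disjoint family `Q` by its
average there: the good part of `f` in a Calderón–Zygmund decomposition with cubes `Q`. -/
noncomputable def averageOn (μ : Measure α) (Q : κ → Set α) (f : α → ℝ) (x : α) : ℝ :=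
  if h : ∃ s, x ∈ Q s then ⨍ y in Q h.choose, f y ∂μ else f x

lemma averageOn_of_mem (hQd : Pairwise (Function.onFun Disjoint Q)) {s : κ} {x : α}
    (hx : x ∈ Q s) : averageOn μ Q f x = ⨍ y in Q s, f y ∂μ := by
  have h : ∃ s, x ∈ Q s := ⟨s, hx⟩
  rw [averageOn, dif_pos h, hQd.eq (Set.not_disjoint_iff.2 ⟨x, h.choose_spec, hx⟩)]

lemma averageOn_of_notMem {x : α} (hx : x ∉ ⋃ s, Q s) : averageOn μ Q f x = f x :=
  dif_neg (by simpa using hx)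

lemma aestronglyMeasurable_averageOn [Countable κ] (hQm : ∀ s, MeasurableSet (Q s))
    (hQd : Pairwise (Function.onFun Disjoint Q)) (hf : AEStronglyMeasurable f μ) :
    AEStronglyMeasurable (averageOn μ Q f) μ := by
  rw [← Measure.restrict_univ (μ := μ), ← Set.union_compl_self (⋃ s, Q s),
    aestronglyMeasurable_union_iff, aestronglyMeasurable_iUnion_iff]
  refine ⟨fun s => ?_, ?_⟩
  · exact aestronglyMeasurable_const.congr ((ae_restrict_iff' (hQm s)).2
      (Filter.Eventually.of_forall fun x hx => (averageOn_of_mem hQd hx).symm))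
  · exact hf.restrict.congr ((ae_restrict_iff' (MeasurableSet.iUnion hQm).compl).2
      (Filter.Eventually.of_forall fun x hx => (averageOn_of_notMem hx).symm))

lemma enorm_setAverage_mul_le (μ : Measure α) (f : α → ℝ) (t : Set α) :
    ‖⨍ y in t, f y ∂μ‖ₑ * μ t ≤ ∫⁻ y in t, ‖f y‖ₑ ∂μ := by
  rcases eq_or_ne (μ t) ⊤ with ht | ht
  · simp [setAverage_eq, Measure.real, ht]
  rcases eq_or_ne (μ t) 0 with ht₀ | ht₀
  · simp [ht₀]
  have hinv : ‖(μ.real t)⁻¹‖ₑ = (μ t)⁻¹ := by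
    rw [Measure.real, ← ENNReal.toReal_inv, Real.enorm_eq_ofReal ENNReal.toReal_nonneg,
      ENNReal.ofReal_toReal (ENNReal.inv_ne_top.2 ht₀)]
  rw [setAverage_eq, enorm_smul, hinv, mul_right_comm, ENNReal.inv_mul_cancel ht₀ ht, one_mul]
  exact enorm_integral_le_lintegral_enorm _

lemma setLIntegral_averageOn_le (hQm : ∀ s, MeasurableSet (Q s))
    (hQd : Pairwise (Function.onFun Disjoint Q)) (s : κ) :
    ∫⁻ x in Q s, ‖averageOn μ Q f x‖ₑ ∂μ ≤ ∫⁻ x in Q s, ‖f x‖ₑ ∂μ := by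
  rw [setLIntegral_congr_fun (hQm s) fun x hx => by rw [averageOn_of_mem hQd hx],
    setLIntegral_const]
  exact enorm_setAverage_mul_le μ f (Q s)

lemma integrable_averageOn [Countable κ] (hQm : ∀ s, MeasurableSet (Q s))
    (hQd : Pairwise (Function.onFun Disjoint Q)) (hf : Integrable f μ) :
    Integrable (averageOn μ Q f) μ := by
  have hΩ := MeasurableSet.iUnion hQm
  refine ⟨aestronglyMeasurable_averageOn hQm hQd hf.1, lt_of_le_of_lt ?_ hf.2⟩
  rw [← lintegral_add_compl _ hΩ, ← lintegral_add_compl (fun x => ‖f x‖ₑ) hΩ,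
    setLIntegral_congr_fun hΩ.compl fun x hx => by rw [averageOn_of_notMem hx],
    lintegral_iUnion hQm hQd, lintegral_iUnion hQm hQd]
  exact add_le_add (ENNReal.tsum_le_tsum fun s => setLIntegral_averageOn_le hQm hQd s) le_rfl

lemma setIntegral_sub_averageOn_eq_zero (hQm : ∀ s, MeasurableSet (Q s))
    (hQd : Pairwise (Function.onFun Disjoint Q)) (s : κ) (hs : μ (Q s) ≠ ⊤) :
    ∫ x in Q s, (f x - averageOn μ Q f x) ∂μ = 0 := by
  have : Fact (μ (Q s) < ⊤) := ⟨hs.lt_top⟩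
  rw [setIntegral_congr_fun (hQm s) fun x hx => by rw [averageOn_of_mem hQd hx]]
  exact integral_sub_average _ f

lemma setLIntegral_enorm_sub_averageOn_le (hQm : ∀ s, MeasurableSet (Q s))
    (hQd : Pairwise (Function.onFun Disjoint Q)) (hf : AEStronglyMeasurable f μ) (s : κ) :
    ∫⁻ x in Q s, ‖f x - averageOn μ Q f x‖ₑ ∂μ ≤ 2 * ∫⁻ x in Q s, ‖f x‖ₑ ∂μ := by
  calc ∫⁻ x in Q s, ‖f x - averageOn μ Q f x‖ₑ ∂μ
      ≤ ∫⁻ x in Q s, (‖f x‖ₑ + ‖averageOn μ Q f x‖ₑ) ∂μ := lintegral_mono fun _ => enorm_sub_le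
    _ = (∫⁻ x in Q s, ‖f x‖ₑ ∂μ) + ∫⁻ x in Q s, ‖averageOn μ Q f x‖ₑ ∂μ :=
        lintegral_add_left' hf.restrict.enorm _
    _ ≤ 2 * ∫⁻ x in Q s, ‖f x‖ₑ ∂μ := by
        rw [two_mul]
        gcongr _ + ?_
        exact setLIntegral_averageOn_le hQm hQd s

end AverageOn

section GoodPart

variable {ι : Type*} [Fintype ι] {u : (ι → ℝ) → ℝ≥0∞} {f : (ι → ℝ) → ℝ} {l : ℝ≥0∞}

/-- The union of the stopping cubes of `u` at height `l`, outside of which `u ≤ l`. -/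
def stoppingSet (u : (ι → ℝ) → ℝ≥0∞) (l : ℝ≥0∞) : Set (ι → ℝ) :=
  ⋃ s : stoppingCubes u l, dyadicCube s.1.1 s.1.2

/-- The good part of the Calderón–Zygmund decomposition of `f` at height `l`. -/
noncomputable def goodPart (f : (ι → ℝ) → ℝ) (l : ℝ≥0∞) : (ι → ℝ) → ℝ :=
  averageOn volume (fun s : stoppingCubes (‖f ·‖ₑ) l => dyadicCube s.1.1 s.1.2) f

lemma measurableSet_stoppingSet : MeasurableSet (stoppingSet u l) :=
  MeasurableSet.iUnion fun _ => measurableSet_dyadicCube _ _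

lemma volume_stoppingSet :
    volume (stoppingSet u l) = ∑' s : stoppingCubes u l, volume (dyadicCube s.1.1 s.1.2) :=
  measure_iUnion pairwise_disjoint_stoppingCubes fun _ => measurableSet_dyadicCube _ _

lemma le_of_notMem_stoppingSet [Nonempty ι] (hu : LowerSemicontinuous u) (hui : ∫⁻ x, u x ≠ ⊤)
    (hl₀ : l ≠ 0) (hl : l ≠ ⊤) {x : ι → ℝ} (hx : x ∉ stoppingSet u l) : u x ≤ l := by
  by_contra! h
  exact hx (Set.mem_iUnion.2 (exists_mem_stoppingCube hu hui hl₀ hl h))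

lemma two_mul_inv_mul_half_mul {l : ℝ≥0∞} (hl₀ : l ≠ 0) (hl : l ≠ ⊤) (a : ℝ≥0∞) :
    2 * (l⁻¹ * (l / 2 * a)) = a := by
  rw [div_eq_mul_inv, mul_assoc l, ENNReal.inv_mul_cancel_left hl₀ hl,
    ENNReal.mul_inv_cancel_left two_ne_zero ENNReal.ofNat_ne_top]

lemma volume_stoppingCube_le (hl₀ : l ≠ 0) (hl : l ≠ ⊤) (s : stoppingCubes u l) :
    volume (dyadicCube s.1.1 s.1.2) ≤
      2 * (l⁻¹ * ∫⁻ x in dyadicCube s.1.1 s.1.2, {x | l / 2 < u x}.indicator u x) := by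
  set Q := dyadicCube s.1.1 s.1.2
  have hsplit : ∫⁻ x in Q, u x ≤
      (∫⁻ x in Q, {x | l / 2 < u x}.indicator u x) + l / 2 * volume Q := by
    rw [← setLIntegral_const, ← lintegral_add_right _ measurable_const]
    refine lintegral_mono fun x => ?_
    by_cases h : l / 2 < u x
    · simp [h]
    · simp [h, not_lt.1 h]
  have hhalf : l / 2 * volume Q ≤ ∫⁻ x in Q, {x | l / 2 < u x}.indicator u x := by
    have hdouble : l * volume Q = l / 2 * volume Q + l / 2 * volume Q := by
      rw [← add_mul, ENNReal.add_halves]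
    have hlow := hdouble.ge.trans (s.2.1.le.trans hsplit)
    exact (ENNReal.add_le_add_iff_right
      (ENNReal.mul_ne_top (ENNReal.div_ne_top hl two_ne_zero)
        (volume_dyadicCube_ne_top _ _))).1 hlow
  rw [← two_mul_inv_mul_half_mul hl₀ hl (volume Q)]
  gcongr

lemma volume_stoppingSet_le (hu : Measurable u) (hl₀ : l ≠ 0) (hl : l ≠ ⊤) :
    volume (stoppingSet u l) ≤ 2 * (l⁻¹ * ∫⁻ x in {x | l / 2 < u x}, u x) := by
  rw [volume_stoppingSet]
  refine (ENNReal.tsum_le_tsum fun s => volume_stoppingCube_le hl₀ hl s).trans ?_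
  rw [ENNReal.tsum_mul_left, ENNReal.tsum_mul_left, ← lintegral_iUnion
    (fun _ => measurableSet_dyadicCube _ _) pairwise_disjoint_stoppingCubes,
    ← lintegral_indicator (measurableSet_lt measurable_const hu)]
  gcongr
  exact Measure.restrict_le_self

lemma integrable_goodPart (hf : Integrable f) : Integrable (goodPart f l) :=
  integrable_averageOn (fun _ => measurableSet_dyadicCube _ _) pairwise_disjoint_stoppingCubes hf

lemma goodPart_of_notMem {x : ι → ℝ} (hx : x ∉ stoppingSet (‖f ·‖ₑ) l) : goodPart f l x = f x :=
  averageOn_of_notMem hx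

lemma enorm_goodPart_le {x : ι → ℝ} (hx : x ∈ stoppingSet (‖f ·‖ₑ) l) :
    ‖goodPart f l x‖ₑ ≤ 2 ^ Fintype.card ι * l := by
  obtain ⟨s, hs⟩ := Set.mem_iUnion.1 hx
  rw [goodPart, averageOn_of_mem pairwise_disjoint_stoppingCubes hs]
  exact (ENNReal.mul_le_mul_iff_left (volume_dyadicCube_ne_zero _ _)
    (volume_dyadicCube_ne_top _ _)).1
      ((enorm_setAverage_mul_le volume f _).trans (lintegral_stoppingCube_le s))

lemma lintegral_enorm_goodPart_sq_le [Nonempty ι] (hc : Continuous f) (hi : Integrable f)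
    (hl₀ : l ≠ 0) (hl : l ≠ ⊤) :
    ∫⁻ x, ‖goodPart f l x‖ₑ ^ 2 ≤ (∫⁻ x in {x | ‖f x‖ₑ ≤ l}, ‖f x‖ₑ ^ 2) +
      (2 ^ Fintype.card ι * l) ^ 2 * volume (stoppingSet (‖f ·‖ₑ) l) := by
  have hΩ : MeasurableSet (stoppingSet (‖f ·‖ₑ) l) := measurableSet_stoppingSet
  rw [← lintegral_add_compl _ hΩ, add_comm, ← setLIntegral_const,
    setLIntegral_congr_fun hΩ.compl fun x hx => by rw [goodPart_of_notMem hx]]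
  refine add_le_add (lintegral_mono_set fun x hx => ?_) (setLIntegral_mono' hΩ fun x hx => ?_)
  · exact le_of_notMem_stoppingSet hc.enorm.lowerSemicontinuous hi.2.ne hl₀ hl hx
  · gcongr
    exact enorm_goodPart_le hx

lemma setIntegral_sub_goodPart_eq_zero (s : stoppingCubes (‖f ·‖ₑ) l) :
    ∫ x in dyadicCube s.1.1 s.1.2, (f x - goodPart f l x) = 0 :=
  setIntegral_sub_averageOn_eq_zero (fun _ => measurableSet_dyadicCube _ _)
    pairwise_disjoint_stoppingCubes s (volume_dyadicCube_ne_top _ _)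

lemma setLIntegral_enorm_sub_goodPart_le (hf : AEStronglyMeasurable f)
    (s : stoppingCubes (‖f ·‖ₑ) l) :
    ∫⁻ x in dyadicCube s.1.1 s.1.2, ‖f x - goodPart f l x‖ₑ ≤
      2 * (2 ^ Fintype.card ι * l * volume (dyadicCube s.1.1 s.1.2)) :=
  (setLIntegral_enorm_sub_averageOn_le (fun _ => measurableSet_dyadicCube _ _)
    pairwise_disjoint_stoppingCubes hf s).trans
      (mul_le_mul_right (lintegral_stoppingCube_le s) 2)

end GoodPart

section WeakType

open scoped Convolution

lemma integrable_smul_comp_sub {V F : Type*} [AddCommGroup V] [TopologicalSpace V]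
    [IsTopologicalAddGroup V] [SecondCountableTopology V] [MeasurableSpace V]
    [OpensMeasurableSpace V] [NormedAddCommGroup F] [NormedSpace ℝ F] {μ : Measure V} {f : V → ℝ}
    {k : V → F} (hk : Continuous k) (hb : BddAbove (Set.range fun x => ‖k x‖))
    (hf : Integrable f μ) (x : V) : Integrable (fun y => f y • k (x - y)) μ := by
  obtain ⟨M, hM⟩ := hb
  exact hf.smul_bdd (C := M) (by fun_prop : Continuous fun y => k (x - y)).aestronglyMeasurable
    (Filter.Eventually.of_forall fun y => hM ⟨x - y, rfl⟩)

variable {ι : Type*} [Fintype ι] {K f b : (ι → ℝ) → ℝ} {B l : ℝ≥0∞}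

/-- A bounded continuous convolution kernel whose Calderón–Zygmund constants, namely the square of
its `L²` operator norm and its Hörmander constant, are at most `B`. The bound on `K` itself is only
qualitative: no estimate below depends on it. -/
structure IsCZKernel (K : (ι → ℝ) → ℝ) (B : ℝ≥0∞) : Prop where
  continuous : Continuous K
  bddAbove : BddAbove (Set.range fun x => ‖K x‖)
  lintegral_convolution_sq_le : ∀ g : (ι → ℝ) → ℝ, Integrable g → MemLp g 2 →
    ∫⁻ x, ‖(g ⋆ K) x‖ₑ ^ 2 ≤ B * ∫⁻ x, ‖g x‖ₑ ^ 2
  hormander : ∀ y, ∫⁻ x in {x | 2 * ‖y‖ ≤ ‖x‖}, ‖K (x - y) - K x‖ₑ ≤ B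

lemma IsCZKernel.integrable_mul_comp_sub (hK : IsCZKernel K B) {μ : Measure (ι → ℝ)}
    (hf : Integrable f μ) (x : ι → ℝ) : Integrable (fun y => f y * K (x - y)) μ :=
  integrable_smul_comp_sub hK.continuous hK.bddAbove hf x

lemma convolution_eq_integral_mul (f K : (ι → ℝ) → ℝ) (x : ι → ℝ) :
    (f ⋆ K) x = ∫ y, f y * K (x - y) := rfl

lemma aestronglyMeasurable_setIntegral_mul_comp_sub (hK : Continuous K) {μ : Measure (ι → ℝ)}
    [SFinite μ] (hf : AEStronglyMeasurable f μ) :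
    AEStronglyMeasurable (fun x => ∫ y, f y * K (x - y) ∂μ) volume := by
  refine AEStronglyMeasurable.integral_prod_right'
    (f := fun p : (ι → ℝ) × (ι → ℝ) => f p.2 * K (p.1 - p.2)) (hf.comp_snd.mul ?_)
  exact (by fun_prop : Continuous fun p : (ι → ℝ) × (ι → ℝ) => K (p.1 - p.2)).aestronglyMeasurable

lemma IsCZKernel.lintegral_compl_ball_sub_le (hK : IsCZKernel K B) {c y : ι → ℝ} {r : ℝ}
    (hy : ‖y - c‖ ≤ r) :
    ∫⁻ x in (Metric.ball c (2 * r))ᶜ, ‖K (x - y) - K (x - c)‖ₑ ≤ B := by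
  have hmeas : MeasurableSet {x : ι → ℝ | 2 * ‖y - c‖ ≤ ‖x‖} :=
    measurableSet_le (by fun_prop) (by fun_prop)
  have hsub : (Metric.ball c (2 * r))ᶜ ⊆ (· - c) ⁻¹' {x | 2 * ‖y - c‖ ≤ ‖x‖} := fun x hx => by
    rw [Set.mem_compl_iff, Metric.mem_ball, dist_eq_norm, not_lt] at hx
    exact (mul_le_mul_of_nonneg_left hy zero_le_two).trans hx
  calc ∫⁻ x in (Metric.ball c (2 * r))ᶜ, ‖K (x - y) - K (x - c)‖ₑ
      ≤ ∫⁻ x in (· - c) ⁻¹' {x | 2 * ‖y - c‖ ≤ ‖x‖}, ‖K (x - c - (y - c)) - K (x - c)‖ₑ := by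
        simp only [sub_sub_sub_cancel_right]
        exact lintegral_mono_set hsub
    _ = ∫⁻ x in {x | 2 * ‖y - c‖ ≤ ‖x‖}, ‖K (x - (y - c)) - K x‖ₑ :=
        (measurePreserving_sub_right volume c).setLIntegral_comp_preimage hmeas
          (f := fun x => ‖K (x - (y - c)) - K x‖ₑ) (by have := hK.continuous; fun_prop)
    _ ≤ B := hK.hormander _

/-- Since `b` has mean zero on `Q`, subtracting `K (x - c)` from the kernel does not change the
convolution, and Hörmander's condition applies. -/
lemma IsCZKernel.lintegral_compl_ball_setIntegral_le (hK : IsCZKernel K B) {Q : Set (ι → ℝ)}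
    (hQ : MeasurableSet Q) {c : ι → ℝ} {r : ℝ} (hQc : ∀ y ∈ Q, ‖y - c‖ ≤ r)
    (hb : IntegrableOn b Q) (hb₀ : ∫ y in Q, b y = 0) :
    ∫⁻ x in (Metric.ball c (2 * r))ᶜ, ‖∫ y in Q, b y * K (x - y)‖ₑ ≤ B * ∫⁻ y in Q, ‖b y‖ₑ := by
  have hKc := hK.continuous
  have hcancel (x : ι → ℝ) :
      ‖∫ y in Q, b y * K (x - y)‖ₑ ≤ ∫⁻ y in Q, ‖b y‖ₑ * ‖K (x - y) - K (x - c)‖ₑ := by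
    have h : ∫ y in Q, b y * K (x - y) = ∫ y in Q, b y * (K (x - y) - K (x - c)) := by
      simp only [mul_sub]
      rw [integral_sub (hK.integrable_mul_comp_sub hb x) (hb.mul_const _), integral_mul_const,
        hb₀, zero_mul, sub_zero]
    simpa only [h, enorm_mul] using
      enorm_integral_le_lintegral_enorm fun y => b y * (K (x - y) - K (x - c))
  calc ∫⁻ x in (Metric.ball c (2 * r))ᶜ, ‖∫ y in Q, b y * K (x - y)‖ₑ
      ≤ ∫⁻ x in (Metric.ball c (2 * r))ᶜ, ∫⁻ y in Q, ‖b y‖ₑ * ‖K (x - y) - K (x - c)‖ₑ :=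
        lintegral_mono hcancel
    _ = ∫⁻ y in Q, ∫⁻ x in (Metric.ball c (2 * r))ᶜ, ‖b y‖ₑ * ‖K (x - y) - K (x - c)‖ₑ :=
        lintegral_lintegral_swap <| hb.1.enorm.comp_snd.mul
          (by fun_prop : Continuous fun p : (ι → ℝ) × (ι → ℝ) =>
            ‖K (p.1 - p.2) - K (p.1 - c)‖ₑ).aemeasurable
    _ ≤ ∫⁻ y in Q, B * ‖b y‖ₑ := setLIntegral_mono' hQ fun y hy => by
        rw [lintegral_const_mul _ (by fun_prop), mul_comm]
        gcongr
        exact hK.lintegral_compl_ball_sub_le (hQc y hy)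
    _ = B * ∫⁻ y in Q, ‖b y‖ₑ := lintegral_const_mul'' _ hb.1.enorm

lemma IsCZKernel.convolution_sub_apply (hK : IsCZKernel K B) {f g : (ι → ℝ) → ℝ}
    (hf : Integrable f) (hg : Integrable g) (x : ι → ℝ) :
    ((fun y => f y - g y) ⋆ K) x = (f ⋆ K) x - (g ⋆ K) x := by
  simp only [convolution_eq_integral_mul, sub_mul]
  exact integral_sub (hK.integrable_mul_comp_sub hf x) (hK.integrable_mul_comp_sub hg x)

lemma memLp_two_goodPart [Nonempty ι] (hc : Continuous f) (hi : Integrable f) (hf : MemLp f 2)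
    (hl₀ : l ≠ 0) (hl : l ≠ ⊤) : MemLp (goodPart f l) 2 := by
  have hf₂ : ∫⁻ x, ‖f x‖ₑ ^ 2 < ⊤ := by
    simpa using lintegral_rpow_enorm_lt_top_of_eLpNorm_lt_top two_ne_zero ENNReal.ofNat_ne_top hf.2
  have hΩ : volume (stoppingSet (‖f ·‖ₑ) l) < ⊤ := by
    refine (volume_stoppingSet_le hc.enorm.measurable hl₀ hl).trans_lt ?_
    exact ENNReal.mul_lt_top ENNReal.ofNat_lt_top (ENNReal.mul_lt_top (ENNReal.inv_lt_top.2
      (pos_iff_ne_zero.2 hl₀)) ((setLIntegral_le_lintegral _ _).trans_lt hi.2))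
  refine ⟨(integrable_goodPart hi).1, ?_⟩
  rw [eLpNorm_lt_top_iff_lintegral_rpow_enorm_lt_top two_ne_zero ENNReal.ofNat_ne_top]
  simp only [ENNReal.toReal_ofNat, ENNReal.rpow_ofNat]
  refine (lintegral_enorm_goodPart_sq_le hc hi hl₀ hl).trans_lt (ENNReal.add_lt_top.2 ⟨?_, ?_⟩)
  · exact (setLIntegral_le_lintegral _ _).trans_lt hf₂
  · exact ENNReal.mul_lt_top (ENNReal.pow_lt_top (ENNReal.mul_lt_top
      (ENNReal.pow_lt_top ENNReal.ofNat_lt_top) hl.lt_top)) hΩ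

lemma IsCZKernel.volume_convolution_goodPart_le [Nonempty ι] (hK : IsCZKernel K B)
    (hc : Continuous f) (hi : Integrable f) (hf : MemLp f 2) (hl₀ : l ≠ 0) (hl : l ≠ ⊤) :
    volume {x | l / 2 ≤ ‖(goodPart f l ⋆ K) x‖ₑ} ≤
      4 * B * ((l ^ 2)⁻¹ * ∫⁻ x in {x | ‖f x‖ₑ ≤ l}, ‖f x‖ₑ ^ 2) +
        4 * B * (2 ^ Fintype.card ι) ^ 2 * volume (stoppingSet (‖f ·‖ₑ) l) := by
  have hg : Integrable (goodPart f l) := integrable_goodPart hi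
  have hl₀' : l ^ 2 ≠ 0 := pow_ne_zero 2 hl₀
  have hl' : l ^ 2 ≠ ⊤ := ENNReal.pow_ne_top hl
  have hhalf : (l / 2) ^ 2 = l ^ 2 / 4 := by
    rw [div_eq_mul_inv, div_eq_mul_inv, mul_pow, ← ENNReal.inv_pow]; norm_num
  set E := {x | l / 2 ≤ ‖(goodPart f l ⋆ K) x‖ₑ}
  set I := ∫⁻ x in {x | ‖f x‖ₑ ≤ l}, ‖f x‖ₑ ^ 2
  set V := volume (stoppingSet (‖f ·‖ₑ) l)
  have hE : E = {x | (l / 2) ^ 2 ≤ ‖(goodPart f l ⋆ K) x‖ₑ ^ 2} := by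
    ext x
    exact (ENNReal.pow_le_pow_left_iff two_ne_zero).symm
  have hmarkov : l ^ 2 / 4 * volume E ≤ B * (I + (2 ^ Fintype.card ι * l) ^ 2 * V) := by
    calc l ^ 2 / 4 * volume E ≤ ∫⁻ x, ‖(goodPart f l ⋆ K) x‖ₑ ^ 2 := by
          rw [hE, ← hhalf]
          exact mul_meas_ge_le_lintegral₀ ((aestronglyMeasurable_setIntegral_mul_comp_sub
            hK.continuous hg.1).enorm.pow_const 2) _
      _ ≤ B * ∫⁻ x, ‖goodPart f l x‖ₑ ^ 2 :=
          hK.lintegral_convolution_sq_le _ hg (memLp_two_goodPart hc hi hf hl₀ hl)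
      _ ≤ B * (I + (2 ^ Fintype.card ι * l) ^ 2 * V) := by
          gcongr
          exact lintegral_enorm_goodPart_sq_le hc hi hl₀ hl
  calc volume E = 4 * (l ^ 2)⁻¹ * (l ^ 2 / 4 * volume E) := by
        rw [div_eq_mul_inv, mul_assoc, mul_assoc, ENNReal.inv_mul_cancel_left hl₀' hl',
          ENNReal.mul_inv_cancel_left (by norm_num) ENNReal.ofNat_ne_top]
    _ ≤ 4 * (l ^ 2)⁻¹ * (B * (I + (2 ^ Fintype.card ι * l) ^ 2 * V)) := by gcongr
    _ = 4 * B * ((l ^ 2)⁻¹ * I) + (l ^ 2)⁻¹ * l ^ 2 * (4 * B * (2 ^ Fintype.card ι) ^ 2 * V) := by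
        ring
    _ = 4 * B * ((l ^ 2)⁻¹ * I) + 4 * B * (2 ^ Fintype.card ι) ^ 2 * V := by
        rw [ENNReal.inv_mul_cancel hl₀' hl', one_mul]

/-- The union of the balls concentric with the stopping cubes of `u` at height `l`, dilated enough
for Hörmander's condition to apply to every cube outside of it. -/
def dilatedStoppingSet (u : (ι → ℝ) → ℝ≥0∞) (l : ℝ≥0∞) : Set (ι → ℝ) :=
  ⋃ s : stoppingCubes u l, Metric.ball (dyadicCorner s.1.1 s.1.2) (2 * 2 ^ (-s.1.1))

lemma volume_dilatedStoppingSet_le (u : (ι → ℝ) → ℝ≥0∞) (l : ℝ≥0∞) :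
    volume (dilatedStoppingSet u l) ≤ 4 ^ Fintype.card ι * volume (stoppingSet u l) := by
  rw [volume_stoppingSet, ← ENNReal.tsum_mul_left]
  exact (measure_iUnion_le _).trans_eq (tsum_congr fun s => volume_ball_dyadicCorner _ _)

lemma IsCZKernel.enorm_convolution_sub_goodPart_le (hK : IsCZKernel K B) (hi : Integrable f)
    (x : ι → ℝ) :
    ‖((fun y => f y - goodPart f l y) ⋆ K) x‖ₑ ≤ ∑' s : stoppingCubes (‖f ·‖ₑ) l,
      ‖∫ y in dyadicCube s.1.1 s.1.2, (f y - goodPart f l y) * K (x - y)‖ₑ := by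
  have hb : Integrable fun y => f y - goodPart f l y := hi.sub (integrable_goodPart hi)
  rw [convolution_eq_integral_mul, ← setIntegral_eq_integral_of_forall_compl_eq_zero
    (s := stoppingSet (‖f ·‖ₑ) l) fun y hy => by rw [goodPart_of_notMem hy, sub_self, zero_mul],
    stoppingSet, integral_iUnion (fun _ => measurableSet_dyadicCube _ _)
      pairwise_disjoint_stoppingCubes
      (hK.integrable_mul_comp_sub hb x).integrableOn]
  exact enorm_tsum_le_tsum_enorm

lemma IsCZKernel.setLIntegral_convolution_sub_goodPart_le (hK : IsCZKernel K B)
    (hi : Integrable f) :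
    ∫⁻ x in (dilatedStoppingSet (‖f ·‖ₑ) l)ᶜ, ‖((fun y => f y - goodPart f l y) ⋆ K) x‖ₑ ≤
      2 * 2 ^ Fintype.card ι * l * B * volume (stoppingSet (‖f ·‖ₑ) l) := by
  have hb : Integrable fun y => f y - goodPart f l y := hi.sub (integrable_goodPart hi)
  let Q (s : stoppingCubes (‖f ·‖ₑ) l) := dyadicCube s.1.1 s.1.2
  calc ∫⁻ x in (dilatedStoppingSet (‖f ·‖ₑ) l)ᶜ, ‖((fun y => f y - goodPart f l y) ⋆ K) x‖ₑ
      ≤ ∫⁻ x in (dilatedStoppingSet (‖f ·‖ₑ) l)ᶜ,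
          ∑' s, ‖∫ y in Q s, (f y - goodPart f l y) * K (x - y)‖ₑ :=
        lintegral_mono fun x => hK.enorm_convolution_sub_goodPart_le hi x
    _ = ∑' s, ∫⁻ x in (dilatedStoppingSet (‖f ·‖ₑ) l)ᶜ,
          ‖∫ y in Q s, (f y - goodPart f l y) * K (x - y)‖ₑ :=
        lintegral_tsum fun s => (aestronglyMeasurable_setIntegral_mul_comp_sub hK.continuous
          hb.1.restrict).restrict.enorm
    _ ≤ ∑' s, B * (2 * (2 ^ Fintype.card ι * l * volume (Q s))) := by
        refine ENNReal.tsum_le_tsum fun s => ?_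
        calc ∫⁻ x in (dilatedStoppingSet (‖f ·‖ₑ) l)ᶜ,
              ‖∫ y in Q s, (f y - goodPart f l y) * K (x - y)‖ₑ
            ≤ ∫⁻ x in (Metric.ball (dyadicCorner s.1.1 s.1.2) (2 * 2 ^ (-s.1.1)))ᶜ,
                ‖∫ y in Q s, (f y - goodPart f l y) * K (x - y)‖ₑ :=
              lintegral_mono_set (Set.compl_subset_compl.2 (Set.subset_iUnion_of_subset s le_rfl))
          _ ≤ B * ∫⁻ y in Q s, ‖f y - goodPart f l y‖ₑ :=
              hK.lintegral_compl_ball_setIntegral_le (measurableSet_dyadicCube _ _)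
                (fun y hy => norm_sub_dyadicCorner_le hy) hb.integrableOn
                (setIntegral_sub_goodPart_eq_zero s)
          _ ≤ B * (2 * (2 ^ Fintype.card ι * l * volume (Q s))) :=
              mul_le_mul_right (setLIntegral_enorm_sub_goodPart_le hi.1 s) B
    _ = 2 * 2 ^ Fintype.card ι * l * B * volume (stoppingSet (‖f ·‖ₑ) l) := by
        rw [ENNReal.tsum_mul_left, ENNReal.tsum_mul_left, ENNReal.tsum_mul_left,
          ← volume_stoppingSet]
        ring

lemma IsCZKernel.volume_convolution_sub_goodPart_le (hK : IsCZKernel K B) (hi : Integrable f)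
    (hl₀ : l ≠ 0) (hl : l ≠ ⊤) :
    volume ({x | l / 2 ≤ ‖((fun y => f y - goodPart f l y) ⋆ K) x‖ₑ} ∩
      (dilatedStoppingSet (‖f ·‖ₑ) l)ᶜ) ≤
        4 * B * 2 ^ Fintype.card ι * volume (stoppingSet (‖f ·‖ₑ) l) := by
  have hb : Integrable fun y => f y - goodPart f l y := hi.sub (integrable_goodPart hi)
  set Ω := (dilatedStoppingSet (‖f ·‖ₑ) l)ᶜ
  set E := {x | l / 2 ≤ ‖((fun y => f y - goodPart f l y) ⋆ K) x‖ₑ}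
  set V := volume (stoppingSet (‖f ·‖ₑ) l)
  have hΩ : MeasurableSet Ω := (isOpen_iUnion fun s => Metric.isOpen_ball).measurableSet.compl
  rw [← Measure.restrict_apply' hΩ, ← two_mul_inv_mul_half_mul hl₀ hl (volume.restrict Ω E)]
  calc 2 * (l⁻¹ * (l / 2 * volume.restrict Ω E))
      ≤ 2 * (l⁻¹ * ∫⁻ x in Ω, ‖((fun y => f y - goodPart f l y) ⋆ K) x‖ₑ) := by
        gcongr
        exact mul_meas_ge_le_lintegral₀ (aestronglyMeasurable_setIntegral_mul_comp_sub
          hK.continuous hb.1).restrict.enorm _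
    _ ≤ 2 * (l⁻¹ * (2 * 2 ^ Fintype.card ι * l * B * V)) := by
        gcongr
        exact hK.setLIntegral_convolution_sub_goodPart_le hi
    _ = l⁻¹ * l * (4 * B * 2 ^ Fintype.card ι * V) := by ring
    _ = 4 * B * 2 ^ Fintype.card ι * V := by rw [ENNReal.inv_mul_cancel hl₀ hl, one_mul]

/-- The factor by which `IsCZKernel.volume_lt_convolution_le` bounds the contribution of the
stopping set in dimension `n`. -/
noncomputable def stoppingConst (n : ℕ) (B : ℝ≥0∞) : ℝ≥0∞ :=
  4 * B * (2 ^ n) ^ 2 + 4 * B * 2 ^ n + 4 ^ n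

lemma IsCZKernel.volume_lt_convolution_le [Nonempty ι] (hK : IsCZKernel K B) (hc : Continuous f)
    (hi : Integrable f) (hf : MemLp f 2) (hl₀ : l ≠ 0) (hl : l ≠ ⊤) :
    volume {x | l < ‖(f ⋆ K) x‖ₑ} ≤
      4 * B * ((l ^ 2)⁻¹ * ∫⁻ x in {x | ‖f x‖ₑ ≤ l}, ‖f x‖ₑ ^ 2) +
        stoppingConst (Fintype.card ι) B *
          (2 * (l⁻¹ * ∫⁻ x in {x | l / 2 < ‖f x‖ₑ}, ‖f x‖ₑ)) := by
  let good := {x | l / 2 ≤ ‖(goodPart f l ⋆ K) x‖ₑ}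
  let bad := {x | l / 2 ≤ ‖((fun y => f y - goodPart f l y) ⋆ K) x‖ₑ}
  let Ω := dilatedStoppingSet (‖f ·‖ₑ) l
  have hsub : {x | l < ‖(f ⋆ K) x‖ₑ} ⊆ good ∪ (bad ∩ Ωᶜ ∪ Ω) := fun x (hx : l < _) => by
    by_contra hcon
    simp only [Set.mem_union, Set.mem_inter_iff, Set.mem_compl_iff, not_or, not_and_or,
      not_not] at hcon
    refine hx.not_gt ?_
    rw [← add_sub_cancel ((goodPart f l ⋆ K) x) ((f ⋆ K) x),
      ← hK.convolution_sub_apply hi (integrable_goodPart hi)]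
    exact ((enorm_add_le _ _).trans_lt (ENNReal.add_lt_add (not_le.1 hcon.1)
      (not_le.1 (hcon.2.1.resolve_right hcon.2.2)))).trans_eq (ENNReal.add_halves l)
  calc volume {x | l < ‖(f ⋆ K) x‖ₑ}
      ≤ volume good + (volume (bad ∩ Ωᶜ) + volume Ω) := (measure_mono hsub).trans <|
        (measure_union_le _ _).trans (add_le_add_right (measure_union_le _ _) _)
    _ ≤ 4 * B * ((l ^ 2)⁻¹ * ∫⁻ x in {x | ‖f x‖ₑ ≤ l}, ‖f x‖ₑ ^ 2) +
          4 * B * (2 ^ Fintype.card ι) ^ 2 * volume (stoppingSet (‖f ·‖ₑ) l) +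
          (4 * B * 2 ^ Fintype.card ι * volume (stoppingSet (‖f ·‖ₑ) l) +
            4 ^ Fintype.card ι * volume (stoppingSet (‖f ·‖ₑ) l)) :=
        add_le_add (hK.volume_convolution_goodPart_le hc hi hf hl₀ hl)
          (add_le_add (hK.volume_convolution_sub_goodPart_le hi hl₀ hl)
            (volume_dilatedStoppingSet_le _ _))
    _ = 4 * B * ((l ^ 2)⁻¹ * ∫⁻ x in {x | ‖f x‖ₑ ≤ l}, ‖f x‖ₑ ^ 2) +
          stoppingConst (Fintype.card ι) B * volume (stoppingSet (‖f ·‖ₑ) l) := by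
        rw [stoppingConst]; ring
    _ ≤ _ := by
        gcongr
        exact volume_stoppingSet_le hc.enorm.measurable hl₀ hl

end WeakType

section Interpolation

open Set
open scoped Convolution

lemma enorm_rpow_eq_ofReal {p : ℝ} (hp : 0 < p) (a : ℝ) :
    ‖a‖ₑ ^ p = ENNReal.ofReal (|a| ^ p) := by
  rw [Real.enorm_eq_ofReal_abs, ENNReal.ofReal_rpow_of_nonneg (abs_nonneg a) hp.le]

lemma ofReal_rpow_sub_natCast {t : ℝ} (ht : 0 < t) (s : ℝ) (n : ℕ) :
    ENNReal.ofReal (t ^ (s - n)) = (ENNReal.ofReal t ^ n)⁻¹ * ENNReal.ofReal (t ^ s) := by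
  rw [Real.rpow_sub ht, Real.rpow_natCast, div_eq_inv_mul, ENNReal.ofReal_mul (by positivity),
    ENNReal.ofReal_inv_of_pos (by positivity), ENNReal.ofReal_pow ht.le]

lemma lintegral_Ici_rpow {s a : ℝ} (hs : s < -1) (ha : 0 < a) :
    ∫⁻ t in Ici a, ENNReal.ofReal (t ^ s) = ENNReal.ofReal ((-(s + 1))⁻¹ * a ^ (s + 1)) := by
  rw [setLIntegral_congr Ioi_ae_eq_Ici.symm,
    ← ofReal_integral_eq_lintegral_ofReal (integrableOn_Ioi_rpow_of_lt hs ha)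
      ((ae_restrict_iff' measurableSet_Ioi).2 (Filter.Eventually.of_forall fun t ht =>
        Real.rpow_nonneg (ha.trans ht).le s)), integral_Ioi_rpow_of_lt hs ha]
  congr 1
  rw [inv_neg, neg_mul, neg_div, div_eq_inv_mul]

lemma lintegral_Ioc_rpow {s a : ℝ} (hs : -1 < s) (ha : 0 ≤ a) :
    ∫⁻ t in Ioc 0 a, ENNReal.ofReal (t ^ s) = ENNReal.ofReal ((s + 1)⁻¹ * a ^ (s + 1)) := by
  rw [← ofReal_integral_eq_lintegral_ofReal ((intervalIntegrable_iff_integrableOn_Ioc_of_le ha).1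
      (intervalIntegral.intervalIntegrable_rpow' hs))
      ((ae_restrict_iff' measurableSet_Ioc).2 (Filter.Eventually.of_forall fun t ht =>
        Real.rpow_nonneg ht.1.le s)), ← intervalIntegral.integral_of_le ha,
    integral_rpow (Or.inl hs), Real.zero_rpow (by linarith), sub_zero, div_eq_inv_mul]

variable {α β : Type*} [MeasurableSpace α] [MeasurableSpace β] {μ : Measure α} {ν : Measure β}

lemma measurable_setLIntegral_setOf_prodMk_mem [SFinite μ] {S : Set (β × α)}
    (hS : MeasurableSet S) {h : α → ℝ≥0∞} (hh : Measurable h) :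
    Measurable fun t => ∫⁻ x in {x | (t, x) ∈ S}, h x ∂μ := by
  have hslice (t : β) : MeasurableSet {x | (t, x) ∈ S} := measurable_prodMk_left hS
  simp only [← lintegral_indicator (hslice _)]
  exact Measurable.lintegral_prod_right' (f := S.indicator fun p => h p.2)
    ((hh.comp measurable_snd).indicator hS)

lemma setLIntegral_mul_setLIntegral_swap [SFinite μ] [SFinite ν] {I : Set β} {S : Set (β × α)}
    (hS : MeasurableSet S) {w : β → ℝ≥0∞} {h : α → ℝ≥0∞}
    (hw : Measurable w) (hh : Measurable h) :
    ∫⁻ t in I, w t * ∫⁻ x in {x | (t, x) ∈ S}, h x ∂μ ∂ν =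
      ∫⁻ x, h x * ∫⁻ t in I ∩ {t | (t, x) ∈ S}, w t ∂ν ∂μ := by
  have hS₁ (t : β) : MeasurableSet {x | (t, x) ∈ S} := measurable_prodMk_left hS
  have hS₂ (x : α) : MeasurableSet {t | (t, x) ∈ S} := measurable_prodMk_right hS
  calc ∫⁻ t in I, w t * ∫⁻ x in {x | (t, x) ∈ S}, h x ∂μ ∂ν
      = ∫⁻ t in I, ∫⁻ x, S.indicator (fun p => w p.1 * h p.2) (t, x) ∂μ ∂ν := by
        refine lintegral_congr fun t => ?_
        rw [← lintegral_const_mul _ hh, ← lintegral_indicator (hS₁ t)]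
        rfl
    _ = ∫⁻ x, ∫⁻ t in I, S.indicator (fun p => w p.1 * h p.2) (t, x) ∂ν ∂μ :=
        lintegral_lintegral_swap (Measurable.indicator (by fun_prop) hS).aemeasurable
    _ = ∫⁻ x, h x * ∫⁻ t in I ∩ {t | (t, x) ∈ S}, w t ∂ν ∂μ := by
        refine lintegral_congr fun x => ?_
        rw [← lintegral_const_mul _ hw, inter_comm, ← setLIntegral_indicator (hS₂ x)]
        simp only [mul_comm (h x)]
        rfl

variable {p : ℝ} {f : α → ℝ}

lemma lintegral_rpow_mul_setLIntegral_le (μ : Measure α) [SFinite μ] (hp₀ : 0 < p) (hp : p < 2)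
    (hf : Measurable f) :
    ∫⁻ t in Ioi 0, ENNReal.ofReal (t ^ (p - 3)) *
        ∫⁻ x in {x | ‖f x‖ₑ ≤ ENNReal.ofReal t}, ‖f x‖ₑ ^ 2 ∂μ ≤
      ENNReal.ofReal (2 - p)⁻¹ * ∫⁻ x, ‖f x‖ₑ ^ p ∂μ := by
  refine (setLIntegral_mul_setLIntegral_swap
    (S := {z | ‖f z.2‖ₑ ≤ ENNReal.ofReal z.1}) (measurableSet_le (by fun_prop) (by fun_prop))
    (by fun_prop) (by fun_prop)).trans_le ?_
  rw [← lintegral_const_mul _ (by fun_prop)]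
  refine lintegral_mono fun x => ?_
  rcases eq_or_ne (f x) 0 with h₀ | h₀
  · simp [h₀]
  have ha : 0 < |f x| := abs_pos.2 h₀
  have hset : Ioi 0 ∩ {t | ‖f x‖ₑ ≤ ENNReal.ofReal t} ⊆ Ici |f x| := fun t ht => by
    have h := ht.2
    rwa [mem_ofPred_eq, Real.enorm_eq_ofReal_abs, ENNReal.ofReal_le_ofReal_iff (le_of_lt ht.1)] at h
  refine (mul_le_mul_right (lintegral_mono_set hset) _).trans_eq ?_
  have hpow : |f x| ^ 2 * |f x| ^ (p - 3 + 1) = |f x| ^ p := by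
    rw [← Real.rpow_natCast, ← Real.rpow_add ha]
    congr 1
    push_cast
    ring
  rw [lintegral_Ici_rpow (by linarith) ha, enorm_rpow_eq_ofReal hp₀,
    Real.enorm_eq_ofReal_abs, ← ENNReal.ofReal_pow ha.le, ← ENNReal.ofReal_mul (by positivity),
    ← ENNReal.ofReal_mul (by rw [inv_nonneg]; linarith), ← hpow]
  ring_nf

lemma lintegral_rpow_mul_setLIntegral_lt_le (μ : Measure α) [SFinite μ] (hp : 1 < p)
    (hf : Measurable f) :
    ∫⁻ t in Ioi 0, ENNReal.ofReal (t ^ (p - 2)) *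
        ∫⁻ x in {x | ENNReal.ofReal t / 2 < ‖f x‖ₑ}, ‖f x‖ₑ ∂μ ≤
      ENNReal.ofReal ((p - 1)⁻¹ * 2 ^ (p - 1)) * ∫⁻ x, ‖f x‖ₑ ^ p ∂μ := by
  refine (setLIntegral_mul_setLIntegral_swap
    (S := {z | ENNReal.ofReal z.1 / 2 < ‖f z.2‖ₑ}) (measurableSet_lt (by fun_prop) (by fun_prop))
    (by fun_prop) (by fun_prop)).trans_le ?_
  rw [← lintegral_const_mul _ (by fun_prop)]
  refine lintegral_mono fun x => ?_
  have ha : 0 ≤ |f x| := abs_nonneg _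
  have hset : Ioi 0 ∩ {t | ENNReal.ofReal t / 2 < ‖f x‖ₑ} ⊆ Ioc 0 (2 * |f x|) := fun t ht => by
    have h := ht.2
    rw [mem_ofPred_eq, Real.enorm_eq_ofReal_abs, ← ENNReal.ofReal_ofNat 2,
      ← ENNReal.ofReal_div_of_pos two_pos, ENNReal.ofReal_lt_ofReal_iff_of_nonneg
        (div_nonneg (le_of_lt ht.1) two_pos.le)] at h
    exact ⟨ht.1, by linarith⟩
  refine (mul_le_mul_right (lintegral_mono_set hset) _).trans_eq ?_
  have hpow : |f x| * |f x| ^ (p - 2 + 1) = |f x| ^ p := by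
    rw [← Real.rpow_one_add' ha (by linarith)]
    congr 1
    ring
  rw [lintegral_Ioc_rpow (by linarith) (by positivity),
    enorm_rpow_eq_ofReal (by linarith), Real.enorm_eq_ofReal_abs,
    ← ENNReal.ofReal_mul ha, Real.mul_rpow two_pos.le ha,
    ← ENNReal.ofReal_mul (mul_nonneg (by rw [inv_nonneg]; linarith) (by positivity)), ← hpow]
  ring_nf

/-- The Marcinkiewicz interpolation argument: integrate the distributional inequality against
`p * t ^ (p - 1)`. -/
lemma lintegral_rpow_le_of_forall_meas_lt_le [SFinite μ] (hp₁ : 1 < p) (hp₂ : p < 2)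
    (hf : Measurable f) {F : β → ℝ} (hF : AEMeasurable F ν) {A B : ℝ≥0∞}
    (h : ∀ l : ℝ≥0∞, l ≠ 0 → l ≠ ⊤ → ν {x | l < ‖F x‖ₑ} ≤
      A * ((l ^ 2)⁻¹ * ∫⁻ x in {x | ‖f x‖ₑ ≤ l}, ‖f x‖ₑ ^ 2 ∂μ) +
        B * (l⁻¹ * ∫⁻ x in {x | l / 2 < ‖f x‖ₑ}, ‖f x‖ₑ ∂μ)) :
    ∫⁻ x, ‖F x‖ₑ ^ p ∂ν ≤ ENNReal.ofReal p * (A * ENNReal.ofReal (2 - p)⁻¹ +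
      B * ENNReal.ofReal ((p - 1)⁻¹ * 2 ^ (p - 1))) * ∫⁻ x, ‖f x‖ₑ ^ p ∂μ := by
  have hp₀ : 0 < p := by linarith
  let small (t : ℝ) := ENNReal.ofReal (t ^ (p - 3)) *
    ∫⁻ x in {x | ‖f x‖ₑ ≤ ENNReal.ofReal t}, ‖f x‖ₑ ^ 2 ∂μ
  let large (t : ℝ) := ENNReal.ofReal (t ^ (p - 2)) *
    ∫⁻ x in {x | ENNReal.ofReal t / 2 < ‖f x‖ₑ}, ‖f x‖ₑ ∂μ
  have hlevel : ∀ t ∈ Ioi (0 : ℝ), ν {x | t < |F x|} * ENNReal.ofReal (t ^ (p - 1)) ≤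
      A * small t + B * large t := by
    intro t (ht : 0 < t)
    have hset : {x | t < |F x|} = {x | ENNReal.ofReal t < ‖F x‖ₑ} := by
      simp only [Real.enorm_eq_ofReal_abs, ENNReal.ofReal_lt_ofReal_iff_of_nonneg ht.le]
    have hsmall := ofReal_rpow_sub_natCast ht (p - 1) 2
    have hlarge := ofReal_rpow_sub_natCast ht (p - 1) 1
    rw [show p - 1 - (2 : ℕ) = p - 3 by push_cast; ring] at hsmall
    rw [show p - 1 - (1 : ℕ) = p - 2 by push_cast; ring, pow_one] at hlarge
    rw [hset]
    refine (mul_le_mul_left (h _ (by simpa using ht) ENNReal.ofReal_ne_top) _).trans_eq ?_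
    simp only [small, large, hsmall, hlarge]
    ring
  have hsmall : Measurable small := Measurable.mul (by fun_prop) <|
    measurable_setLIntegral_setOf_prodMk_mem (S := {z : ℝ × α | ‖f z.2‖ₑ ≤ ENNReal.ofReal z.1})
      (measurableSet_le (by fun_prop) (by fun_prop)) (by fun_prop)
  have hlarge : Measurable large := Measurable.mul (by fun_prop) <|
    measurable_setLIntegral_setOf_prodMk_mem (S := {z : ℝ × α | ENNReal.ofReal z.1 / 2 < ‖f z.2‖ₑ})
      (measurableSet_lt (by fun_prop) (by fun_prop)) (by fun_prop)
  simp only [enorm_rpow_eq_ofReal hp₀]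
  rw [lintegral_rpow_eq_lintegral_meas_lt_mul ν (Filter.Eventually.of_forall fun x => abs_nonneg _)
    (by simpa using hF.norm) hp₀, mul_assoc]
  gcongr
  refine (setLIntegral_mono' measurableSet_Ioi hlevel).trans ?_
  rw [lintegral_add_left (hsmall.const_mul A), lintegral_const_mul A hsmall,
    lintegral_const_mul B hlarge, add_mul, mul_assoc, mul_assoc]
  simp only [← enorm_rpow_eq_ofReal hp₀]
  exact add_le_add (mul_le_mul_right (lintegral_rpow_mul_setLIntegral_le μ hp₀ hp₂ hf) A)
    (mul_le_mul_right (lintegral_rpow_mul_setLIntegral_lt_le μ hp₁ hf) B)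

end Interpolation

section StrongType

open scoped Convolution

variable {ι : Type*} [Fintype ι]

lemma eLpNorm_ofReal_eq_lintegral {α E : Type*} [MeasurableSpace α] [NormedAddCommGroup E] {p : ℝ}
    (hp : 0 < p) (f : α → E) (μ : Measure α) :
    eLpNorm f (ENNReal.ofReal p) μ = (∫⁻ x, ‖f x‖ₑ ^ p ∂μ) ^ (1 / p) := by
  rw [eLpNorm_eq_lintegral_rpow_enorm_toReal (ENNReal.ofReal_pos.2 hp).ne' ENNReal.ofReal_ne_top,
    ENNReal.toReal_ofReal hp.le]

lemma enorm_integral_mul_le {α : Type*} [MeasurableSpace α] {μ : Measure α} {p q : ℝ}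
    (hpq : p.HolderConjugate q) {f g : α → ℝ} (hf : AEMeasurable f μ) (hg : AEMeasurable g μ) :
    ‖∫ x, f x * g x ∂μ‖ₑ ≤
      eLpNorm f (ENNReal.ofReal p) μ * eLpNorm g (ENNReal.ofReal q) μ := by
  rw [eLpNorm_ofReal_eq_lintegral hpq.pos, eLpNorm_ofReal_eq_lintegral hpq.symm.pos]
  refine (enorm_integral_le_lintegral_enorm _).trans ?_
  simp only [enorm_mul]
  exact ENNReal.lintegral_mul_le_Lp_mul_Lq μ hpq hf.enorm hg.enorm

theorem exists_eLpNorm_convolution_le_of_lt_two [Nonempty ι] {p : ℝ} (hp₁ : 1 < p) (hp₂ : p < 2)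
    {B : ℝ≥0∞} (hB : B ≠ ⊤) :
    ∃ C : ℝ≥0∞, C ≠ ⊤ ∧ ∀ K : (ι → ℝ) → ℝ, IsCZKernel K B → ∀ f : (ι → ℝ) → ℝ, Continuous f →
      HasCompactSupport f →
        eLpNorm (f ⋆ K) (ENNReal.ofReal p) volume ≤ C * eLpNorm f (ENNReal.ofReal p) volume := by
  have hp₀ : 0 < p := by linarith
  set C := ENNReal.ofReal p * (4 * B * ENNReal.ofReal (2 - p)⁻¹ +
    2 * stoppingConst (Fintype.card ι) B * ENNReal.ofReal ((p - 1)⁻¹ * 2 ^ (p - 1)))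
  have hC : C ≠ ⊤ := by
    have : stoppingConst (Fintype.card ι) B ≠ ⊤ := by unfold stoppingConst; finiteness
    finiteness
  refine ⟨C ^ (1 / p), ENNReal.rpow_ne_top_of_nonneg (by positivity) hC, fun K hK f hf hfs => ?_⟩
  have hi : Integrable f := hf.integrable_of_hasCompactSupport hfs
  rw [eLpNorm_ofReal_eq_lintegral hp₀, eLpNorm_ofReal_eq_lintegral hp₀,
    ← ENNReal.mul_rpow_of_nonneg _ _ (by positivity)]
  gcongr
  refine lintegral_rpow_le_of_forall_meas_lt_le hp₁ hp₂ hf.measurable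
    (aestronglyMeasurable_setIntegral_mul_comp_sub hK.continuous hi.1).aemeasurable
    fun l hl₀ hl => ?_
  exact (hK.volume_lt_convolution_le hf hi (hf.memLp_of_hasCompactSupport hfs) hl₀ hl).trans_eq
    (by ring)

end StrongType

section Duality

open Filter Topology

/-- The odd extension of `t ↦ t ^ r` to the real line. -/
noncomputable def signedRpow (r t : ℝ) : ℝ := max t 0 ^ r - max (-t) 0 ^ r

lemma continuous_signedRpow {r : ℝ} (hr : 0 ≤ r) : Continuous (signedRpow r) := by
  refine .sub (.rpow_const ?_ fun _ => Or.inr hr) (.rpow_const ?_ fun _ => Or.inr hr) <;> fun_prop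

lemma signedRpow_of_nonneg {r t : ℝ} (hr : r ≠ 0) (ht : 0 ≤ t) : signedRpow r t = |t| ^ r := by
  rw [signedRpow, max_eq_left ht, max_eq_right (neg_nonpos.2 ht), Real.zero_rpow hr, sub_zero,
    abs_of_nonneg ht]

lemma signedRpow_of_nonpos {r t : ℝ} (hr : r ≠ 0) (ht : t ≤ 0) : signedRpow r t = -|t| ^ r := by
  rw [signedRpow, max_eq_right ht, max_eq_left (neg_nonneg.2 ht), Real.zero_rpow hr, zero_sub,
    abs_of_nonpos ht]

lemma abs_signedRpow {r : ℝ} (hr : r ≠ 0) (t : ℝ) : |signedRpow r t| = |t| ^ r := by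
  rcases le_total 0 t with ht | ht
  · rw [signedRpow_of_nonneg hr ht, abs_of_nonneg (by positivity)]
  · rw [signedRpow_of_nonpos hr ht, abs_neg, abs_of_nonneg (by positivity)]

lemma mul_signedRpow {r : ℝ} (hr : 0 < r) (t : ℝ) : t * signedRpow r t = |t| ^ (r + 1) := by
  rw [Real.rpow_add_one' (abs_nonneg t) (by positivity)]
  rcases le_total 0 t with ht | ht
  · rw [signedRpow_of_nonneg hr.ne' ht, abs_of_nonneg ht, mul_comm]
  · rw [signedRpow_of_nonpos hr.ne' ht, abs_of_nonpos ht]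
    ring

lemma le_rpow_of_le_mul_rpow_one_div {p q : ℝ} (hpq : p.HolderConjugate q) {X R : ℝ≥0∞}
    (hX : X ≠ ⊤) (h : X ≤ R * X ^ (1 / q)) : X ≤ R ^ p := by
  rcases eq_or_ne X 0 with rfl | hX₀
  · exact zero_le
  have hsplit : X ^ (1 / p) * X ^ (1 / q) = X := by
    rw [← ENNReal.rpow_add _ _ hX₀ hX, one_div, one_div, hpq.inv_add_inv_eq_one, ENNReal.rpow_one]
  have hq : 0 ≤ 1 / q := one_div_nonneg.2 hpq.symm.nonneg
  have hroot : X ^ (1 / p) ≤ R :=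
    (ENNReal.mul_le_mul_iff_left (by simp [hX₀, hX]) (ENNReal.rpow_ne_top_of_nonneg hq hX)).1
      (hsplit.le.trans h)
  calc X = (X ^ (1 / p)) ^ p := by
        rw [← ENNReal.rpow_mul, one_div_mul_cancel hpq.ne_zero, ENNReal.rpow_one]
    _ ≤ R ^ p := ENNReal.rpow_le_rpow hroot hpq.nonneg

variable {E : Type*} [NormedAddCommGroup E]

/-- A continuous radial cutoff, equal to `1` on the ball of radius `n` and to `0` outside the ball
of radius `n + 1`. -/
def radialCutoff (n : ℕ) (x : E) : ℝ := max 0 (min 1 (n + 1 - ‖x‖))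

lemma radialCutoff_nonneg (n : ℕ) (x : E) : 0 ≤ radialCutoff n x := le_max_left _ _

lemma radialCutoff_le_one (n : ℕ) (x : E) : radialCutoff n x ≤ 1 :=
  max_le zero_le_one (min_le_left _ _)

lemma continuous_radialCutoff (n : ℕ) : Continuous (radialCutoff n : E → ℝ) := by
  unfold radialCutoff; fun_prop

lemma radialCutoff_eq_one {n : ℕ} {x : E} (hx : ‖x‖ ≤ n) : radialCutoff n x = 1 := by
  rw [radialCutoff, min_eq_left (by linarith), max_eq_right zero_le_one]

lemma hasCompactSupport_radialCutoff [ProperSpace E] (n : ℕ) :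
    HasCompactSupport (radialCutoff n : E → ℝ) := by
  refine .intro (isCompact_closedBall 0 (n + 1 : ℝ)) fun x hx => ?_
  rw [mem_closedBall_zero_iff, not_le] at hx
  exact max_eq_left ((min_le_right _ _).trans (by linarith))

variable [ProperSpace E] [MeasurableSpace E] [BorelSpace E] {μ : Measure E}
  [IsFiniteMeasureOnCompacts μ] {p q : ℝ} {u : E → ℝ} {R : ℝ≥0∞}

/-- Test with `h = χ |u| ^ (p - 1) sign u`, where `χ` is the cutoff. -/
lemma lintegral_radialCutoff_mul_rpow_le (hpq : p.HolderConjugate q) (hu : Continuous u)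
    (h : ∀ h : E → ℝ, Continuous h → HasCompactSupport h →
      ‖∫ x, u x * h x ∂μ‖ₑ ≤ R * eLpNorm h (ENNReal.ofReal q) μ) (n : ℕ) :
    ∫⁻ x, ENNReal.ofReal (radialCutoff n x * |u x| ^ p) ∂μ ≤ R ^ p := by
  have hr : 0 < p - 1 := hpq.sub_one_pos
  have hχ := continuous_radialCutoff (E := E) n
  have hχs := hasCompactSupport_radialCutoff (E := E) n
  have hχ₀ := radialCutoff_nonneg (E := E) n
  have hmul (x : E) : u x * (radialCutoff n x * signedRpow (p - 1) (u x)) =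
      radialCutoff n x * |u x| ^ p := by
    rw [mul_left_comm, mul_signedRpow hr, sub_add_cancel]
  have hcont : Continuous fun x => radialCutoff n x * |u x| ^ p :=
    hχ.mul (hu.abs.rpow_const fun _ => Or.inr hpq.nonneg)
  have hint : Integrable (fun x => radialCutoff n x * |u x| ^ p) μ :=
    hcont.integrable_of_hasCompactSupport hχs.mul_right
  set X := ∫⁻ x, ENNReal.ofReal (radialCutoff n x * |u x| ^ p) ∂μ
  have hpow (x : E) : ‖radialCutoff n x * signedRpow (p - 1) (u x)‖ₑ ^ q ≤
      ENNReal.ofReal (radialCutoff n x * |u x| ^ p) := by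
    rw [enorm_rpow_eq_ofReal hpq.symm.pos, abs_mul, abs_signedRpow hr.ne', abs_of_nonneg (hχ₀ x),
      Real.mul_rpow (hχ₀ x) (by positivity), ← Real.rpow_mul (abs_nonneg _), hpq.sub_one_mul_conj]
    gcongr
    exact Real.rpow_le_self_of_le_one (hχ₀ x) (radialCutoff_le_one n x) hpq.symm.lt.le
  refine le_rpow_of_le_mul_rpow_one_div hpq hint.lintegral_lt_top.ne ?_
  calc X = ‖∫ x, u x * (radialCutoff n x * signedRpow (p - 1) (u x)) ∂μ‖ₑ := by
        have h₀ (x : E) : 0 ≤ radialCutoff n x * |u x| ^ p := mul_nonneg (hχ₀ x) (by positivity)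
        simp only [hmul]
        rw [Real.enorm_of_nonneg (integral_nonneg h₀),
          ofReal_integral_eq_lintegral_ofReal hint (Eventually.of_forall h₀)]
    _ ≤ R * eLpNorm (fun x => radialCutoff n x * signedRpow (p - 1) (u x)) (.ofReal q) μ :=
        h _ (hχ.mul ((continuous_signedRpow hr.le).comp hu)) hχs.mul_right
    _ ≤ R * X ^ (1 / q) := by
        rw [eLpNorm_ofReal_eq_lintegral hpq.symm.pos]
        have := hpq.symm.pos
        exact mul_le_mul_right (ENNReal.rpow_le_rpow (lintegral_mono hpow) (by positivity)) R

theorem eLpNorm_le_of_forall_enorm_integral_mul_le (hpq : p.HolderConjugate q) (hu : Continuous u)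
    (h : ∀ h : E → ℝ, Continuous h → HasCompactSupport h →
      ‖∫ x, u x * h x ∂μ‖ₑ ≤ R * eLpNorm h (ENNReal.ofReal q) μ) :
    eLpNorm u (ENNReal.ofReal p) μ ≤ R := by
  have hp : 0 < p := hpq.pos
  have hpt (x : E) : ‖u x‖ₑ ^ p ≤
      liminf (fun n : ℕ => ENNReal.ofReal (radialCutoff n x * |u x| ^ p)) atTop := by
    obtain ⟨N, hN⟩ := exists_nat_ge ‖x‖
    refine le_liminf_of_le (by isBoundedDefault) (eventually_atTop.2 ⟨N, fun n hn => ?_⟩)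
    rw [radialCutoff_eq_one (hN.trans (by exact_mod_cast hn)), one_mul, enorm_rpow_eq_ofReal hp]
  have hmeas (n : ℕ) : Measurable fun x => ENNReal.ofReal (radialCutoff n x * |u x| ^ p) := by
    have := (continuous_radialCutoff (E := E) n).measurable
    have := hu.measurable
    fun_prop
  rw [eLpNorm_ofReal_eq_lintegral hp, one_div, ENNReal.rpow_inv_le_iff hp]
  calc ∫⁻ x, ‖u x‖ₑ ^ p ∂μ
      ≤ ∫⁻ x, liminf (fun n : ℕ => ENNReal.ofReal (radialCutoff n x * |u x| ^ p)) atTop ∂μ :=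
        lintegral_mono hpt
    _ ≤ liminf (fun n : ℕ => ∫⁻ x, ENNReal.ofReal (radialCutoff n x * |u x| ^ p) ∂μ) atTop :=
        lintegral_liminf_le hmeas
    _ ≤ R ^ p := liminf_le_of_le (by isBoundedDefault) fun b hb =>
        let ⟨n, hn⟩ := hb.exists
        hn.trans (lintegral_radialCutoff_mul_rpow_le hpq hu h n)

end Duality

section StrongTypeDual

open scoped Convolution

variable {ι : Type*} [Fintype ι] {K : (ι → ℝ) → ℝ} {B : ℝ≥0∞}

lemma integral_convolution_mul_eq (hK : Continuous K) (hb : BddAbove (Set.range fun x => ‖K x‖))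
    {f h : (ι → ℝ) → ℝ} (hf : Integrable f) (hh : Integrable h) :
    ∫ x, (f ⋆ K) x * h x = ∫ y, f y * (h ⋆ fun x => K (-x)) y := by
  obtain ⟨M, hM⟩ := hb
  have hint : Integrable (fun z : (ι → ℝ) × (ι → ℝ) => K (z.1 - z.2) * (h z.1 * f z.2))
      (volume.prod volume) :=
    (hh.mul_prod hf).bdd_mul (c := M)
      (by fun_prop : Continuous fun z : (ι → ℝ) × (ι → ℝ) => K (z.1 - z.2)).aestronglyMeasurable
      (Filter.Eventually.of_forall fun z => hM ⟨_, rfl⟩)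
  calc ∫ x, (f ⋆ K) x * h x = ∫ x, ∫ y, K (x - y) * (h x * f y) := by
        simp only [convolution_eq_integral_mul, ← integral_mul_const]
        refine integral_congr_ae (.of_forall fun x => integral_congr_ae (.of_forall fun y => ?_))
        ring
    _ = ∫ y, ∫ x, K (x - y) * (h x * f y) := integral_integral_swap hint
    _ = ∫ y, f y * (h ⋆ fun x => K (-x)) y := by
        simp only [convolution_eq_integral_mul, ← integral_const_mul, neg_sub]
        refine integral_congr_ae (.of_forall fun x => integral_congr_ae (.of_forall fun y => ?_))
        ring

lemma IsCZKernel.comp_neg {K : (ι → ℝ) → ℝ} (hK : IsCZKernel K B) :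
    IsCZKernel (fun x => K (-x)) B where
  continuous := hK.continuous.comp continuous_neg
  bddAbove := hK.bddAbove.mono (Set.range_subset_iff.2 fun x => Set.mem_range_self (-x))
  lintegral_convolution_sq_le g hg hg₂ := by
    have hreflect (x : ι → ℝ) : (g ⋆ fun x => K (-x)) (-x) = ((fun y => g (-y)) ⋆ K) x := by
      rw [convolution_eq_integral_mul, convolution_eq_integral_mul, ← integral_neg_eq_self]
      simp only [neg_sub, sub_neg_eq_add, neg_add_eq_sub]
    have hsq := hK.lintegral_convolution_sq_le _ hg.comp_neg
      (hg₂.comp_measurePreserving (Measure.measurePreserving_neg volume))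
    rw [lintegral_neg_eq_self (fun y => ‖g y‖ₑ ^ 2)] at hsq
    rw [← lintegral_neg_eq_self]
    simpa only [hreflect] using hsq
  hormander y := by
    have hpre : Neg.neg ⁻¹' {x : ι → ℝ | 2 * ‖-y‖ ≤ ‖x‖} = {x | 2 * ‖y‖ ≤ ‖x‖} := by
      ext x
      simp only [Set.mem_preimage, Set.mem_ofPred_eq, norm_neg]
    have hneg :=
      (Measure.measurePreserving_neg (volume : Measure (ι → ℝ))).setLIntegral_comp_preimage_emb
        (MeasurableEquiv.neg _).measurableEmbedding (fun x => ‖K (x - -y) - K x‖ₑ)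
        {x | 2 * ‖-y‖ ≤ ‖x‖}
    rw [hpre] at hneg
    simpa only [neg_sub_neg, sub_neg_eq_add, neg_sub, neg_add_eq_sub] using
      hneg.trans_le (hK.hormander (-y))

theorem exists_eLpNorm_convolution_le_of_two_lt [Nonempty ι] {q : ℝ} (hq : 2 < q) (hB : B ≠ ⊤) :
    ∃ C ≠ ⊤, ∀ K : (ι → ℝ) → ℝ, IsCZKernel K B → ∀ f : (ι → ℝ) → ℝ,
      Continuous f → HasCompactSupport f →
        eLpNorm (f ⋆ K) (ENNReal.ofReal q) volume ≤
          C * eLpNorm f (ENNReal.ofReal q) volume := by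
  have hqp : q.HolderConjugate (q / (q - 1)) := .conjExponent (by linarith)
  have hp₂ : q / (q - 1) < 2 := by rw [div_lt_iff₀] <;> linarith
  obtain ⟨C, hC, hle⟩ := exists_eLpNorm_convolution_le_of_lt_two (ι := ι) hqp.symm.lt hp₂ hB
  refine ⟨C, hC, fun K hK f hf hfs => ?_⟩
  refine eLpNorm_le_of_forall_enorm_integral_mul_le hqp
    (hfs.continuous_convolution_left _ hf hK.continuous.locallyIntegrable) fun h hh hhs => ?_
  have hhK : Continuous (h ⋆ fun x => K (-x)) :=
    hhs.continuous_convolution_left _ hh hK.comp_neg.continuous.locallyIntegrable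
  rw [integral_convolution_mul_eq hK.continuous hK.bddAbove (hf.integrable_of_hasCompactSupport hfs)
    (hh.integrable_of_hasCompactSupport hhs)]
  calc ‖∫ y, f y * (h ⋆ fun x => K (-x)) y‖ₑ
      ≤ eLpNorm f (ENNReal.ofReal q) volume *
          eLpNorm (h ⋆ fun x => K (-x)) (ENNReal.ofReal (q / (q - 1))) volume :=
        enorm_integral_mul_le hqp hf.aemeasurable hhK.aemeasurable
    _ ≤ eLpNorm f (ENNReal.ofReal q) volume *
          (C * eLpNorm h (ENNReal.ofReal (q / (q - 1))) volume) := by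
        gcongr
        exact hle _ hK.comp_neg h hh hhs
    _ = _ := by ring

end StrongTypeDual

section Slice

variable {n : ℕ}

/-- The point of `ℝ ^ (n + 1)` whose coordinate `a` is `t` and whose other coordinates are given
by `y`. -/
def slice (a : Fin (n + 1)) (t : ℝ) (y : Fin n → ℝ) : Fin (n + 1) → ℝ :=
  a.insertNth (α := fun _ => ℝ) t y

lemma slice_same (a : Fin (n + 1)) (t : ℝ) (y : Fin n → ℝ) : slice a t y a = t :=
  Fin.insertNth_apply_same ..

lemma slice_succAbove (a : Fin (n + 1)) (t : ℝ) (y : Fin n → ℝ) (j : Fin n) :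
    slice a t y (a.succAbove j) = y j :=
  Fin.insertNth_apply_succAbove ..

lemma removeNth_slice (a : Fin (n + 1)) (t : ℝ) (y : Fin n → ℝ) : a.removeNth (slice a t y) = y :=
  funext fun j => slice_succAbove a t y j

/-- The derivative of `y ↦ slice a t y`: the inclusion of the hyperplane `x a = 0`. -/
def sliceDeriv (a : Fin (n + 1)) : (Fin n → ℝ) →L[ℝ] (Fin (n + 1) → ℝ) :=
  .pi (a.insertNth (α := fun _ => (Fin n → ℝ) →L[ℝ] ℝ) 0 fun j => .proj j)

lemma sliceDeriv_apply (a : Fin (n + 1)) (y : Fin n → ℝ) : sliceDeriv a y = slice a 0 y := by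
  ext i
  refine Fin.succAboveCases a ?_ (fun j => ?_) i
  · simp [sliceDeriv, slice_same]
  · simp [sliceDeriv, slice_succAbove]

lemma slice_eq (a : Fin (n + 1)) (t : ℝ) (y : Fin n → ℝ) :
    slice a t y = t • Pi.single a 1 + sliceDeriv a y := by
  ext i
  refine Fin.succAboveCases a ?_ (fun j => ?_) i
  · simp [sliceDeriv_apply, slice_same]
  · simp [sliceDeriv_apply, slice_succAbove]

lemma sliceDeriv_single (a : Fin (n + 1)) (j : Fin n) :
    sliceDeriv a (Pi.single j 1) = Pi.single (a.succAbove j) 1 := by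
  ext i
  refine Fin.succAboveCases a ?_ (fun k => ?_) i
  · simp [sliceDeriv_apply, slice_same]
  · simp [sliceDeriv_apply, slice_succAbove, Pi.single_apply]

lemma isometry_slice (a : Fin (n + 1)) :
    Isometry fun z : ℝ × (Fin n → ℝ) => slice a z.1 z.2 := by
  refine .of_dist_eq fun z w => le_antisymm ?_ ?_
  · refine (dist_pi_le_iff dist_nonneg).2 (Fin.succAboveCases a ?_ fun j => ?_)
    · rw [slice_same, slice_same]
      exact le_max_left _ _
    · rw [slice_succAbove, slice_succAbove]
      exact (dist_le_pi_dist z.2 w.2 j).trans (le_max_right _ _)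
  · refine max_le ?_ ((dist_pi_le_iff dist_nonneg).2 fun j => ?_)
    · simpa only [slice_same] using dist_le_pi_dist (slice a z.1 z.2) (slice a w.1 w.2) a
    · simpa only [slice_succAbove] using
        dist_le_pi_dist (slice a z.1 z.2) (slice a w.1 w.2) (a.succAbove j)

lemma isometry_slice_right (a : Fin (n + 1)) (t : ℝ) : Isometry (slice a t) :=
  (isometry_slice a).comp (f := fun y : Fin n → ℝ => (t, y))
    (.of_dist_eq fun y z => by simp [Prod.dist_eq])

lemma isometry_slice_left (a : Fin (n + 1)) (y : Fin n → ℝ) : Isometry fun t => slice a t y :=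
  (isometry_slice a).comp (f := fun t : ℝ => (t, y))
    (.of_dist_eq fun s t => by simp [Prod.dist_eq])

lemma norm_sliceDeriv_le (a : Fin (n + 1)) : ‖sliceDeriv a‖ ≤ 1 := by
  refine ContinuousLinearMap.opNorm_le_bound _ zero_le_one fun y => ?_
  have h := (isometry_slice_right a 0).dist_eq y 0
  rw [← sliceDeriv_apply, ← sliceDeriv_apply, map_zero, dist_zero_right, dist_zero_right] at h
  rw [h, one_mul]

lemma contDiff_slice (a : Fin (n + 1)) (t : ℝ) : ContDiff ℝ 1 (slice a t) := by
  rw [funext (slice_eq a t)]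
  fun_prop

lemma contDiff_slice_left (a : Fin (n + 1)) (y : Fin n → ℝ) :
    ContDiff ℝ 1 fun t => slice a t y := by
  rw [funext (slice_eq a · y)]
  fun_prop

lemma measurePreserving_slice (a : Fin (n + 1)) :
    MeasurePreserving (fun z : ℝ × (Fin n → ℝ) => slice a z.1 z.2) (volume.prod volume) volume :=
  (volume_preserving_piFinSuccAbove (fun _ : Fin (n + 1) => ℝ) a).symm

lemma lintegral_eq_lintegral_slice (a : Fin (n + 1)) {g : (Fin (n + 1) → ℝ) → ℝ≥0∞}
    (hg : Measurable g) : ∫⁻ x, g x = ∫⁻ t, ∫⁻ y, g (slice a t y) := by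
  rw [← (measurePreserving_slice a).lintegral_comp hg,
    lintegral_prod (fun z : ℝ × (Fin n → ℝ) => g (slice a z.1 z.2))
      (hg.comp (isometry_slice a).continuous.measurable).aemeasurable]

lemma integral_eq_integral_slice (a : Fin (n + 1)) {g : (Fin (n + 1) → ℝ) → ℝ}
    (hg : Integrable g) : ∫ x, g x = ∫ t, ∫ y, g (slice a t y) := by
  rw [← (measurePreserving_slice a).integral_comp
      (MeasurableEquiv.piFinSuccAbove (fun _ => ℝ) a).symm.measurableEmbedding,
    integral_prod (fun z : ℝ × (Fin n → ℝ) => g (slice a z.1 z.2))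
      ((measurePreserving_slice a).integrable_comp_of_integrable hg)]

lemma integrable_slice_mul (a : Fin (n + 1)) (t : ℝ) {g : (Fin (n + 1) → ℝ) → ℝ}
    {ψ : (Fin n → ℝ) → ℝ} (hg : Continuous g) (hgs : HasCompactSupport g) (hψ : Continuous ψ) :
    Integrable fun y => g (slice a t y) * ψ y :=
  ((hg.comp (isometry_slice_right a t).continuous).mul hψ).integrable_of_hasCompactSupport
    (hgs.comp_isClosedEmbedding (isometry_slice_right a t).isClosedEmbedding).mul_right

lemma hasDerivAt_comp_slice (a : Fin (n + 1)) {g : (Fin (n + 1) → ℝ) → ℝ} (t : ℝ) (y : Fin n → ℝ)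
    (hg : DifferentiableAt ℝ g (slice a t y)) :
    HasDerivAt (fun s => g (slice a s y)) (fderiv ℝ g (slice a t y) (Pi.single a 1)) t := by
  refine hg.hasFDerivAt.comp_hasDerivAt t ?_
  rw [funext (slice_eq a · y)]
  simpa only [one_smul, id_eq] using
    ((hasDerivAt_id t).smul_const (Pi.single a (1 : ℝ))).add_const (sliceDeriv a y)

lemma hasFDerivAt_comp_slice (a : Fin (n + 1)) {g : (Fin (n + 1) → ℝ) → ℝ} (t : ℝ)
    (y : Fin n → ℝ) (hg : DifferentiableAt ℝ g (slice a t y)) :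
    HasFDerivAt (fun y => g (slice a t y)) ((fderiv ℝ g (slice a t y)).comp (sliceDeriv a)) y := by
  refine hg.hasFDerivAt.comp y ?_
  rw [funext (slice_eq a t)]
  exact (sliceDeriv a).hasFDerivAt.const_add _

lemma integral_slice_mul_eq_setIntegral (a : Fin (n + 1)) {g : (Fin (n + 1) → ℝ) → ℝ}
    (hg : ContDiff ℝ 1 g) (hgs : HasCompactSupport g) {ψ : (Fin n → ℝ) → ℝ} (hψ : Continuous ψ)
    (t : ℝ) : ∫ y, g (slice a t y) * ψ y =
      ∫ s in Set.Iic t, ∫ y, fderiv ℝ g (slice a s y) (Pi.single a 1) * ψ y := by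
  have hg' : Continuous (fderiv ℝ g) := hg.continuous_fderiv one_ne_zero
  have hftc (y : Fin n → ℝ) : g (slice a t y) =
      ∫ s in Set.Iic t, fderiv ℝ g (slice a s y) (Pi.single a 1) := by
    refine (HasCompactSupport.integral_Iic_deriv_eq (f := fun s => g (slice a s y))
      (hg.comp (contDiff_slice_left a y))
      (hgs.comp_isClosedEmbedding (isometry_slice_left a y).isClosedEmbedding) t).symm.trans ?_
    exact integral_congr_ae (.of_forall fun s =>
      (hasDerivAt_comp_slice a s y (hg.differentiable one_ne_zero _)).deriv)
  have hslice := (isometry_slice a).comp (Isometry.of_dist_eq (f := Prod.swap)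
    fun z w : (Fin n → ℝ) × ℝ => by
      simp only [Prod.dist_eq, Prod.fst_swap, Prod.snd_swap, max_comm])
  have hint : Integrable (fun z : (Fin n → ℝ) × ℝ =>
      fderiv ℝ g (slice a z.2 z.1) (Pi.single a 1) * ψ z.1) (volume.prod volume) := by
    refine Continuous.integrable_of_hasCompactSupport ?_ (HasCompactSupport.mul_right
      ((hgs.fderiv_apply ℝ (Pi.single a 1)).comp_isClosedEmbedding hslice.isClosedEmbedding))
    exact ((hg'.comp hslice.continuous).clm_apply continuous_const).mul (hψ.comp continuous_fst)
  simp only [hftc, ← integral_mul_const]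
  exact integral_integral_swap
    (hint.mono_measure (Measure.prod_mono le_rfl Measure.restrict_le_self))

lemma integral_fderiv_slice_mul (a : Fin (n + 1)) {g : (Fin (n + 1) → ℝ) → ℝ}
    (hg : ContDiff ℝ 1 g) (hgs : HasCompactSupport g) {ψ : (Fin n → ℝ) → ℝ} (hψ : ContDiff ℝ 1 ψ)
    (t : ℝ) (j : Fin n) :
    ∫ y, fderiv ℝ g (slice a t y) (Pi.single (a.succAbove j) 1) * ψ y =
      -∫ y, g (slice a t y) * fderiv ℝ ψ y (Pi.single j 1) := by
  have hgd := hg.differentiable one_ne_zero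
  have := hg.continuous_fderiv one_ne_zero
  have := hψ.continuous_fderiv one_ne_zero
  have hfd (y : Fin n → ℝ) : fderiv ℝ (fun y => g (slice a t y)) y (Pi.single j 1) =
      fderiv ℝ g (slice a t y) (Pi.single (a.succAbove j) 1) := by
    rw [(hasFDerivAt_comp_slice a t y (hgd _)).fderiv, ContinuousLinearMap.comp_apply,
      sliceDeriv_single]
  rw [integral_mul_fderiv_eq_neg_fderiv_mul_of_integrable, neg_neg]
  · simp only [hfd]
  · simpa only [hfd] using integrable_slice_mul a t (by fun_prop)
      (hgs.fderiv_apply ℝ (Pi.single (a.succAbove j) 1)) hψ.continuous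
  · exact integrable_slice_mul a t hg.continuous hgs (by fun_prop)
  · exact integrable_slice_mul a t hg.continuous hgs hψ.continuous
  · exact fun y _ => (hasFDerivAt_comp_slice a t y (hgd _)).differentiableAt
  · exact fun y _ => hψ.differentiable one_ne_zero y

variable {f : Fin (n + 1) → (Fin (n + 1) → ℝ) → ℝ}

lemma integral_slice_mul_eq_of_divergence_eq_zero (hf : ∀ j, ContDiff ℝ 1 (f j))
    (hfs : ∀ j, HasCompactSupport (f j)) (hdiv : ∀ x, ∑ j, fderiv ℝ (f j) x (Pi.single j 1) = 0)
    (a : Fin (n + 1)) {ψ : (Fin n → ℝ) → ℝ} (hψ : ContDiff ℝ 1 ψ) (t : ℝ) :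
    ∫ y, f a (slice a t y) * ψ y = ∫ s in Set.Iic t, ∫ y,
      ∑ j, f (a.succAbove j) (slice a s y) * fderiv ℝ ψ y (Pi.single j 1) := by
  have hfc (j) : Continuous (fderiv ℝ (f j)) := (hf j).continuous_fderiv one_ne_zero
  have hψc : Continuous (fderiv ℝ ψ) := hψ.continuous_fderiv one_ne_zero
  rw [integral_slice_mul_eq_setIntegral a (hf a) (hfs a) hψ.continuous]
  refine integral_congr_ae (.of_forall fun s => ?_)
  have hint (j : Fin n) : Integrable fun y =>
      fderiv ℝ (f (a.succAbove j)) (slice a s y) (Pi.single (a.succAbove j) 1) * ψ y :=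
    integrable_slice_mul a s ((hfc _).clm_apply continuous_const) ((hfs _).fderiv_apply ℝ _)
      hψ.continuous
  have hint' (j : Fin n) : Integrable fun y =>
      f (a.succAbove j) (slice a s y) * fderiv ℝ ψ y (Pi.single j 1) :=
    integrable_slice_mul a s (hf _).continuous (hfs _) (hψc.clm_apply continuous_const)
  have hsplit (y : Fin n → ℝ) : fderiv ℝ (f a) (slice a s y) (Pi.single a 1) * ψ y = -∑ j,
      fderiv ℝ (f (a.succAbove j)) (slice a s y) (Pi.single (a.succAbove j) 1) * ψ y := by
    have := hdiv (slice a s y)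
    rw [Fin.sum_univ_succAbove _ a] at this
    rw [← Finset.sum_mul, ← neg_mul, eq_neg_of_add_eq_zero_left this]
  simp only [hsplit]
  rw [integral_neg, integral_finsetSum _ fun j _ => hint j, integral_finsetSum _ fun j _ => hint' j,
    ← Finset.sum_neg_distrib]
  refine Finset.sum_congr rfl fun j _ => ?_
  rw [integral_fderiv_slice_mul a (hf _) (hfs _) hψ, neg_neg]

lemma enorm_integral_slice_mul_le (hf : ∀ j, ContDiff ℝ 1 (f j))
    (hfs : ∀ j, HasCompactSupport (f j)) (hdiv : ∀ x, ∑ j, fderiv ℝ (f j) x (Pi.single j 1) = 0)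
    (a : Fin (n + 1)) {ψ : (Fin n → ℝ) → ℝ} (hψ : ContDiff ℝ 1 ψ) (t : ℝ) :
    ‖∫ y, f a (slice a t y) * ψ y‖ₑ ≤
      ∫⁻ x, (∑ j, ‖f j x‖ₑ) * ‖fderiv ℝ ψ (a.removeNth x)‖ₑ := by
  have := hψ.continuous_fderiv one_ne_zero
  have hcont (j) : Continuous (f j) := (hf j).continuous
  have hrem : Continuous fun x : Fin (n + 1) → ℝ => a.removeNth x :=
    continuous_pi fun j => continuous_apply (a.succAbove j)
  have hpt (s : ℝ) (y : Fin n → ℝ) :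
      ‖∑ j, f (a.succAbove j) (slice a s y) * fderiv ℝ ψ y (Pi.single j 1)‖ₑ ≤
        (∑ j, ‖f j (slice a s y)‖ₑ) * ‖fderiv ℝ ψ y‖ₑ := by
    rw [Fin.sum_univ_succAbove _ a]
    refine le_trans ?_ (mul_le_mul_left le_add_self _)
    rw [Finset.sum_mul]
    refine (enorm_sum_le _ _).trans (Finset.sum_le_sum fun j _ => ?_)
    rw [enorm_mul]
    gcongr
    refine ((fderiv ℝ ψ y).le_opENorm _).trans (mul_le_of_le_one_right zero_le ?_)
    rw [← ofReal_norm, Pi.norm_single, norm_one, ENNReal.ofReal_one]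
  rw [integral_slice_mul_eq_of_divergence_eq_zero hf hfs hdiv a hψ,
    lintegral_eq_lintegral_slice a (by fun_prop)]
  refine (enorm_integral_le_lintegral_enorm _).trans (lintegral_mono' Measure.restrict_le_self
    fun s => (enorm_integral_le_lintegral_enorm _).trans (lintegral_mono fun y => ?_))
  simpa only [removeNth_slice] using hpt s y

end Slice

section VanSchaftingen

open Set

lemma lintegral_comp_add_smul {E : Type*} [NormedAddCommGroup E] [NormedSpace ℝ E]
    [FiniteDimensional ℝ E] [MeasurableSpace E] [BorelSpace E] (μ : Measure E) [μ.IsAddHaarMeasure]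
    (g : E → ℝ≥0∞) (y : E) {e : ℝ} (he : 0 < e) :
    ∫⁻ w, g (y + e • w) ∂μ =
      ENNReal.ofReal ((e ^ Module.finrank ℝ E)⁻¹) * ∫⁻ w, g w ∂μ := by
  calc ∫⁻ w, g (y + e • w) ∂μ = ∫⁻ w, g (y + w) ∂μ.map (e • ·) :=
        (lintegral_map_equiv (fun w => g (y + w)) (MeasurableEquiv.smul₀ e he.ne')).symm
    _ = _ := by
        rw [Measure.map_addHaar_smul _ he.ne', lintegral_smul_measure,
          lintegral_add_left_eq_self (fun w => g w) y, smul_eq_mul, abs_of_pos (by positivity)]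

lemma lintegral_lintegral_mul_le {α β : Type*} [MeasurableSpace α] [MeasurableSpace β]
    {μ : Measure α} {ν : Measure β} [SFinite μ] [SFinite ν] {S : β → ℝ≥0∞} (hS : Measurable S)
    {D : α → β → ℝ≥0∞} (hD : Measurable (Function.uncurry D)) {C : ℝ≥0∞}
    (hC : ∀ y, ∫⁻ w, D w y ∂μ ≤ C) : ∫⁻ w, ∫⁻ y, S y * D w y ∂ν ∂μ ≤ C * ∫⁻ y, S y ∂ν := by
  have hmeas : Measurable fun z : α × β => S z.2 * Function.uncurry D z :=
    (hS.comp measurable_snd).mul hD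
  rw [lintegral_lintegral_swap hmeas.aemeasurable, ← lintegral_const_mul _ hS]
  refine lintegral_mono fun y => ?_
  have hDy : Measurable fun w => D w y := hD.comp measurable_prodMk_right
  rw [lintegral_const_mul _ hDy, mul_comm]
  exact mul_le_mul_left (hC y) _

variable {n : ℕ}

lemma volume_Icc_zero_one (n : ℕ) : volume (Icc (0 : Fin n → ℝ) 1) = 1 := by
  simp [Real.volume_Icc_pi]

lemma holderConjugate_add_one_div (hn : n ≠ 0) :
    Real.HolderConjugate ((n : ℝ) + 1) (((n : ℝ) + 1) / n) := by
  have : (0 : ℝ) < n := by positivity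
  rw [Real.holderConjugate_iff]
  exact ⟨by linarith, by field_simp; ring⟩

lemma setLIntegral_comp_add_smul_le (hn : n ≠ 0) {g : (Fin n → ℝ) → ℝ≥0∞} (hg : Measurable g)
    (y : Fin n → ℝ) {e : ℝ} (he : 0 < e) :
    ∫⁻ w in Icc (0 : Fin n → ℝ) 1, g (y + e • w) ≤ ENNReal.ofReal (e ^ (-(n : ℝ) / (n + 1))) *
      (∫⁻ w, g w ^ ((n : ℝ) + 1)) ^ (1 / ((n : ℝ) + 1)) := by
  have holder := ENNReal.lintegral_mul_le_Lp_mul_Lq (volume.restrict (Icc (0 : Fin n → ℝ) 1))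
    (holderConjugate_add_one_div hn) (f := fun w => g (y + e • w)) (g := fun _ => 1)
    (by fun_prop) (by fun_prop)
  simp only [Pi.mul_apply, mul_one, ENNReal.one_rpow, lintegral_const,
    Measure.restrict_apply MeasurableSet.univ, univ_inter, volume_Icc_zero_one] at holder
  calc ∫⁻ w in Icc (0 : Fin n → ℝ) 1, g (y + e • w)
      ≤ (∫⁻ w, g (y + e • w) ^ ((n : ℝ) + 1)) ^ (1 / ((n : ℝ) + 1)) :=
        holder.trans (by gcongr; exact Measure.restrict_le_self)
    _ = _ := by
        rw [lintegral_comp_add_smul volume (fun w => g w ^ ((n : ℝ) + 1)) y he,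
          ENNReal.mul_rpow_of_nonneg _ _ (by positivity),
          ENNReal.ofReal_rpow_of_nonneg (by positivity) (by positivity), Module.finrank_fin_fun,
          ← Real.rpow_natCast, ← Real.rpow_neg he.le, ← Real.rpow_mul he.le, mul_one_div]

lemma enorm_add_sub_le_setLIntegral {E : Type*} [NormedAddCommGroup E] [NormedSpace ℝ E]
    {ψ : E → ℝ} (hψ : ContDiff ℝ 1 ψ) (y v : E) :
    ‖ψ (y + v) - ψ y‖ₑ ≤ ∫⁻ s in Ioc (0 : ℝ) 1, ‖fderiv ℝ ψ (y + s • v)‖ₑ * ‖v‖ₑ := by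
  have hψ' : Continuous (fderiv ℝ ψ) := hψ.continuous_fderiv one_ne_zero
  have hderiv (s : ℝ) :
      HasDerivAt (fun s : ℝ => ψ (y + s • v)) (fderiv ℝ ψ (y + s • v) v) s := by
    refine (hψ.differentiable one_ne_zero _).hasFDerivAt.comp_hasDerivAt s ?_
    simpa only [one_smul, id_eq] using ((hasDerivAt_id s).smul_const v).const_add y
  have hcont : Continuous fun s : ℝ => fderiv ℝ ψ (y + s • v) v :=
    (hψ'.comp (by fun_prop)).clm_apply continuous_const
  have hftc := intervalIntegral.integral_eq_sub_of_hasDerivAt (a := 0) (b := 1)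
    (fun s _ => hderiv s) (hcont.intervalIntegrable _ _)
  rw [one_smul, zero_smul, add_zero] at hftc
  rw [← hftc, intervalIntegral.integral_of_le zero_le_one]
  exact (enorm_integral_le_lintegral_enorm _).trans
    (lintegral_mono fun s => ContinuousLinearMap.le_opENorm _ _)

lemma setLIntegral_Ioc_rpow_neg_div_add_one (n : ℕ) :
    ∫⁻ s in Ioc (0 : ℝ) 1, ENNReal.ofReal (s ^ (-(n : ℝ) / (n + 1))) = n + 1 := by
  have hexp : -(n : ℝ) / (n + 1) + 1 = ((n : ℝ) + 1)⁻¹ := by field_simp; ring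
  have hn : (-1 : ℝ) < -(n : ℝ) / (n + 1) := by
    have : (0 : ℝ) < ((n : ℝ) + 1)⁻¹ := by positivity
    linarith
  rw [lintegral_Ioc_rpow hn zero_le_one, hexp, Real.one_rpow, inv_inv, mul_one]
  exact_mod_cast ENNReal.ofReal_natCast (n + 1)

lemma enorm_add_smul_sub_le_setLIntegral {ψ : (Fin n → ℝ) → ℝ} (hψ : ContDiff ℝ 1 ψ)
    (y : Fin n → ℝ) {e : ℝ} (he : 0 ≤ e) {w : Fin n → ℝ} (hw : w ∈ Icc (0 : Fin n → ℝ) 1) :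
    ‖ψ (y + e • w) - ψ y‖ₑ ≤
      ∫⁻ s in Ioc (0 : ℝ) 1, ‖fderiv ℝ ψ (y + (s * e) • w)‖ₑ * ENNReal.ofReal e := by
  have hw₁ : ‖w‖ ≤ 1 := (pi_norm_le_iff_of_nonneg zero_le_one).2 fun i => by
    rw [Real.norm_of_nonneg (hw.1 i)]
    exact hw.2 i
  refine (enorm_add_sub_le_setLIntegral hψ y (e • w)).trans (lintegral_mono fun s => ?_)
  rw [smul_smul, enorm_smul, Real.enorm_eq_ofReal he, ← ofReal_norm (x := w)]
  exact mul_le_mul_right (mul_le_of_le_one_right zero_le (ENNReal.ofReal_le_one.2 hw₁)) _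

/-- Write `ψ (y + e w) - ψ y` as an integral along the segment and average over `w`; the resulting
powers of `s` are integrable because the exponent `n + 1` exceeds the dimension `n`. -/
lemma setLIntegral_enorm_add_smul_sub_le (hn : n ≠ 0) {ψ : (Fin n → ℝ) → ℝ}
    (hψ : ContDiff ℝ 1 ψ) (y : Fin n → ℝ) {e : ℝ} (he : 0 < e) :
    ∫⁻ w in Icc (0 : Fin n → ℝ) 1, ‖ψ (y + e • w) - ψ y‖ₑ ≤
      (n + 1) * ENNReal.ofReal (e ^ (1 / ((n : ℝ) + 1))) *
        (∫⁻ w, ‖fderiv ℝ ψ w‖ₑ ^ ((n : ℝ) + 1)) ^ (1 / ((n : ℝ) + 1)) := by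
  have hψ' : Continuous (fderiv ℝ ψ) := hψ.continuous_fderiv one_ne_zero
  set P := (∫⁻ w, ‖fderiv ℝ ψ w‖ₑ ^ ((n : ℝ) + 1)) ^ (1 / ((n : ℝ) + 1))
  have havg (s) (hs : s ∈ Ioc (0 : ℝ) 1) : ∫⁻ w in Icc (0 : Fin n → ℝ) 1,
      ‖fderiv ℝ ψ (y + (s * e) • w)‖ₑ * ENNReal.ofReal e ≤
        ENNReal.ofReal (s ^ (-(n : ℝ) / (n + 1))) *
          (ENNReal.ofReal (e ^ (1 / ((n : ℝ) + 1))) * P) := by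
    have hpow : e ^ (1 / ((n : ℝ) + 1)) = e ^ (-(n : ℝ) / (n + 1)) * e := by
      rw [← Real.rpow_add_one he.ne']
      congr 1
      field_simp
      ring
    rw [lintegral_mul_const' _ _ ENNReal.ofReal_ne_top, hpow, ENNReal.ofReal_mul (by positivity)]
    refine (mul_le_mul_left (setLIntegral_comp_add_smul_le hn hψ'.measurable.enorm y
      (mul_pos hs.1 he)) _).trans_eq ?_
    rw [Real.mul_rpow hs.1.le he.le, ENNReal.ofReal_mul (Real.rpow_nonneg hs.1.le _)]
    ring
  have hmeas : Measurable fun z : (Fin n → ℝ) × ℝ =>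
      ‖fderiv ℝ ψ (y + (z.2 * e) • z.1)‖ₑ * ENNReal.ofReal e :=
    (hψ'.comp (by fun_prop)).measurable.enorm.mul_const _
  calc ∫⁻ w in Icc (0 : Fin n → ℝ) 1, ‖ψ (y + e • w) - ψ y‖ₑ
      ≤ ∫⁻ w in Icc (0 : Fin n → ℝ) 1, ∫⁻ s in Ioc (0 : ℝ) 1,
          ‖fderiv ℝ ψ (y + (s * e) • w)‖ₑ * ENNReal.ofReal e :=
        setLIntegral_mono' measurableSet_Icc fun w hw =>
          enorm_add_smul_sub_le_setLIntegral hψ y he.le hw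
    _ = ∫⁻ s in Ioc (0 : ℝ) 1, ∫⁻ w in Icc (0 : Fin n → ℝ) 1,
          ‖fderiv ℝ ψ (y + (s * e) • w)‖ₑ * ENNReal.ofReal e :=
        lintegral_lintegral_swap hmeas.aemeasurable
    _ ≤ ∫⁻ s in Ioc (0 : ℝ) 1, ENNReal.ofReal (s ^ (-(n : ℝ) / (n + 1))) *
          (ENNReal.ofReal (e ^ (1 / ((n : ℝ) + 1))) * P) :=
        setLIntegral_mono' measurableSet_Ioc havg
    _ = _ := by
        rw [lintegral_mul_const _ (by fun_prop), setLIntegral_Ioc_rpow_neg_div_add_one, mul_assoc]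

variable {f : Fin (n + 1) → (Fin (n + 1) → ℝ) → ℝ}

lemma enorm_integral_slice_mul_le_add (hf : ∀ j, ContDiff ℝ 1 (f j))
    (hfs : ∀ j, HasCompactSupport (f j)) (hdiv : ∀ x, ∑ j, fderiv ℝ (f j) x (Pi.single j 1) = 0)
    (a : Fin (n + 1)) {ψ : (Fin n → ℝ) → ℝ} (hψ : ContDiff ℝ 1 ψ) (t : ℝ) (v : Fin n → ℝ) :
    ‖∫ y, f a (slice a t y) * ψ y‖ₑ ≤
      (∫⁻ y, ‖f a (slice a t y)‖ₑ * ‖ψ (y + v) - ψ y‖ₑ) +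
        ∫⁻ x, (∑ j, ‖f j x‖ₑ) * ‖fderiv ℝ ψ (a.removeNth x + v)‖ₑ := by
  have hfa : Continuous (f a) := (hf a).continuous
  have htranslate : ContDiff ℝ 1 fun y => ψ (y + v) := hψ.comp (contDiff_id.add contDiff_const)
  have hsplit : ∫ y, f a (slice a t y) * ψ y = (∫ y, f a (slice a t y) * ψ (y + v)) -
      ∫ y, f a (slice a t y) * (ψ (y + v) - ψ y) := by
    simp only [mul_sub]
    rw [integral_sub (integrable_slice_mul a t hfa (hfs a) htranslate.continuous)
      (integrable_slice_mul a t hfa (hfs a) hψ.continuous), sub_sub_cancel]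
  rw [hsplit, add_comm]
  refine enorm_sub_le.trans (add_le_add ?_ ?_)
  · simpa only [fderiv_comp_add_right] using
      enorm_integral_slice_mul_le hf hfs hdiv a htranslate t
  · simpa only [enorm_mul] using enorm_integral_le_lintegral_enorm
      fun y => f a (slice a t y) * (ψ (y + v) - ψ y)

lemma enorm_integral_slice_mul_le_of_pos (hn : n ≠ 0) (hf : ∀ j, ContDiff ℝ 1 (f j))
    (hfs : ∀ j, HasCompactSupport (f j)) (hdiv : ∀ x, ∑ j, fderiv ℝ (f j) x (Pi.single j 1) = 0)
    (a : Fin (n + 1)) {ψ : (Fin n → ℝ) → ℝ} (hψ : ContDiff ℝ 1 ψ) (t : ℝ) {e : ℝ} (he : 0 < e) :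
    ‖∫ y, f a (slice a t y) * ψ y‖ₑ ≤
      (∫⁻ w, ‖fderiv ℝ ψ w‖ₑ ^ ((n : ℝ) + 1)) ^ (1 / ((n : ℝ) + 1)) *
        ((n + 1) * ENNReal.ofReal (e ^ (1 / ((n : ℝ) + 1))) * (∫⁻ y, ‖f a (slice a t y)‖ₑ) +
          ENNReal.ofReal (e ^ (-(n : ℝ) / (n + 1))) * ∫⁻ x, ∑ j, ‖f j x‖ₑ) := by
  have hψ' : Continuous (fderiv ℝ ψ) := hψ.continuous_fderiv one_ne_zero
  have hψc : Continuous ψ := hψ.continuous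
  have hfc (j) : Continuous (f j) := (hf j).continuous
  have hsl : Continuous (slice a t) := (isometry_slice_right a t).continuous
  have hrem : Continuous fun x : Fin (n + 1) → ℝ => a.removeNth x :=
    continuous_pi fun j => continuous_apply (a.succAbove j)
  have hmeas : Measurable fun y => ‖f a (slice a t y)‖ₑ := ((hfc a).comp hsl).measurable.enorm
  have hmeas₁ : Measurable fun z : (Fin n → ℝ) × (Fin n → ℝ) => ‖ψ (z.2 + e • z.1) - ψ z.2‖ₑ := by
    fun_prop
  have hmeas₂ : Measurable fun z : (Fin n → ℝ) × (Fin (n + 1) → ℝ) =>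
      ‖fderiv ℝ ψ (a.removeNth z.2 + e • z.1)‖ₑ :=
    (hψ'.comp (by fun_prop)).measurable.enorm
  calc ‖∫ y, f a (slice a t y) * ψ y‖ₑ
      = ∫⁻ _ in Icc (0 : Fin n → ℝ) 1, ‖∫ y, f a (slice a t y) * ψ y‖ₑ := by
        rw [setLIntegral_const, volume_Icc_zero_one, mul_one]
    _ ≤ (∫⁻ w in Icc (0 : Fin n → ℝ) 1,
          ∫⁻ y, ‖f a (slice a t y)‖ₑ * ‖ψ (y + e • w) - ψ y‖ₑ) +
        ∫⁻ w in Icc (0 : Fin n → ℝ) 1,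
          ∫⁻ x, (∑ j, ‖f j x‖ₑ) * ‖fderiv ℝ ψ (a.removeNth x + e • w)‖ₑ := by
        refine (lintegral_mono fun w => enorm_integral_slice_mul_le_add hf hfs hdiv a hψ t
          (e • w)).trans_eq (lintegral_add_left ?_ _)
        exact Measurable.lintegral_prod_right' (f := fun z : (Fin n → ℝ) × (Fin n → ℝ) =>
          ‖f a (slice a t z.2)‖ₑ * ‖ψ (z.2 + e • z.1) - ψ z.2‖ₑ)
          ((hmeas.comp measurable_snd).mul hmeas₁)
    _ ≤ _ := add_le_add
        (lintegral_lintegral_mul_le hmeas hmeas₁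
          fun y => setLIntegral_enorm_add_smul_sub_le hn hψ y he)
        (lintegral_lintegral_mul_le (by fun_prop) hmeas₂
          fun x => setLIntegral_comp_add_smul_le hn hψ'.measurable.enorm _ he)
    _ = _ := by ring

lemma integral_mul_eq_zero_of_lintegral_enorm_eq_zero {α : Type*} [MeasurableSpace α]
    {μ : Measure α} {g h : α → ℝ} (hg : AEStronglyMeasurable g μ) (h₀ : ∫⁻ x, ‖g x‖ₑ ∂μ = 0) :
    ∫ x, g x * h x ∂μ = 0 := by
  refine integral_eq_zero_of_ae ?_
  filter_upwards [(lintegral_eq_zero_iff' hg.enorm).1 h₀] with x hx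
  rw [Pi.zero_apply, enorm_eq_zero] at hx
  rw [hx, zero_mul, Pi.zero_apply]

lemma div_rpow_mul_right {b c : ℝ≥0∞} (hb : b ≠ ⊤) (hc₀ : c ≠ 0) (hc : c ≠ ⊤) (θ : ℝ) :
    (b / c) ^ θ * c = b ^ θ * c ^ (1 - θ) := by
  rw [div_eq_mul_inv, ENNReal.mul_rpow_of_ne_top hb (ENNReal.inv_ne_top.2 hc₀), ENNReal.inv_rpow,
    ← ENNReal.rpow_neg, mul_assoc, sub_eq_neg_add, ENNReal.rpow_add _ _ hc₀ hc, ENNReal.rpow_one]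

lemma div_rpow_sub_one_mul_left {b c : ℝ≥0∞} (hb₀ : b ≠ 0) (hb : b ≠ ⊤) (hc₀ : c ≠ 0) (θ : ℝ) :
    (b / c) ^ (θ - 1) * b = b ^ θ * c ^ (1 - θ) := by
  rw [div_eq_mul_inv, ENNReal.mul_rpow_of_ne_top hb (ENNReal.inv_ne_top.2 hc₀), ENNReal.inv_rpow,
    ← ENNReal.rpow_neg, neg_sub, mul_right_comm]
  nth_rw 2 [← ENNReal.rpow_one b]
  rw [← ENNReal.rpow_add _ _ hb₀ hb, sub_add_cancel]

/-- Choose `e = ‖f‖₁ / ‖f a (slice a t ·)‖₁`. -/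
lemma enorm_integral_slice_mul_le_rpow_mul_rpow (hn : n ≠ 0) (hf : ∀ j, ContDiff ℝ 1 (f j))
    (hfs : ∀ j, HasCompactSupport (f j)) (hdiv : ∀ x, ∑ j, fderiv ℝ (f j) x (Pi.single j 1) = 0)
    (a : Fin (n + 1)) {ψ : (Fin n → ℝ) → ℝ} (hψ : ContDiff ℝ 1 ψ) (t : ℝ)
    (h₀ : ∫⁻ x, ∑ j, ‖f j x‖ₑ ≠ 0) (h_top : ∫⁻ x, ∑ j, ‖f j x‖ₑ ≠ ⊤) :
    ‖∫ y, f a (slice a t y) * ψ y‖ₑ ≤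
      (n + 2) * (∫⁻ x, ∑ j, ‖f j x‖ₑ) ^ (1 / ((n : ℝ) + 1)) *
        ((∫⁻ w, ‖fderiv ℝ ψ w‖ₑ ^ ((n : ℝ) + 1)) ^ (1 / ((n : ℝ) + 1)) *
          (∫⁻ y, ‖f a (slice a t y)‖ₑ) ^ (1 - 1 / ((n : ℝ) + 1))) := by
  have hint : Integrable fun y => f a (slice a t y) := by
    simpa only [mul_one] using integrable_slice_mul (ψ := fun _ => 1) a t (hf a).continuous (hfs a)
      continuous_const
  rcases eq_or_ne (∫⁻ y, ‖f a (slice a t y)‖ₑ) 0 with hc₀ | hc₀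
  · rw [integral_mul_eq_zero_of_lintegral_enorm_eq_zero hint.1 hc₀, enorm_zero]
    exact zero_le
  have hc : ∫⁻ y, ‖f a (slice a t y)‖ₑ ≠ ⊤ := hint.2.ne
  have main (e : ℝ) (he : 0 < e) := enorm_integral_slice_mul_le_of_pos hn hf hfs hdiv a hψ t he
  set b := ∫⁻ x, ∑ j, ‖f j x‖ₑ
  set c := ∫⁻ y, ‖f a (slice a t y)‖ₑ
  have hbc : b / c ≠ ⊤ := ENNReal.div_ne_top h_top hc₀
  have he : 0 < (b / c).toReal := ENNReal.toReal_pos (ENNReal.div_ne_zero.2 ⟨h₀, hc⟩) hbc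
  have hexp : -(n : ℝ) / (n + 1) = 1 / ((n : ℝ) + 1) - 1 := by field_simp; ring
  refine (main _ he).trans_eq ?_
  rw [← ENNReal.ofReal_rpow_of_pos he, ← ENNReal.ofReal_rpow_of_pos he, ENNReal.ofReal_toReal hbc,
    mul_assoc _ _ c, div_rpow_mul_right h_top hc₀ hc, hexp, div_rpow_sub_one_mul_left h₀ h_top hc₀]
  ring

lemma lintegral_enorm_fderiv_comp_slice_le {φ : (Fin (n + 1) → ℝ) → ℝ} (hφ : Differentiable ℝ φ)
    (a : Fin (n + 1)) (t : ℝ) {p : ℝ} (hp : 0 ≤ p) :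
    ∫⁻ y, ‖fderiv ℝ (fun y => φ (slice a t y)) y‖ₑ ^ p ≤
      ∫⁻ y, ‖fderiv ℝ φ (slice a t y)‖ₑ ^ p := by
  refine lintegral_mono fun y => ENNReal.rpow_le_rpow ?_ hp
  rw [(hasFDerivAt_comp_slice a t y (hφ _)).fderiv]
  refine enorm_le_iff_norm_le.2 ((ContinuousLinearMap.opNorm_comp_le _ _).trans ?_)
  exact mul_le_of_le_one_right (norm_nonneg _) (norm_sliceDeriv_le a)

/-- The estimate of Van Schaftingen which is dual to the Bourgain–Brezis inequality. -/
theorem enorm_integral_mul_le_of_divergence_eq_zero (hn : n ≠ 0) (hf : ∀ j, ContDiff ℝ 1 (f j))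
    (hfs : ∀ j, HasCompactSupport (f j)) (hdiv : ∀ x, ∑ j, fderiv ℝ (f j) x (Pi.single j 1) = 0)
    (a : Fin (n + 1)) {φ : (Fin (n + 1) → ℝ) → ℝ} (hφ : ContDiff ℝ 1 φ) :
    ‖∫ x, f a x * φ x‖ₑ ≤ (n + 2) * (∫⁻ x, ∑ j, ‖f j x‖ₑ) *
      (∫⁻ x, ‖fderiv ℝ φ x‖ₑ ^ ((n : ℝ) + 1)) ^ (1 / ((n : ℝ) + 1)) := by
  have hint (j) : Integrable (f j) := (hf j).continuous.integrable_of_hasCompactSupport (hfs j)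
  have hfa : Measurable fun x => ‖f a x‖ₑ := (hf a).continuous.measurable.enorm
  have hφ' : Measurable fun x => ‖fderiv ℝ φ x‖ₑ ^ ((n : ℝ) + 1) :=
    (hφ.continuous_fderiv one_ne_zero).measurable.enorm.pow_const _
  have hslice := (isometry_slice a).continuous.measurable
  have hb : ∫⁻ x, ∑ j, ‖f j x‖ₑ ≠ ⊤ := by
    rw [lintegral_finsetSum' _ fun j _ => (hint j).1.enorm]
    exact (ENNReal.sum_lt_top.2 fun j _ => (hint j).2).ne
  have hle : ∫⁻ x, ‖f a x‖ₑ ≤ ∫⁻ x, ∑ j, ‖f j x‖ₑ := lintegral_mono fun x =>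
    Finset.single_le_sum (f := fun j => ‖f j x‖ₑ) (fun _ _ => zero_le) (Finset.mem_univ a)
  set b := ∫⁻ x, ∑ j, ‖f j x‖ₑ
  set θ := 1 / ((n : ℝ) + 1)
  have hθ : 0 ≤ θ := by positivity
  have hθ₁ : 0 ≤ 1 - θ := sub_nonneg.2 ((div_le_one (by positivity)).2 (by simp))
  rcases eq_or_ne b 0 with hb₀ | hb₀
  · rw [integral_mul_eq_zero_of_lintegral_enorm_eq_zero (hint a).1 (by simpa [hb₀] using hle),
      enorm_zero]
    exact zero_le
  calc ‖∫ x, f a x * φ x‖ₑ ≤ ∫⁻ t, ‖∫ y, f a (slice a t y) * φ (slice a t y)‖ₑ := by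
        have hfφ : Integrable fun x => f a x * φ x := ((hf a).continuous.mul
          hφ.continuous).integrable_of_hasCompactSupport (hfs a).mul_right
        rw [integral_eq_integral_slice a hfφ]
        exact enorm_integral_le_lintegral_enorm _
    _ ≤ ∫⁻ t, (n + 2) * b ^ θ * ((∫⁻ y, ‖fderiv ℝ φ (slice a t y)‖ₑ ^ ((n : ℝ) + 1)) ^ θ *
          (∫⁻ y, ‖f a (slice a t y)‖ₑ) ^ (1 - θ)) := by
        refine lintegral_mono fun t => (enorm_integral_slice_mul_le_rpow_mul_rpow hn hf hfs hdiv a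
          (hφ.comp (contDiff_slice a t)) t hb₀ hb).trans ?_
        refine mul_le_mul_right (mul_le_mul_left (ENNReal.rpow_le_rpow ?_ hθ) _) _
        exact lintegral_enorm_fderiv_comp_slice_le (hφ.differentiable one_ne_zero) a t
          (by positivity)
    _ ≤ (n + 2) * b ^ θ * ((∫⁻ x, ‖fderiv ℝ φ x‖ₑ ^ ((n : ℝ) + 1)) ^ θ *
          (∫⁻ x, ‖f a x‖ₑ) ^ (1 - θ)) := by
        rw [lintegral_const_mul' _ _ (by finiteness), lintegral_eq_lintegral_slice a hφ',
          lintegral_eq_lintegral_slice a hfa]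
        exact mul_le_mul_right (ENNReal.lintegral_mul_norm_pow_le
          (hφ'.comp hslice).lintegral_prod_right'.aemeasurable
          (hfa.comp hslice).lintegral_prod_right'.aemeasurable hθ hθ₁ (add_sub_cancel ..)) _
    _ ≤ (n + 2) * b ^ θ * ((∫⁻ x, ‖fderiv ℝ φ x‖ₑ ^ ((n : ℝ) + 1)) ^ θ * b ^ (1 - θ)) := by
        gcongr
    _ = (n + 2) * (b ^ θ * b ^ (1 - θ)) * (∫⁻ x, ‖fderiv ℝ φ x‖ₑ ^ ((n : ℝ) + 1)) ^ θ := by ring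
    _ = _ := by rw [← ENNReal.rpow_add _ _ hb₀ hb, add_sub_cancel, ENNReal.rpow_one]

end VanSchaftingen

section DyadicSums

open scoped SchwartzMap

lemma min_zpow_mul_inv_le {r : ℝ} {n : ℤ} (hn : r ∈ Set.Ico (2 ^ n : ℝ) (2 ^ (n + 1))) (j : ℤ) :
    min (2 ^ j * r) (2 ^ j * r)⁻¹ ≤ 2 * (1 / 2 : ℝ) ^ (j + n).natAbs := by
  have : 0 < r := (zpow_pos two_pos n).trans_le hn.1
  rcases le_total 0 (j + n) with h | h
  · have hpow : (1 / 2 : ℝ) ^ (j + n).natAbs = ((2 : ℝ) ^ (j + n))⁻¹ := by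
      rw [one_div, inv_pow, ← zpow_natCast, Int.natAbs_of_nonneg h]
    calc min (2 ^ j * r) (2 ^ j * r)⁻¹ ≤ (2 ^ j * r)⁻¹ := min_le_right _ _
      _ ≤ ((2 : ℝ) ^ (j + n))⁻¹ := by
          rw [zpow_add₀ two_ne_zero]
          gcongr
          exact hn.1
      _ ≤ 2 * ((2 : ℝ) ^ (j + n))⁻¹ := le_mul_of_one_le_left (by positivity) one_le_two
      _ = _ := by rw [hpow]
  · have hpow : (1 / 2 : ℝ) ^ (j + n).natAbs = (2 : ℝ) ^ (j + n) := by
      rw [one_div, inv_pow, ← zpow_natCast, Int.ofNat_natAbs_of_nonpos h, ← zpow_neg, neg_neg]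
    calc min (2 ^ j * r) (2 ^ j * r)⁻¹ ≤ 2 ^ j * r := min_le_left _ _
      _ ≤ 2 ^ j * 2 ^ (n + 1) := by
          gcongr
          exact hn.2.le
      _ = _ := by
          rw [hpow, ← zpow_add₀ two_ne_zero, ← add_assoc, zpow_add_one₀ two_ne_zero, mul_comm]

lemma exists_sum_min_zpow_mul_inv_le : ∃ D : ℝ, 0 ≤ D ∧ ∀ r : ℝ, 0 ≤ r → ∀ S : Finset ℤ,
    ∑ j ∈ S, min (2 ^ j * r) (2 ^ j * r)⁻¹ ≤ D := by
  have hsum : Summable fun i : ℤ => 2 * (1 / 2 : ℝ) ^ i.natAbs := by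
    apply Summable.of_nat_of_neg <;> simpa using summable_geometric_two.mul_left 2
  have htsum : 0 ≤ ∑' i : ℤ, 2 * (1 / 2 : ℝ) ^ i.natAbs := tsum_nonneg fun i => by positivity
  refine ⟨∑' i : ℤ, 2 * (1 / 2 : ℝ) ^ i.natAbs, htsum, fun r hr S => ?_⟩
  rcases hr.eq_or_lt with rfl | hpos
  · simpa using htsum
  obtain ⟨n, hn⟩ := exists_mem_Ico_zpow hpos (one_lt_two : (1 : ℝ) < 2)
  calc ∑ j ∈ S, min (2 ^ j * r) (2 ^ j * r)⁻¹
      ≤ ∑ j ∈ S, 2 * (1 / 2 : ℝ) ^ (j + n).natAbs :=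
        Finset.sum_le_sum fun j _ => min_zpow_mul_inv_le hn j
    _ = ∑ i ∈ S.map (Equiv.addRight n).toEmbedding, 2 * (1 / 2 : ℝ) ^ i.natAbs := by
        rw [Finset.sum_map]
        rfl
    _ ≤ ∑' i : ℤ, 2 * (1 / 2 : ℝ) ^ i.natAbs := hsum.sum_le_tsum _ fun i _ => by positivity

variable {E : Type*} [NormedAddCommGroup E]

lemma measurableSet_le_norm [MeasurableSpace E] [OpensMeasurableSpace E] (r : ℝ) :
    MeasurableSet {x : E | r ≤ ‖x‖} :=
  measurableSet_le measurable_const measurable_norm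

lemma setLIntegral_enorm_le_div_enorm [MeasurableSpace E] [OpensMeasurableSpace E] {μ : Measure E}
    (k : E → ℝ) {z : E} (hz : z ≠ 0) :
    ∫⁻ x in {x | ‖z‖ ≤ ‖x‖}, ‖k x‖ₑ ∂μ ≤ (∫⁻ x, ‖‖x‖ * k x‖ₑ ∂μ) / ‖z‖ₑ := by
  rw [ENNReal.le_div_iff_mul_le (.inl (enorm_ne_zero.2 hz)) (.inl enorm_ne_top),
    ← lintegral_mul_const' _ _ enorm_ne_top]
  refine (setLIntegral_mono' (measurableSet_le_norm _) fun x hx => ?_).trans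
    (setLIntegral_le_lintegral _ _)
  rw [enorm_mul, mul_comm, enorm_norm]
  gcongr
  exact enorm_le_iff_norm_le.2 hx

lemma setLIntegral_enorm_sub_sub_le_two_mul_div [MeasurableSpace E] [BorelSpace E]
    {μ : Measure E} [μ.IsAddRightInvariant] {k : E → ℝ} (hk : Continuous k) {z : E} (hz : z ≠ 0) :
    ∫⁻ x in {x | 2 * ‖z‖ ≤ ‖x‖}, ‖k (x - z) - k x‖ₑ ∂μ ≤
      2 * (∫⁻ x, ‖‖x‖ * k x‖ₑ ∂μ) / ‖z‖ₑ := by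
  have htail := setLIntegral_enorm_le_div_enorm (μ := μ) k hz
  have htranslate : ∫⁻ x in {x | 2 * ‖z‖ ≤ ‖x‖}, ‖k (x - z)‖ₑ ∂μ ≤
      ∫⁻ x in {x | ‖z‖ ≤ ‖x‖}, ‖k x‖ₑ ∂μ := by
    rw [← (measurePreserving_sub_right μ z).setLIntegral_comp_preimage (measurableSet_le_norm _)
      hk.enorm.measurable]
    refine lintegral_mono_set fun x (hx : 2 * ‖z‖ ≤ ‖x‖) => ?_
    have := norm_sub_norm_le x z
    exact show ‖z‖ ≤ ‖x - z‖ by linarith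
  calc ∫⁻ x in {x | 2 * ‖z‖ ≤ ‖x‖}, ‖k (x - z) - k x‖ₑ ∂μ
      ≤ ∫⁻ x in {x | 2 * ‖z‖ ≤ ‖x‖}, (‖k (x - z)‖ₑ + ‖k x‖ₑ) ∂μ :=
        lintegral_mono fun x => enorm_sub_le
    _ = (∫⁻ x in {x | 2 * ‖z‖ ≤ ‖x‖}, ‖k (x - z)‖ₑ ∂μ) +
          ∫⁻ x in {x | 2 * ‖z‖ ≤ ‖x‖}, ‖k x‖ₑ ∂μ := lintegral_add_right _ hk.enorm.measurable
    _ ≤ _ := by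
        rw [two_mul (lintegral μ _), ENNReal.add_div]
        refine add_le_add (htranslate.trans htail) ((lintegral_mono_set fun x hx => ?_).trans htail)
        exact (le_mul_of_one_le_left (norm_nonneg z) one_le_two).trans hx

variable [NormedSpace ℝ E] [FiniteDimensional ℝ E] [MeasurableSpace E] [BorelSpace E]
  {μ : Measure E} [μ.IsAddHaarMeasure]

lemma lintegral_enorm_sub_sub_le {k : E → ℝ} (hk : ContDiff ℝ 1 k) (y : E) :
    ∫⁻ x, ‖k (x - y) - k x‖ₑ ∂μ ≤ (∫⁻ x, ‖fderiv ℝ k x‖ₑ ∂μ) * ‖y‖ₑ := by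
  have hk' : Continuous (fderiv ℝ k) := hk.continuous_fderiv one_ne_zero
  have hmeas : Measurable fun z : E × ℝ => ‖fderiv ℝ k (z.1 + z.2 • -y)‖ₑ * ‖y‖ₑ :=
    (hk'.comp (by fun_prop)).measurable.enorm.mul_const _
  calc ∫⁻ x, ‖k (x - y) - k x‖ₑ ∂μ
      ≤ ∫⁻ x, (∫⁻ s in Set.Ioc (0 : ℝ) 1, ‖fderiv ℝ k (x + s • -y)‖ₑ * ‖y‖ₑ) ∂μ :=
        lintegral_mono fun x => by
          simpa only [← sub_eq_add_neg, enorm_neg] using enorm_add_sub_le_setLIntegral hk x (-y)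
    _ = ∫⁻ s in Set.Ioc (0 : ℝ) 1, ∫⁻ x, ‖fderiv ℝ k (x + s • -y)‖ₑ * ‖y‖ₑ ∂μ :=
        lintegral_lintegral_swap hmeas.aemeasurable
    _ = ∫⁻ _ in Set.Ioc (0 : ℝ) 1, (∫⁻ x, ‖fderiv ℝ k x‖ₑ ∂μ) * ‖y‖ₑ := by
        congr with s
        rw [lintegral_mul_const' _ _ enorm_ne_top,
          lintegral_add_right_eq_self fun x => ‖fderiv ℝ k x‖ₑ]
    _ = _ := by simp

lemma exists_setLIntegral_enorm_sub_sub_le (μ : Measure E) [μ.IsAddHaarMeasure]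
    (k : 𝓢(E, ℝ)) : ∃ C : ℝ, 0 ≤ C ∧ ∀ z : E,
      ∫⁻ x in {x | 2 * ‖z‖ ≤ ‖x‖}, ‖k (x - z) - k x‖ₑ ∂μ ≤
        ENNReal.ofReal (C * min ‖z‖ ‖z‖⁻¹) := by
  have hderiv : ∫⁻ x, ‖fderiv ℝ k x‖ₑ ∂μ ≠ ⊤ :=
    ((SchwartzMap.fderivCLM ℝ E ℝ k).integrable (μ := μ)).2.ne
  have hmoment : ∫⁻ x, ‖‖x‖ * k x‖ₑ ∂μ ≠ ⊤ := by
    simpa only [pow_one, enorm_mul, enorm_norm] using (k.integrable_pow_mul μ 1).2.ne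
  set a := ∫⁻ x, ‖fderiv ℝ k x‖ₑ ∂μ
  set b := ∫⁻ x, ‖‖x‖ * k x‖ₑ ∂μ
  refine ⟨max a.toReal (2 * b.toReal), by positivity, fun z => ?_⟩
  rcases eq_or_ne z 0 with rfl | hz
  · simp
  rw [mul_min_of_nonneg _ _ (by positivity), ENNReal.ofReal_min]
  refine le_min ?_ ?_
  · calc ∫⁻ x in {x | 2 * ‖z‖ ≤ ‖x‖}, ‖k (x - z) - k x‖ₑ ∂μ
        ≤ a * ‖z‖ₑ :=
          (setLIntegral_le_lintegral _ _).trans (lintegral_enorm_sub_sub_le (k.smooth 1) z)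
      _ = ENNReal.ofReal (a.toReal * ‖z‖) := by
          rw [ENNReal.ofReal_mul ENNReal.toReal_nonneg, ENNReal.ofReal_toReal hderiv, ofReal_norm]
      _ ≤ _ := by
          gcongr
          exact le_max_left _ _
  · calc ∫⁻ x in {x | 2 * ‖z‖ ≤ ‖x‖}, ‖k (x - z) - k x‖ₑ ∂μ
        ≤ 2 * b / ‖z‖ₑ := setLIntegral_enorm_sub_sub_le_two_mul_div k.continuous hz
      _ = ENNReal.ofReal (2 * b.toReal * ‖z‖⁻¹) := by
          rw [← div_eq_mul_inv, ENNReal.ofReal_div_of_pos (norm_pos_iff.2 hz),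
            ENNReal.ofReal_mul zero_le_two, ENNReal.ofReal_toReal hmoment, ofReal_norm,
            ENNReal.ofReal_ofNat]
      _ ≤ _ := by
          gcongr
          exact le_max_right _ _

lemma setLIntegral_enorm_dilate_sub_dilate (k : E → ℝ) (y : E) {a : ℝ} (ha : 0 < a) :
    ∫⁻ x in {x | 2 * ‖y‖ ≤ ‖x‖}, ‖a ^ Module.finrank ℝ E * k (a • (x - y)) -
        a ^ Module.finrank ℝ E * k (a • x)‖ₑ ∂μ =
      ∫⁻ x in {x | 2 * ‖a • y‖ ≤ ‖x‖}, ‖k (x - a • y) - k x‖ₑ ∂μ := by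
  have hpow : 0 < a ^ Module.finrank ℝ E := by positivity
  have hmem (x : E) : a • x ∈ {x | 2 * ‖a • y‖ ≤ ‖x‖} ↔ x ∈ {x | 2 * ‖y‖ ≤ ‖x‖} := by
    simp only [Set.mem_ofPred_eq, norm_smul, mul_left_comm (2 : ℝ)]
    exact mul_le_mul_iff_right₀ (norm_pos_iff.2 ha.ne')
  have hscale := lintegral_comp_add_smul μ
    ({x | 2 * ‖a • y‖ ≤ ‖x‖}.indicator fun x => ‖k (x - a • y) - k x‖ₑ) 0 ha
  simp only [zero_add, Set.indicator_apply, hmem, ← smul_sub] at hscale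
  simp only [← mul_sub, enorm_mul]
  rw [lintegral_const_mul' _ _ enorm_ne_top, ← lintegral_indicator (measurableSet_le_norm _),
    ← lintegral_indicator (measurableSet_le_norm _)]
  simp only [Set.indicator_apply]
  rw [hscale, ← mul_assoc, Real.enorm_of_nonneg hpow.le, ← ENNReal.ofReal_mul hpow.le,
    mul_inv_cancel₀ hpow.ne', ENNReal.ofReal_one, one_mul]

lemma exists_setLIntegral_enorm_dyadic_sum_sub_le (μ : Measure E) [μ.IsAddHaarMeasure]
    (k : 𝓢(E, ℝ)) : ∃ B : ℝ≥0∞, B ≠ ⊤ ∧ ∀ (S : Finset ℤ) (y : E),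
      ∫⁻ x in {x | 2 * ‖y‖ ≤ ‖x‖},
        ‖(∑ j ∈ S, ((2 : ℝ) ^ j) ^ Module.finrank ℝ E * k ((2 : ℝ) ^ j • (x - y))) -
          ∑ j ∈ S, ((2 : ℝ) ^ j) ^ Module.finrank ℝ E * k ((2 : ℝ) ^ j • x)‖ₑ ∂μ ≤ B := by
  obtain ⟨C, hC₀, hC⟩ := exists_setLIntegral_enorm_sub_sub_le μ k
  obtain ⟨D, -, hD⟩ := exists_sum_min_zpow_mul_inv_le
  refine ⟨ENNReal.ofReal (C * D), ENNReal.ofReal_ne_top, fun S y => ?_⟩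
  set d := Module.finrank ℝ E
  have hk : Continuous k := k.continuous
  calc _ ≤ ∫⁻ x in {x | 2 * ‖y‖ ≤ ‖x‖}, ∑ j ∈ S,
          ‖((2 : ℝ) ^ j) ^ d * k ((2 : ℝ) ^ j • (x - y)) -
            ((2 : ℝ) ^ j) ^ d * k ((2 : ℝ) ^ j • x)‖ₑ ∂μ :=
        lintegral_mono fun x => by
          simp only [← Finset.sum_sub_distrib]
          exact enorm_sum_le _ _
    _ = ∑ j ∈ S, ∫⁻ x in {x | 2 * ‖y‖ ≤ ‖x‖},
          ‖((2 : ℝ) ^ j) ^ d * k ((2 : ℝ) ^ j • (x - y)) -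
            ((2 : ℝ) ^ j) ^ d * k ((2 : ℝ) ^ j • x)‖ₑ ∂μ :=
        lintegral_finsetSum _ fun j _ => by fun_prop
    _ ≤ ∑ j ∈ S, ENNReal.ofReal (C * min (2 ^ j * ‖y‖) (2 ^ j * ‖y‖)⁻¹) := by
        refine Finset.sum_le_sum fun j _ => ?_
        have hj : (0 : ℝ) < 2 ^ j := by positivity
        rw [setLIntegral_enorm_dilate_sub_dilate k y hj]
        simpa only [norm_smul, Real.norm_of_nonneg hj.le] using hC ((2 : ℝ) ^ j • y)
    _ = ENNReal.ofReal (C * ∑ j ∈ S, min (2 ^ j * ‖y‖) (2 ^ j * ‖y‖)⁻¹) := by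
        rw [Finset.mul_sum, ENNReal.ofReal_sum_of_nonneg fun j _ => by positivity]
    _ ≤ _ := by
        gcongr
        exact hD _ (norm_nonneg _) S

end DyadicSums

section Plancherel

open Filter
open scoped FourierTransform SchwartzMap Convolution Topology

lemma continuous_integral_Lp_mul {α : Type*} [MeasurableSpace α] {μ : Measure α} {h : α → ℂ}
    (hh : MemLp h 2 μ) : Continuous fun w : Lp ℂ 2 μ => ∫ y, w y * h y ∂μ := by
  have hinner (w : Lp ℂ 2 μ) : ∫ y, w y * h y ∂μ = inner ℂ (hh.star.toLp _) w := by
    rw [L2.inner_def]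
    refine integral_congr_ae ?_
    filter_upwards [hh.star.coeFn_toLp] with y hy
    rw [hy]
    simp
  simp only [hinner]
  exact continuous_const.inner continuous_id

variable {V : Type*} [NormedAddCommGroup V] [InnerProductSpace ℝ V] [FiniteDimensional ℝ V]
  [MeasurableSpace V] [BorelSpace V] {C : ℝ}

lemma eLpNorm_two_fourier (u : 𝓢(V, ℂ)) :
    eLpNorm (𝓕 u : 𝓢(V, ℂ)) 2 volume = eLpNorm u 2 volume := by
  have h := SchwartzMap.norm_fourier_toL2_eq u
  rw [SchwartzMap.norm_toLp, SchwartzMap.norm_toLp] at h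
  exact (ENNReal.toReal_eq_toReal_iff' ((𝓕 u).eLpNorm_lt_top 2 volume).ne
    (u.eLpNorm_lt_top 2 volume).ne).1 h

lemma coe_schwartz_convolution (u k : 𝓢(V, ℂ)) :
    ⇑(SchwartzMap.convolution (.mul ℂ ℂ) u k) = u ⋆[.mul ℂ ℂ] k :=
  funext fun x => SchwartzMap.convolution_apply _ _ _ x

lemma eLpNorm_schwartz_convolution_fourierInv_le (m u : 𝓢(V, ℂ)) (hm : ∀ ξ, ‖m ξ‖ ≤ C) :
    eLpNorm (u ⋆[.mul ℂ ℂ] (𝓕⁻ m : 𝓢(V, ℂ))) 2 volume ≤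
      ENNReal.ofReal C * eLpNorm u 2 volume := by
  rw [← coe_schwartz_convolution, ← eLpNorm_two_fourier, ← eLpNorm_two_fourier u]
  refine eLpNorm_le_mul_eLpNorm_of_ae_le_mul (.of_forall fun ξ => ?_) 2
  rw [SchwartzMap.fourier_convolution, SchwartzMap.pairing_apply_apply,
    FourierTransform.fourier_fourierInv_eq, ContinuousLinearMap.mul_apply', norm_mul, mul_comm]
  exact mul_le_mul_of_nonneg_right (hm ξ) (norm_nonneg _)

lemma eLpNorm_convolution_fourierInv_le (m : 𝓢(V, ℂ)) (hm : ∀ ξ, ‖m ξ‖ ≤ C) {g : V → ℂ}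
    (hg : MemLp g 2) :
    eLpNorm (g ⋆[.mul ℂ ℂ] (𝓕⁻ m : 𝓢(V, ℂ))) 2 volume ≤
      ENNReal.ofReal C * eLpNorm g 2 volume := by
  have hdense := SchwartzMap.denseRange_toLpCLM (E := V) (F := ℂ) (p := 2) (μ := volume)
    ENNReal.ofNat_ne_top
  obtain ⟨s, hs, hlim⟩ := mem_closure_iff_seq_limit.1 (hdense (hg.toLp g))
  choose u hu using hs
  have hus (n) : u n =ᵐ[volume] s n := by
    rw [← hu]
    exact (SchwartzMap.coeFn_toLp (u n) 2 volume).symm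
  have hpointwise (x : V) : Tendsto (fun n => (u n ⋆[.mul ℂ ℂ] (𝓕⁻ m : 𝓢(V, ℂ))) x) atTop
      (𝓝 ((g ⋆[.mul ℂ ℂ] (𝓕⁻ m : 𝓢(V, ℂ))) x)) := by
    have hk : MemLp (fun y => (𝓕⁻ m) (x - y)) 2 volume :=
      ((𝓕⁻ m).memLp 2 volume).comp_measurePreserving (Measure.measurePreserving_sub_left volume x)
    have hcongr {v : V → ℂ} {w : Lp ℂ 2 (volume : Measure V)} (h : v =ᵐ[volume] w) :
        (v ⋆[.mul ℂ ℂ] (𝓕⁻ m : 𝓢(V, ℂ))) x = ∫ y, w y * (𝓕⁻ m) (x - y) := by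
      refine integral_congr_ae ?_
      filter_upwards [h] with y hy
      rw [ContinuousLinearMap.mul_apply', hy]
    simp only [hcongr (hus _), hcongr hg.coeFn_toLp.symm]
    exact ((continuous_integral_Lp_mul hk).tendsto _).comp hlim
  have hnorm : Tendsto (fun n => ENNReal.ofReal C * eLpNorm (u n) 2 volume) atTop
      (𝓝 (ENNReal.ofReal C * eLpNorm g 2 volume)) := by
    refine ENNReal.Tendsto.const_mul ?_ (.inr ENNReal.ofReal_ne_top)
    simpa only [eLpNorm_congr_ae (hus _), Lp.enorm_def, eLpNorm_congr_ae hg.coeFn_toLp] using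
      hlim.enorm
  refine (Lp.eLpNorm_lim_le_liminf_eLpNorm (fun n => ?_) _ (.of_forall hpointwise)).trans ?_
  · rw [← coe_schwartz_convolution]
    exact (SchwartzMap.continuous _).aestronglyMeasurable
  · rw [← hnorm.liminf_eq]
    exact liminf_le_liminf (.of_forall fun n => eLpNorm_schwartz_convolution_fourierInv_le m _ hm)

end Plancherel

section RealKernel

open scoped FourierTransform SchwartzMap Convolution

variable {ι : Type*} [Fintype ι] (m : 𝓢(EuclideanSpace ℝ ι, ℂ))

/-- The convolution kernel with Fourier symbol `m`, as a function on `ι → ℝ`. Only its real part is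
kept, since it is applied to real functions. -/
noncomputable def realKernel : 𝓢(EuclideanSpace ℝ ι, ℂ) →L[ℝ] 𝓢(ι → ℝ, ℝ) :=
  SchwartzMap.postcompCLM Complex.reCLM ∘L
    SchwartzMap.compCLMOfContinuousLinearEquiv ℝ (EuclideanSpace.equiv ι ℝ).symm ∘L
      FourierTransform.fourierInvCLM ℝ 𝓢(EuclideanSpace ℝ ι, ℂ)

lemma realKernel_apply (x : ι → ℝ) : realKernel m x = ((𝓕⁻ m) (WithLp.toLp 2 x)).re := rfl

lemma bddAbove_range_norm_schwartzMap {E F : Type*} [NormedAddCommGroup E] [NormedSpace ℝ E]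
    [NormedAddCommGroup F] [NormedSpace ℝ F] (f : 𝓢(E, F)) :
    BddAbove (Set.range fun x => ‖f x‖) := by
  obtain ⟨M, -, hM⟩ := f.decay 0 0
  exact ⟨M, Set.forall_mem_range.2 fun x => by simpa using hM x⟩

lemma convolution_realKernel_eq_re {g : (ι → ℝ) → ℝ} (hg : Integrable g) (x : ι → ℝ) :
    (g ⋆ realKernel m) x = (((fun v : EuclideanSpace ℝ ι => (g v.ofLp : ℂ)) ⋆[.mul ℂ ℂ]
      (𝓕⁻ m : 𝓢(EuclideanSpace ℝ ι, ℂ))) (WithLp.toLp 2 x)).re := by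
  have hint : Integrable fun y => (𝓕⁻ m) (WithLp.toLp 2 x - WithLp.toLp 2 y) * (g y : ℂ) := by
    obtain ⟨M, hM⟩ := bddAbove_range_norm_schwartzMap (𝓕⁻ m)
    exact hg.ofReal.bdd_mul (c := M) ((𝓕⁻ m).continuous.comp (continuous_const.sub
      (PiLp.continuous_toLp 2 _))).aestronglyMeasurable (.of_forall fun y => hM ⟨_, rfl⟩)
  rw [convolution_eq_integral_mul, convolution_def,
    ← (PiLp.volume_preserving_toLp ι).integral_comp
      (MeasurableEquiv.toLp 2 (ι → ℝ)).measurableEmbedding]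
  simp only [ContinuousLinearMap.mul_apply', mul_comm (Complex.ofReal _)]
  refine Eq.trans ?_ (integral_re hint)
  refine integral_congr_ae (.of_forall fun y => ?_)
  simp only [RCLike.re_to_complex, Complex.re_mul_ofReal, realKernel_apply, WithLp.toLp_sub,
    mul_comm (g y)]

lemma eLpNorm_two_sq {α F : Type*} [MeasurableSpace α] {μ : Measure α} [NormedAddCommGroup F]
    (u : α → F) : eLpNorm u 2 μ ^ 2 = ∫⁻ x, ‖u x‖ₑ ^ 2 ∂μ := by
  simpa using eLpNorm_nnreal_pow_eq_lintegral (f := u) (μ := μ) (p := 2) two_ne_zero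

lemma lintegral_convolution_realKernel_sq_le {C : ℝ} (hm : ∀ ξ, ‖m ξ‖ ≤ C) {g : (ι → ℝ) → ℝ}
    (hg : Integrable g) (hg₂ : MemLp g 2) :
    ∫⁻ x, ‖(g ⋆ realKernel m) x‖ₑ ^ 2 ≤ ENNReal.ofReal C ^ 2 * ∫⁻ x, ‖g x‖ₑ ^ 2 := by
  have htoLp := PiLp.volume_preserving_toLp ι
  have hemb := (MeasurableEquiv.toLp 2 (ι → ℝ)).measurableEmbedding
  set G : EuclideanSpace ℝ ι → ℂ := fun v => (g v.ofLp : ℂ)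
  have hG : MemLp G 2 := (hg₂.comp_measurePreserving (PiLp.volume_preserving_ofLp ι)).ofReal
  set T := G ⋆[.mul ℂ ℂ] (𝓕⁻ m : 𝓢(EuclideanSpace ℝ ι, ℂ))
  calc ∫⁻ x, ‖(g ⋆ realKernel m) x‖ₑ ^ 2 ≤ ∫⁻ x, ‖T (WithLp.toLp 2 x)‖ₑ ^ 2 := by
        gcongr with x
        rw [convolution_realKernel_eq_re m hg]
        exact enorm_le_iff_norm_le.2 (Complex.abs_re_le_norm _)
    _ = eLpNorm T 2 volume ^ 2 := by
        rw [eLpNorm_two_sq, ← htoLp.lintegral_comp_emb hemb]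
    _ ≤ (ENNReal.ofReal C * eLpNorm G 2 volume) ^ 2 := by
        gcongr
        exact eLpNorm_convolution_fourierInv_le m hm hG
    _ = ENNReal.ofReal C ^ 2 * ∫⁻ x, ‖g x‖ₑ ^ 2 := by
        rw [mul_pow, eLpNorm_two_sq, ← htoLp.lintegral_comp_emb hemb]
        simp only [G, enorm_eq_nnnorm, Complex.nnnorm_real]

/-- The dilated symbol `ξ ↦ m (2⁻ʲ ξ)`. -/
noncomputable def dilate (j : ℤ) : 𝓢(EuclideanSpace ℝ ι, ℂ) →L[ℝ] 𝓢(EuclideanSpace ℝ ι, ℂ) :=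
  SchwartzMap.compCLMOfContinuousLinearEquiv ℝ
    (.smulLeft (Units.mk0 ((2 : ℝ) ^ (-j)) (by positivity)))

lemma dilate_apply (j : ℤ) (ξ : EuclideanSpace ℝ ι) : dilate j m ξ = m ((2 : ℝ) ^ (-j) • ξ) := rfl

lemma realKernel_dilate (j : ℤ) (x : ι → ℝ) : realKernel (dilate j m) x =
    ((2 : ℝ) ^ j) ^ Fintype.card ι * realKernel m ((2 : ℝ) ^ j • x) := by
  have hj : (0 : ℝ) < 2 ^ j := by positivity
  have hscale := Measure.integral_comp_inv_smul_of_nonneg volume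
    (fun v : EuclideanSpace ℝ ι => Complex.exp (((2 * Real.pi *
      inner ℝ v (WithLp.toLp 2 ((2 : ℝ) ^ j • x)) : ℝ) : ℂ) * Complex.I) • m v) hj.le
  simp only [finrank_euclideanSpace, realKernel_apply, SchwartzMap.fourierInv_coe,
    Real.fourierInv_eq'] at hscale ⊢
  rw [← Complex.re_ofReal_mul, ← Complex.real_smul, ← hscale]
  have hinner (v : EuclideanSpace ℝ ι) :
      inner ℝ (((2 : ℝ) ^ j)⁻¹ • v) (WithLp.toLp 2 ((2 : ℝ) ^ j • x)) =
        inner ℝ v (WithLp.toLp 2 x) := by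
    rw [WithLp.toLp_smul, real_inner_smul_left, real_inner_smul_right,
      inv_mul_cancel_left₀ hj.ne']
  simp only [dilate_apply, zpow_neg, hinner]

/-- The symbol `∑ j ∈ S, m (2⁻ʲ ξ)` of a truncated Littlewood–Paley decomposition. -/
noncomputable def dyadicSum (S : Finset ℤ) :
    𝓢(EuclideanSpace ℝ ι, ℂ) →L[ℝ] 𝓢(EuclideanSpace ℝ ι, ℂ) :=
  ∑ j ∈ S, dilate j

lemma dyadicSum_apply (S : Finset ℤ) (ξ : EuclideanSpace ℝ ι) :
    dyadicSum S m ξ = ∑ j ∈ S, m ((2 : ℝ) ^ (-j) • ξ) := by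
  simp only [dyadicSum, sum_apply, dilate_apply]

lemma realKernel_dyadicSum (S : Finset ℤ) (x : ι → ℝ) : realKernel (dyadicSum S m) x =
    ∑ j ∈ S, ((2 : ℝ) ^ j) ^ Fintype.card ι * realKernel m ((2 : ℝ) ^ j • x) := by
  simp only [dyadicSum, map_sum, sum_apply, realKernel_dilate]

lemma exists_norm_le_mul_min_norm {E : Type*} [NormedAddCommGroup E] [NormedSpace ℝ E]
    (m : 𝓢(E, ℂ)) (h₀ : m 0 = 0) :
    ∃ C : ℝ, 0 ≤ C ∧ ∀ ξ, ‖m ξ‖ ≤ C * min ‖ξ‖ ‖ξ‖⁻¹ := by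
  obtain ⟨C₁, hC₁, hlip⟩ := (SchwartzMap.fderivCLM ℝ _ _ m).decay 0 0
  obtain ⟨C₂, -, hdecay⟩ := m.decay 1 0
  simp only [pow_zero, norm_iteratedFDeriv_zero, one_mul, pow_one] at hlip hdecay
  refine ⟨max C₁ C₂, by positivity, fun ξ => ?_⟩
  rcases eq_or_ne ξ 0 with rfl | hξ
  · simp [h₀]
  rw [mul_min_of_nonneg _ _ (by positivity)]
  refine le_min ?_ ?_
  · have hmean := convex_univ.norm_image_sub_le_of_norm_fderiv_le (𝕜 := ℝ) (f := m) (x := 0)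
      (y := ξ) (fun x _ => m.differentiableAt) (fun x _ => hlip x) trivial trivial
    rw [h₀, sub_zero, sub_zero] at hmean
    exact hmean.trans (by gcongr; exact le_max_left _ _)
  · rw [← div_eq_mul_inv, le_div_iff₀' (norm_pos_iff.2 hξ)]
    exact (hdecay ξ).trans (le_max_right _ _)

lemma exists_norm_dyadicSum_le (h₀ : m 0 = 0) : ∃ C : ℝ, ∀ S ξ, ‖dyadicSum S m ξ‖ ≤ C := by
  obtain ⟨C, hC, hle⟩ := exists_norm_le_mul_min_norm m h₀
  obtain ⟨D, -, hD⟩ := exists_sum_min_zpow_mul_inv_le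
  refine ⟨C * D, fun S ξ => ?_⟩
  rw [dyadicSum_apply]
  calc ‖∑ j ∈ S, m ((2 : ℝ) ^ (-j) • ξ)‖
      ≤ ∑ j ∈ S, C * min (2 ^ j * ‖ξ‖⁻¹) (2 ^ j * ‖ξ‖⁻¹)⁻¹ := by
        refine norm_sum_le_of_le _ fun j _ => (hle _).trans_eq ?_
        rw [norm_smul, Real.norm_of_nonneg (by positivity), min_comm, mul_inv, mul_inv, inv_inv,
          zpow_neg, inv_inv]
    _ ≤ C * D := by
        rw [← Finset.mul_sum]
        gcongr
        exact hD _ (by positivity) S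

theorem exists_isCZKernel_realKernel_dyadicSum (h₀ : m 0 = 0) :
    ∃ B : ℝ≥0∞, B ≠ ⊤ ∧ ∀ S, IsCZKernel (realKernel (dyadicSum S m)) B := by
  obtain ⟨C, hC⟩ := exists_norm_dyadicSum_le m h₀
  obtain ⟨B, hB, hle⟩ := exists_setLIntegral_enorm_dyadic_sum_sub_le volume (realKernel m)
  refine ⟨ENNReal.ofReal C ^ 2 + B, by finiteness, fun S =>
    ⟨SchwartzMap.continuous _, bddAbove_range_norm_schwartzMap _, ?_, ?_⟩⟩
  · intro g hg hg₂
    refine (lintegral_convolution_realKernel_sq_le _ (hC S) hg hg₂).trans ?_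
    gcongr
    exact le_self_add
  · intro y
    simp only [realKernel_dyadicSum]
    simp only [Module.finrank_fintype_fun_eq_card] at hle
    exact (hle S y).trans le_add_self

section Derivative

variable [DecidableEq ι] (c : ι)

/-- Multiplication of a symbol by `2 π i ξ_c`, the symbol of the partial derivative `∂_c`. -/
noncomputable def symbolDeriv : 𝓢(EuclideanSpace ℝ ι, ℂ) →L[ℝ] 𝓢(EuclideanSpace ℝ ι, ℂ) :=
  (2 * Real.pi * Complex.I) • SchwartzMap.smulLeftCLM ℂ
    fun ξ : EuclideanSpace ℝ ι => inner ℝ ξ (WithLp.toLp 2 (Pi.single c (1 : ℝ)))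

lemma symbolDeriv_apply (ξ : EuclideanSpace ℝ ι) :
    symbolDeriv c m ξ = 2 * Real.pi * Complex.I * ξ c * m ξ := by
  have hcoord : inner ℝ ξ (WithLp.toLp 2 (Pi.single c (1 : ℝ))) = ξ c := by
    simp [PiLp.inner_apply]
  rw [symbolDeriv, smul_apply, smul_apply,
    SchwartzMap.smulLeftCLM_apply_apply (by fun_prop), hcoord, Complex.real_smul, smul_eq_mul,
    mul_assoc _ (ξ c : ℂ)]

lemma fderiv_realKernel_single (x : ι → ℝ) :
    fderiv ℝ (realKernel m) x (Pi.single c 1) = realKernel (symbolDeriv c m) x := by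
  have hinv : HasFDerivAt (𝓕⁻ m : 𝓢(EuclideanSpace ℝ ι, ℂ)) (fderiv ℝ (𝓕⁻ m : 𝓢(_, ℂ))
      (WithLp.toLp 2 x)) ((EuclideanSpace.equiv ι ℝ).symm x) := (𝓕⁻ m).differentiableAt.hasFDerivAt
  have hcomp := Complex.reCLM.hasFDerivAt.comp x
    (hinv.comp x (EuclideanSpace.equiv ι ℝ).symm.hasFDerivAt)
  have hderiv := SchwartzMap.lineDerivOp_fourierInv_eq m (WithLp.toLp 2 (Pi.single c (1 : ℝ)))
  rw [realKernel_apply, symbolDeriv, smul_apply, ← hderiv,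
    SchwartzMap.lineDerivOp_apply_eq_fderiv]
  exact DFunLike.congr_fun hcomp.fderiv _

/-- Dilates of a symbol, weighted so that differentiation turns the sum into a `dyadicSum`. -/
noncomputable def dyadicPotential (S : Finset ℤ) :
    𝓢(EuclideanSpace ℝ ι, ℂ) →L[ℝ] 𝓢(EuclideanSpace ℝ ι, ℂ) :=
  ∑ j ∈ S, (2 : ℝ) ^ (-j) • dilate j

lemma symbolDeriv_dyadicPotential (S : Finset ℤ) :
    symbolDeriv c (dyadicPotential S m) = dyadicSum S (symbolDeriv c m) := by
  ext ξ
  simp only [symbolDeriv_apply, dyadicSum_apply, dyadicPotential, sum_apply, Finset.mul_sum,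
    smul_apply, dilate_apply, PiLp.smul_apply, smul_eq_mul, Complex.ofReal_mul, Complex.real_smul]
  exact Finset.sum_congr rfl fun j _ => by ring

end Derivative

end RealKernel

section Symbols

open scoped Matrix SchwartzMap

lemma cross_inv_smul_cross_of_dotProduct_eq_zero {K : Type*} [Field K] {ξ w : Fin 3 → K}
    (hξ : ξ ⬝ᵥ ξ ≠ 0) (hw : ξ ⬝ᵥ w = 0) : ξ ⨯₃ ((ξ ⬝ᵥ ξ)⁻¹ • (ξ ⨯₃ w)) = -w := by
  rw [map_smul, cross_cross_eq_smul_sub_smul', hw, zero_smul, zero_sub, smul_neg,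
    inv_smul_smul₀ hξ]

/-- The curl of a field `Φ` on `ℝ³`, expressed through its derivatives `D c d = ∂_c Φ_d`. -/
def curlOfDeriv {α : Type*} [Sub α] (D : Fin 3 → Fin 3 → α) : Fin 3 → α :=
  ![D 1 2 - D 2 1, D 2 0 - D 0 2, D 0 1 - D 1 0]

lemma map_curlOfDeriv {Φ α β : Type*} [AddGroup α] [AddGroup β] [FunLike Φ α β]
    [AddMonoidHomClass Φ α β] (φ : Φ) (D : Fin 3 → Fin 3 → α) (j : Fin 3) :
    φ (curlOfDeriv D j) = curlOfDeriv (fun c d => φ (D c d)) j := by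
  fin_cases j <;> exact map_sub φ _ _

lemma curlOfDeriv_mul {R : Type*} [CommRing R] (ξ P : Fin 3 → R) :
    curlOfDeriv (fun c d => ξ c * P d) = ξ ⨯₃ P :=
  (cross_apply ξ P).symm

lemma exists_schwartzMap_eq_mul {E : Type*} [NormedAddCommGroup E] [NormedSpace ℝ E]
    {ψ : 𝓢(E, ℂ)} (hψ : HasCompactSupport ψ) {g : E → ℂ}
    (hg : ∀ ξ ∈ tsupport ψ, ContDiffAt ℝ (⊤ : ℕ∞) g ξ) : ∃ m : 𝓢(E, ℂ), ∀ ξ, m ξ = ψ ξ * g ξ := by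
  have hsmooth : ContDiff ℝ (⊤ : ℕ∞) fun ξ => ψ ξ * g ξ := by
    refine contDiff_iff_contDiffAt.2 fun ξ => ?_
    by_cases hξ : ξ ∈ tsupport ψ
    · exact (ψ.smooth _).contDiffAt.mul (hg ξ hξ)
    · refine contDiffAt_const (c := (0 : ℂ)) |>.congr_of_eventuallyEq ?_
      filter_upwards [notMem_tsupport_iff_eventuallyEq.1 hξ] with y hy
      rw [hy, Pi.zero_apply, zero_mul]
  have hsupp : HasCompactSupport fun ξ => ψ ξ * g ξ := hψ.mul_right
  exact ⟨hsupp.toSchwartzMap hsmooth, fun _ => rfl⟩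

section ContDiffMatrix

variable {𝕜 E : Type*} [NontriviallyNormedField 𝕜] [NormedAddCommGroup E] [NormedSpace 𝕜 E]
  {κ ι ω : Type*} [Fintype ι] {n : WithTop ℕ∞} {x : E}

lemma contDiffAt_matrix_mul_apply {M : E → Matrix κ ι 𝕜} {M' : E → Matrix ι ω 𝕜}
    (hM : ∀ i j, ContDiffAt 𝕜 n (fun y => M y i j) x)
    (hM' : ∀ i j, ContDiffAt 𝕜 n (fun y => M' y i j) x) (i : κ) (j : ω) :
    ContDiffAt 𝕜 n (fun y => (M y * M' y) i j) x := by
  simp only [Matrix.mul_apply]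
  exact ContDiffAt.sum fun k _ => (hM i k).mul (hM' k j)

lemma contDiffAt_matrix_det [DecidableEq ι] {M : E → Matrix ι ι 𝕜}
    (hM : ∀ i j, ContDiffAt 𝕜 n (fun y => M y i j) x) : ContDiffAt 𝕜 n (fun y => (M y).det) x := by
  simp only [Matrix.det_apply]
  exact ContDiffAt.sum fun σ _ => (contDiffAt_prod fun i _ => hM _ _).const_smul _

lemma contDiffAt_matrix_inv_apply [DecidableEq ι] {M : E → Matrix ι ι 𝕜}
    (hM : ∀ i j, ContDiffAt 𝕜 n (fun y => M y i j) x) (hdet : (M x).det ≠ 0) (i j : ι) :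
    ContDiffAt 𝕜 n (fun y => (M y)⁻¹ i j) x := by
  simp only [Matrix.inv_def, Matrix.smul_apply, Ring.inverse_eq_inv', smul_eq_mul,
    Matrix.adjugate_apply]
  refine ((contDiffAt_matrix_det hM).inv hdet).mul (contDiffAt_matrix_det fun a b => ?_)
  simp only [Matrix.updateRow_apply]
  split_ifs
  · exact contDiffAt_const
  · exact hM a b

end ContDiffMatrix

variable {ι ω : Type*} [Fintype ι] [DecidableEq ι] [Fintype ω]

/-- The left inverse `(a* a)⁻¹ a*` of an injective matrix `a`. -/
noncomputable def gramLeftInverse (a : Matrix ω ι ℝ) : Matrix ι ω ℝ := (aᵀ * a)⁻¹ * aᵀ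

lemma det_transpose_mul_self_ne_zero {a : Matrix ω ι ℝ} (ha : Function.Injective a.mulVec) :
    (aᵀ * a).det ≠ 0 :=
  (Matrix.PosDef.conjTranspose_mul_self a ha).det_pos.ne'

lemma gramLeftInverse_mul {a : Matrix ω ι ℝ} (ha : Function.Injective a.mulVec) :
    gramLeftInverse a * a = 1 := by
  rw [gramLeftInverse, Matrix.mul_assoc,
    Matrix.nonsing_inv_mul _ (det_transpose_mul_self_ne_zero ha).isUnit]

/-- The symbol `𝔸[ξ]` of the operator `u ↦ (∑ i j, B w i j ∂_j u_i)_w`. -/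
def symbolMatrix (B : ω → Matrix ι ι ℝ) (ξ : ι → ℝ) : Matrix ω ι ℝ := .of fun w => B w *ᵥ ξ

/-- The multiplier `ξ_b (𝔸[ξ]* 𝔸[ξ])⁻¹ 𝔸[ξ]*`, of which only row `a` is kept. -/
noncomputable def entryMultiplier (B : ω → Matrix ι ι ℝ) (a b : ι) (w : ω) (ξ : ι → ℝ) : ℝ :=
  ξ b * gramLeftInverse (symbolMatrix B ξ) a w

/-- What `entryMultiplier` misses of the matrix unit `e_a ⊗ e_b`. -/
noncomputable def entryRemainder (B : ω → Matrix ι ι ℝ) (a b : ι) (ξ : ι → ℝ) : Matrix ι ι ℝ :=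
  Matrix.single a b 1 - ∑ w, entryMultiplier B a b w ξ • B w

variable {B : ω → Matrix ι ι ℝ} {a b : ι} {ξ : ι → ℝ}

lemma entryRemainder_mulVec (hB : Function.Injective (symbolMatrix B ξ).mulVec) :
    entryRemainder B a b ξ *ᵥ ξ = 0 := by
  have hsum : (∑ w, entryMultiplier B a b w ξ • B w) *ᵥ ξ = Pi.single a (ξ b) := by
    ext i
    calc ((∑ w, entryMultiplier B a b w ξ • B w) *ᵥ ξ) i
        = ξ b * (gramLeftInverse (symbolMatrix B ξ) * symbolMatrix B ξ) a i := by
          simp only [Matrix.sum_mulVec, Matrix.smul_mulVec, Finset.sum_apply, Pi.smul_apply,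
            smul_eq_mul, entryMultiplier, Matrix.mul_apply, Finset.mul_sum, mul_assoc,
            symbolMatrix, Matrix.of_apply]
      _ = (Pi.single a (ξ b) : ι → ℝ) i := by
          rw [gramLeftInverse_mul hB, Matrix.one_apply, mul_ite, mul_one, mul_zero,
            Pi.single_apply]
          simp only [eq_comm]
  rw [entryRemainder, Matrix.sub_mulVec, hsum, Matrix.single_mulVec, one_mul]
  exact sub_self _

lemma contDiffAt_entryMultiplier (a b : ι) (hB : Function.Injective (symbolMatrix B ξ).mulVec)
    (w : ω) : ContDiffAt ℝ (⊤ : ℕ∞) (entryMultiplier B a b w) ξ := by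
  have hsymbol (w i) : ContDiffAt ℝ (⊤ : ℕ∞) (fun ξ => symbolMatrix B ξ w i) ξ := by
    simp only [symbolMatrix, Matrix.of_apply, Matrix.mulVec, dotProduct]
    fun_prop
  have htranspose (i w) : ContDiffAt ℝ (⊤ : ℕ∞) (fun ξ => (symbolMatrix B ξ)ᵀ i w) ξ := hsymbol w i
  have hinv := contDiffAt_matrix_inv_apply (contDiffAt_matrix_mul_apply htranspose hsymbol)
    (det_transpose_mul_self_ne_zero hB)
  exact (contDiff_apply ℝ ℝ b).contDiffAt.mul (contDiffAt_matrix_mul_apply hinv htranspose a w)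

lemma contDiffAt_entryRemainder (a b : ι) (hB : Function.Injective (symbolMatrix B ξ).mulVec)
    (i : ι) : ContDiffAt ℝ (⊤ : ℕ∞) (fun ξ => entryRemainder B a b ξ i) ξ := by
  have hmul := contDiffAt_entryMultiplier a b hB
  refine contDiffAt_pi.2 fun j => ?_
  simp only [entryRemainder, Matrix.sub_apply, Matrix.sum_apply, Matrix.smul_apply]
  fun_prop

/-- The multiplier `P_i` with `entryRemainder B a b ξ i = -2 π ξ ⨯₃ P_i(ξ)`: it solves
`e_a ⊗ e_b = ∑ w, H_w B_w + curl P` on the Fourier side. -/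
noncomputable def curlMultiplier (B : ω → Matrix (Fin 3) (Fin 3) ℝ) (a b i : Fin 3)
    (ξ : Fin 3 → ℝ) : Fin 3 → ℝ :=
  (2 * Real.pi)⁻¹ • (ξ ⬝ᵥ ξ)⁻¹ • (ξ ⨯₃ entryRemainder B a b ξ i)

section CurlMultiplier

variable {B : ω → Matrix (Fin 3) (Fin 3) ℝ} {a b : Fin 3} {ξ : Fin 3 → ℝ}

lemma cross_curlMultiplier (hξ : ξ ≠ 0) (hB : Function.Injective (symbolMatrix B ξ).mulVec)
    (i : Fin 3) :
    -(2 * Real.pi) • (ξ ⨯₃ curlMultiplier B a b i ξ) = entryRemainder B a b ξ i := by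
  have horth : ξ ⬝ᵥ entryRemainder B a b ξ i = 0 := by
    rw [dotProduct_comm]
    exact congrFun (entryRemainder_mulVec hB) i
  rw [curlMultiplier, map_smul,
    cross_inv_smul_cross_of_dotProduct_eq_zero (dotProduct_self_eq_zero.not.2 hξ) horth, neg_smul,
    smul_inv_smul₀ (by positivity), neg_neg]

lemma contDiffAt_curlMultiplier (a b : Fin 3) (hξ : ξ ≠ 0)
    (hB : Function.Injective (symbolMatrix B ξ).mulVec) (i d : Fin 3) :
    ContDiffAt ℝ (⊤ : ℕ∞) (fun ξ => curlMultiplier B a b i ξ d) ξ := by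
  have hrem := contDiffAt_entryRemainder a b hB i
  have hcross : ContDiffAt ℝ (⊤ : ℕ∞) (fun ξ => ξ ⨯₃ entryRemainder B a b ξ i) ξ := by
    simp only [cross_apply]
    refine contDiffAt_pi.2 fun d => ?_
    fin_cases d <;> dsimp <;> fun_prop
  have hsq : ContDiffAt ℝ (⊤ : ℕ∞) (fun ξ : Fin 3 → ℝ => (ξ ⬝ᵥ ξ)⁻¹) ξ := by
    refine ContDiffAt.inv ?_ (dotProduct_self_eq_zero.not.2 hξ)
    simp only [dotProduct]
    fun_prop
  exact contDiffAt_pi.1 ((hsq.smul hcross).const_smul (2 * Real.pi)⁻¹) d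

lemma exists_schwartzMap_eq_mul_ofReal {ι : Type*} [Fintype ι] {ψ : 𝓢(EuclideanSpace ℝ ι, ℂ)}
    (hψ : HasCompactSupport ψ) (h₀ : 0 ∉ tsupport ψ) {g : (ι → ℝ) → ℝ}
    (hg : ∀ ξ ≠ 0, ContDiffAt ℝ (⊤ : ℕ∞) g ξ) (z : ℂ) :
    ∃ m : 𝓢(EuclideanSpace ℝ ι, ℂ), ∀ ξ, m ξ = ψ ξ * (z * g ξ.ofLp) := by
  refine exists_schwartzMap_eq_mul hψ fun ξ hξ => contDiffAt_const.mul <|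
    Complex.ofRealCLM.contDiff.contDiffAt.comp ξ <|
      (hg _ ?_).comp ξ (EuclideanSpace.equiv ι ℝ).contDiff.contDiffAt
  exact (WithLp.ofLp_eq_zero 2).not.2 (ne_of_mem_of_not_mem hξ h₀)

theorem exists_symbol_decomposition (hB : ∀ ξ ≠ 0, Function.Injective (symbolMatrix B ξ).mulVec)
    {ψ : 𝓢(EuclideanSpace ℝ (Fin 3), ℂ)} (hψ : HasCompactSupport ψ) (h₀ : 0 ∉ tsupport ψ)
    (a b : Fin 3) :
    ∃ (k : ω → 𝓢(EuclideanSpace ℝ (Fin 3), ℂ))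
      (l : Fin 3 → Fin 3 → 𝓢(EuclideanSpace ℝ (Fin 3), ℂ)), (∀ w, k w 0 = 0) ∧
      ∀ i j, Matrix.single a b (1 : ℝ) i j • ψ =
        ∑ w, B w i j • k w + curlOfDeriv (fun c d => symbolDeriv c (l i d)) j := by
  have hψ₀ : ψ 0 = 0 := image_eq_zero_of_notMem_tsupport h₀
  choose k hk using fun w => exists_schwartzMap_eq_mul_ofReal hψ h₀
    (fun ξ hξ => contDiffAt_entryMultiplier a b (hB ξ hξ) w) 1
  choose l hl using fun i d => exists_schwartzMap_eq_mul_ofReal hψ h₀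
    (fun ξ hξ => contDiffAt_curlMultiplier a b hξ (hB ξ hξ) i d) Complex.I
  refine ⟨k, l, fun w => by rw [hk, hψ₀, zero_mul], fun i j => ?_⟩
  ext ξ
  have hcurl : curlOfDeriv (fun c d => symbolDeriv c (l i d)) j ξ =
      ψ ξ * ((-(2 * Real.pi) • (ξ.ofLp ⨯₃ curlMultiplier B a b i ξ.ofLp)) j : ℝ) := by
    rw [← curlOfDeriv_mul]
    fin_cases j <;> simp [curlOfDeriv, symbolDeriv_apply, hl] <;> ring_nf <;> simp
  have hmul : (∑ w, B w i j • k w) ξ =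
      ψ ξ * ((∑ w, entryMultiplier B a b w ξ.ofLp • B w) i j : ℝ) := by
    simp only [sum_apply, smul_apply, hk, Matrix.sum_apply, Matrix.smul_apply, smul_eq_mul,
      Complex.real_smul, Complex.ofReal_sum, Complex.ofReal_mul, Finset.mul_sum]
    exact Finset.sum_congr rfl fun w _ => by ring
  rw [add_apply, hcurl, hmul, smul_apply, Complex.real_smul, mul_comm]
  rcases eq_or_ne ξ 0 with rfl | hξ
  · simp only [hψ₀, zero_mul, zero_add]
  · have hξ' : ξ.ofLp ≠ 0 := (WithLp.ofLp_eq_zero 2).not.2 hξ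
    rw [cross_curlMultiplier hξ' (hB _ hξ'), entryRemainder, ← mul_add, ← Complex.ofReal_add,
      Matrix.sub_apply, add_sub_cancel]

end CurlMultiplier

end Symbols

section ConvolutionDerivative

open scoped Convolution SchwartzMap

variable {V F : Type*} [NormedAddCommGroup V] [NormedSpace ℝ V] [SecondCountableTopology V]
  [MeasurableSpace V] [BorelSpace V] [NormedAddCommGroup F] [NormedSpace ℝ F] {μ : Measure V}
  {f : V → ℝ} {k : V → F}

lemma hasFDerivAt_convolution_of_bddAbove (hf : Integrable f μ) (hk : ContDiff ℝ 1 k)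
    (hb : BddAbove (Set.range fun x => ‖k x‖))
    (hb' : BddAbove (Set.range fun x => ‖fderiv ℝ k x‖)) (x : V) :
    HasFDerivAt (f ⋆[.lsmul ℝ ℝ, μ] k) ((f ⋆[.lsmul ℝ ℝ, μ] fderiv ℝ k) x) x := by
  obtain ⟨M, hM⟩ := id hb'
  have hcont : Continuous (fderiv ℝ k) := hk.continuous_fderiv one_ne_zero
  have hint (x : V) := integrable_smul_comp_sub hk.continuous hb hf x
  refine hasFDerivAt_integral_of_dominated_of_fderiv_le (bound := fun y => ‖f y‖ * M)
    (F' := fun x y => f y • fderiv ℝ k (x - y))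
    Filter.univ_mem (.of_forall fun x => (hint x).1) (hint x)
    (integrable_smul_comp_sub hcont hb' hf x).1 (.of_forall fun y x _ => ?_) (hf.norm.mul_const _)
    (.of_forall fun y x _ => ?_)
  · exact (norm_smul_le _ _).trans (mul_le_mul_of_nonneg_left (hM ⟨_, rfl⟩) (norm_nonneg _))
  · have hderiv := (hk.differentiable one_ne_zero (x - y)).hasFDerivAt
    exact (hderiv.comp x ((hasFDerivAt_id x).sub_const y)).const_smul (f y)

lemma contDiff_one_convolution_of_bddAbove (hf : Integrable f μ) (hk : ContDiff ℝ 1 k)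
    (hb : BddAbove (Set.range fun x => ‖k x‖))
    (hb' : BddAbove (Set.range fun x => ‖fderiv ℝ k x‖)) :
    ContDiff ℝ 1 (f ⋆[.lsmul ℝ ℝ, μ] k) := by
  have hderiv := hasFDerivAt_convolution_of_bddAbove hf hk hb hb'
  refine contDiff_one_iff_fderiv.2 ⟨fun x => (hderiv x).differentiableAt, ?_⟩
  rw [funext fun x => (hderiv x).fderiv]
  exact hb'.continuous_convolution_right_of_integrable _ hf (hk.continuous_fderiv one_ne_zero)

lemma contDiff_one_convolution_schwartzMap (hf : Integrable f μ) (k : 𝓢(V, F)) :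
    ContDiff ℝ 1 (f ⋆[.lsmul ℝ ℝ, μ] k) :=
  contDiff_one_convolution_of_bddAbove hf (k.smooth 1) (bddAbove_range_norm_schwartzMap k)
    (bddAbove_range_norm_schwartzMap (SchwartzMap.fderivCLM ℝ V F k))

lemma fderiv_convolution_schwartzMap_apply (hf : Integrable f μ) (k : 𝓢(V, F)) (x v : V) :
    fderiv ℝ (f ⋆[.lsmul ℝ ℝ, μ] k) x v = (f ⋆[.lsmul ℝ ℝ, μ] fun y => fderiv ℝ k y v) x := by
  have hb := bddAbove_range_norm_schwartzMap (SchwartzMap.fderivCLM ℝ V F k)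
  have hcont : Continuous (fderiv ℝ k) := (k.smooth 1).continuous_fderiv one_ne_zero
  rw [(hasFDerivAt_convolution_of_bddAbove hf (k.smooth 1) (bddAbove_range_norm_schwartzMap k) hb
    x).fderiv]
  exact ContinuousLinearMap.integral_apply (integrable_smul_comp_sub hcont hb hf x) v

/-- Convolution with a fixed integrable function, as a linear map of the Schwartz kernel. -/
noncomputable def convolutionLinearMap (hf : Integrable f μ) : 𝓢(V, F) →ₗ[ℝ] V → F where
  toFun k := f ⋆[.lsmul ℝ ℝ, μ] k
  map_add' k k' := by
    have hint (k : 𝓢(V, F)) : ConvolutionExists f k (.lsmul ℝ ℝ) μ := fun x =>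
      integrable_smul_comp_sub k.continuous (bddAbove_range_norm_schwartzMap k) hf x
    exact (hint k).distrib_add (hint k')
  map_smul' _ _ := convolution_smul

end ConvolutionDerivative

section DyadicResolution

open Filter Topology
open scoped FourierTransform SchwartzMap Convolution

variable {ι : Type*} [Fintype ι] (η : 𝓢(EuclideanSpace ℝ ι, ℂ)) {f g : (ι → ℝ) → ℝ}

/-- The difference of two consecutive dyadic dilates of `η`. If `η` is `1` near the origin, then
this is supported in an annulus, and its dyadic dilates form a partition of unity. -/
noncomputable def annulusCutoff : 𝓢(EuclideanSpace ℝ ι, ℂ) := η - dilate (-1) η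

lemma hasCompactSupport_annulusCutoff (hη : HasCompactSupport η) :
    HasCompactSupport (annulusCutoff η) :=
  hη.sub (hη.comp_smul (c := (2 : ℝ) ^ (-(-1 : ℤ))) (by positivity))

lemma zero_notMem_tsupport_annulusCutoff (hη : ∀ᶠ ξ in 𝓝 0, η ξ = 1) :
    0 ∉ tsupport (annulusCutoff η) := by
  rw [notMem_tsupport_iff_eventuallyEq]
  have hscale : Tendsto (fun ξ : EuclideanSpace ℝ ι => (2 : ℝ) ^ (-(-1 : ℤ)) • ξ) (𝓝 0) (𝓝 0) := by
    simpa using (continuous_const_smul ((2 : ℝ) ^ (-(-1 : ℤ)))).tendsto (0 : EuclideanSpace ℝ ι)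
  filter_upwards [hη, hscale.eventually hη] with ξ h₁ h₂
  rw [annulusCutoff, sub_apply, dilate_apply, h₁, h₂, sub_self, Pi.zero_apply]

lemma dilate_dilate (i j : ℤ) : dilate i (dilate j η) = dilate (i + j) η := by
  ext ξ
  rw [dilate_apply, dilate_apply, dilate_apply, smul_smul, ← zpow_add₀ two_ne_zero, neg_add,
    add_comm]

lemma dyadicSum_Ioc_annulusCutoff (N : ℕ) :
    dyadicSum (Finset.Ioc (-N : ℤ) N) (annulusCutoff η) = dilate N η - dilate (-N) η := by
  have hstep (j : ℤ) : dilate j (annulusCutoff η) = dilate j η - dilate (j - 1) η := by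
    rw [annulusCutoff, map_sub, dilate_dilate, sub_eq_add_neg j]
  simp only [dyadicSum, sum_apply, hstep]
  induction N with
  | zero => simp
  | succ N ih =>
    have hIoc : Finset.Ioc (-(N + 1 : ℕ) : ℤ) (N + 1 : ℕ) =
        insert (-N : ℤ) (insert (N + 1 : ℤ) (Finset.Ioc (-N : ℤ) N)) := by
      ext j
      simp only [Finset.mem_Ioc, Finset.mem_insert]
      lia
    rw [hIoc, Finset.sum_insert (by simp; lia), Finset.sum_insert (by simp), ih,
      add_sub_cancel_right]
    push_cast
    rw [neg_add']
    abel

lemma exists_schwartzMap_eventually_eq_one (V : Type*) [NormedAddCommGroup V]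
    [InnerProductSpace ℝ V] [FiniteDimensional ℝ V] :
    ∃ η : 𝓢(V, ℂ), HasCompactSupport η ∧ ∀ᶠ ξ in 𝓝 0, η ξ = 1 := by
  let φ : ContDiffBump (0 : V) := ⟨1, 2, one_pos, one_lt_two⟩
  have hsupp : HasCompactSupport fun ξ => (φ ξ : ℂ) := φ.hasCompactSupport.comp_left
    Complex.ofReal_zero
  refine ⟨hsupp.toSchwartzMap (Complex.ofRealCLM.contDiff.comp φ.contDiff), hsupp, ?_⟩
  filter_upwards [φ.eventuallyEq_one] with ξ hξ
  exact congrArg Complex.ofReal hξ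

lemma integral_realKernel : ∫ x, realKernel η x = (η 0).re := by
  have hη : η 0 = ∫ v, (𝓕⁻ η : 𝓢(EuclideanSpace ℝ ι, ℂ)) v := by
    have hinv : 𝓕 (𝓕⁻ η) = η := FourierTransform.fourier_fourierInv_eq η
    conv_lhs => rw [← hinv]
    rw [SchwartzMap.fourier_coe, Real.fourier_eq']
    simp
  rw [hη]
  exact ((PiLp.volume_preserving_toLp ι).integral_comp
    (MeasurableEquiv.toLp 2 (ι → ℝ)).measurableEmbedding
      fun v => ((𝓕⁻ η : 𝓢(EuclideanSpace ℝ ι, ℂ)) v).re).trans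
    (integral_re (𝕜 := ℂ) (𝓕⁻ η : 𝓢(EuclideanSpace ℝ ι, ℂ)).integrable)

lemma convolution_realKernel_dilate (j : ℤ) (x : ι → ℝ) :
    (g ⋆ realKernel (dilate j η)) x = ∫ z, g (x - (2 : ℝ) ^ (-j) • z) * realKernel η z := by
  have hscale := Measure.integral_comp_smul_of_nonneg volume
    (fun z => g (x - (2 : ℝ) ^ (-j) • z) * realKernel η z) ((2 : ℝ) ^ j) (hR := by positivity)
  rw [Module.finrank_fintype_fun_eq_card, smul_eq_mul,
    eq_inv_mul_iff_mul_eq₀ (by positivity), ← integral_const_mul] at hscale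
  rw [convolution_lsmul_swap, ← hscale]
  refine integral_congr_ae (.of_forall fun z => ?_)
  simp only [realKernel_dilate, smul_smul, ← zpow_add₀ (two_ne_zero' ℝ), neg_add_cancel, zpow_zero,
    one_smul, smul_eq_mul]
  ring

lemma norm_convolution_realKernel_dilate_le {M : ℝ} (hg : ∀ x, ‖g x‖ ≤ M) (j : ℤ) (x : ι → ℝ) :
    ‖(g ⋆ realKernel (dilate j η)) x‖ ≤ M * ∫ z, ‖realKernel η z‖ := by
  rw [convolution_realKernel_dilate, ← integral_const_mul]
  refine norm_integral_le_of_norm_le ((realKernel η).integrable.norm.const_mul M)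
    (.of_forall fun z => ?_)
  exact (norm_mul_le _ _).trans (mul_le_mul_of_nonneg_right (hg _) (norm_nonneg _))

lemma tendsto_convolution_realKernel_dilate_atTop (hη : η 0 = 1) (hc : Continuous g)
    (hb : BddAbove (Set.range fun x => ‖g x‖)) (x : ι → ℝ) :
    Tendsto (fun N : ℕ => (g ⋆ realKernel (dilate N η)) x) atTop (𝓝 (g x)) := by
  obtain ⟨M, hM⟩ := hb
  have hg : g x = ∫ z, g x * realKernel η z := by
    rw [integral_const_mul, integral_realKernel, hη, Complex.one_re, mul_one]
  simp only [convolution_realKernel_dilate]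
  rw [hg]
  refine tendsto_integral_of_dominated_convergence (fun z => M * ‖realKernel η z‖)
    (fun N => ?_) ((realKernel η).integrable.norm.const_mul M)
    (fun N => .of_forall fun z => ?_) (.of_forall fun z => .mul_const _ ?_)
  · have := (realKernel η).continuous
    exact Continuous.aestronglyMeasurable (by fun_prop)
  · exact (norm_mul_le _ _).trans (mul_le_mul_of_nonneg_right (hM ⟨_, rfl⟩) (norm_nonneg _))
  · have hpow : Tendsto (fun N : ℕ => (2 : ℝ) ^ (-N : ℤ)) atTop (𝓝 0) := by
      simpa using tendsto_pow_atTop_nhds_zero_of_lt_one (r := (2 : ℝ)⁻¹) (by norm_num) (by norm_num)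
    refine (hc.tendsto x).comp ?_
    simpa using tendsto_const_nhds.sub (hpow.smul_const z)

lemma tendsto_convolution_realKernel_dilate_neg_atTop [Nonempty ι] (hg : Integrable g)
    (x : ι → ℝ) : Tendsto (fun N : ℕ => (g ⋆ realKernel (dilate (-N) η)) x) atTop (𝓝 0) := by
  obtain ⟨M, hM⟩ := bddAbove_range_norm_schwartzMap (realKernel η)
  have hle (N : ℕ) : ‖(g ⋆ realKernel (dilate (-N) η)) x‖ ≤
      ((2 : ℝ)⁻¹ ^ Fintype.card ι) ^ N * M * ∫ y, ‖g y‖ := by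
    rw [← integral_const_mul]
    refine norm_integral_le_of_norm_le (hg.norm.const_mul _) (.of_forall fun y => ?_)
    have hscale : ((2 : ℝ) ^ (-N : ℤ)) ^ Fintype.card ι = ((2 : ℝ)⁻¹ ^ Fintype.card ι) ^ N := by
      rw [zpow_neg, zpow_natCast, ← inv_pow, pow_right_comm]
    simp only [ContinuousLinearMap.lsmul_apply, smul_eq_mul, realKernel_dilate, hscale]
    rw [mul_comm, norm_mul, norm_mul, norm_pow, norm_pow, norm_inv, Real.norm_two]
    gcongr
    exact hM ⟨_, rfl⟩
  have hpow := tendsto_pow_atTop_nhds_zero_of_lt_one (r := (2 : ℝ)⁻¹ ^ Fintype.card ι)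
    (by positivity) (pow_lt_one₀ (by norm_num) (by norm_num) Fintype.card_ne_zero)
  refine squeeze_zero_norm hle ?_
  simpa using (hpow.mul_const M).mul_const (∫ y, ‖g y‖)

theorem tendsto_integral_mul_convolution_dyadicSum_annulusCutoff [Nonempty ι] (hη : η 0 = 1)
    (hf : Integrable f) (hg : Integrable g) (hc : Continuous g)
    (hb : BddAbove (Set.range fun x => ‖g x‖)) :
    Tendsto (fun N : ℕ => ∫ x, f x *
        (g ⋆ realKernel (dyadicSum (Finset.Ioc (-N : ℤ) N) (annulusCutoff η))) x)
      atTop (𝓝 (∫ x, f x * g x)) := by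
  obtain ⟨M, hM⟩ := id hb
  have hsub (N : ℕ) (x : ι → ℝ) :
      (g ⋆ realKernel (dyadicSum (Finset.Ioc (-N : ℤ) N) (annulusCutoff η))) x =
        (g ⋆ realKernel (dilate N η)) x - (g ⋆ realKernel (dilate (-N) η)) x := by
    rw [dyadicSum_Ioc_annulusCutoff, map_sub]
    exact congrFun (map_sub (convolutionLinearMap hg) _ _) x
  refine tendsto_integral_of_dominated_convergence
    (fun x => ‖f x‖ * (M * (∫ z, ‖realKernel η z‖) + M * ∫ z, ‖realKernel η z‖))
    (fun N => hf.1.mul ?_) (hf.norm.mul_const _) (fun N => .of_forall fun x => ?_)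
    (.of_forall fun x => .const_mul _ ?_)
  · exact (contDiff_one_convolution_schwartzMap hg _).continuous.aestronglyMeasurable
  · rw [norm_mul, hsub]
    have hM' (x : ι → ℝ) : ‖g x‖ ≤ M := hM ⟨x, rfl⟩
    gcongr
    exact norm_sub_le_of_le (norm_convolution_realKernel_dilate_le η hM' _ x)
      (norm_convolution_realKernel_dilate_le η hM' _ x)
  · simp only [hsub]
    simpa using (tendsto_convolution_realKernel_dilate_atTop η hη hc hb x).sub
      (tendsto_convolution_realKernel_dilate_neg_atTop η hg x)

end DyadicResolution

section Curl

variable {n : WithTop ℕ∞} {g h : (Fin 3 → ℝ) → ℝ} {f φ : Fin 3 → (Fin 3 → ℝ) → ℝ}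

lemma contDiff_pd {m : WithTop ℕ∞} (hmn : m + 1 ≤ n) (hg : ContDiff ℝ n g) (c : Fin 3) :
    ContDiff ℝ m (pd c g) :=
  (hg.fderiv_right hmn).clm_apply contDiff_const

lemma pd_pd_comm (hg : ContDiff ℝ 2 g) (c d : Fin 3) (x : Fin 3 → ℝ) :
    pd c (pd d g) x = pd d (pd c g) x := by
  have hdiff : DifferentiableAt ℝ (fderiv ℝ g) x :=
    (hg.fderiv_right (m := 1) (by norm_num)).differentiable one_ne_zero x
  have hpd (c d : Fin 3) :
      pd c (pd d g) x = fderiv ℝ (fderiv ℝ g) x (Pi.single c 1) (Pi.single d 1) := by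
    unfold pd
    simp [fderiv_clm_apply hdiff (differentiableAt_const _)]
  rw [hpd, hpd]
  exact hg.contDiffAt.isSymmSndFDerivAt (by simp) _ _

lemma integral_mul_pd_eq_neg (hg : ContDiff ℝ 1 g) (hgs : HasCompactSupport g)
    (hh : ContDiff ℝ 1 h) (c : Fin 3) : ∫ x, g x * pd c h x = -∫ x, pd c g x * h x := by
  have hg' : Continuous (pd c g) := (contDiff_pd (m := 0) (by simp) hg c).continuous
  have hh' : Continuous (pd c h) := (contDiff_pd (m := 0) (by simp) hh c).continuous
  exact integral_mul_fderiv_eq_neg_fderiv_mul_of_integrable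
    ((hg'.mul hh.continuous).integrable_of_hasCompactSupport (hgs.fderiv_apply ℝ _).mul_right)
    ((hg.continuous.mul hh').integrable_of_hasCompactSupport hgs.mul_right)
    ((hg.continuous.mul hh.continuous).integrable_of_hasCompactSupport hgs.mul_right)
    (fun x _ => hg.differentiable one_ne_zero x) (fun x _ => hh.differentiable one_ne_zero x)

/-- The curl of the vector field on `ℝ³` with components `f`; the rows of `mcurl` are of this
form. -/
noncomputable def curl (f : Fin 3 → (Fin 3 → ℝ) → ℝ) : Fin 3 → (Fin 3 → ℝ) → ℝ :=
  curlOfDeriv fun c d => pd c (f d)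

lemma mcurl_apply_apply (F : (Fin 3 → ℝ) → Fin 3 → Fin 3 → ℝ) (x : Fin 3 → ℝ) (i j : Fin 3) :
    mcurl F x i j = curl (fun d y => F y i d) j x := by
  fin_cases j <;> rfl

lemma curlOfDeriv_induction {α : Type*} [Sub α] {p : α → Prop}
    (hsub : ∀ a b, p a → p b → p (a - b)) {D : Fin 3 → Fin 3 → α} (hD : ∀ c d, p (D c d))
    (j : Fin 3) : p (curlOfDeriv D j) := by
  fin_cases j <;> exact hsub _ _ (hD _ _) (hD _ _)

lemma contDiff_curl {m : WithTop ℕ∞} (hmn : m + 1 ≤ n) (hf : ∀ d, ContDiff ℝ n (f d))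
    (j : Fin 3) : ContDiff ℝ m (curl f j) :=
  curlOfDeriv_induction (fun _ _ => ContDiff.sub) (fun c d => contDiff_pd hmn (hf d) c) j

lemma hasCompactSupport_curl (hf : ∀ d, HasCompactSupport (f d)) (j : Fin 3) :
    HasCompactSupport (curl f j) :=
  curlOfDeriv_induction (p := HasCompactSupport) (fun _ _ h₁ h₂ => h₁.sub h₂)
    (fun _ d => (hf d).fderiv_apply ℝ _) j

lemma divergence_curl (hf : ∀ d, ContDiff ℝ 2 (f d)) (x : Fin 3 → ℝ) :
    ∑ j, pd j (curl f j) x = 0 := by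
  have hdiff (c d : Fin 3) : DifferentiableAt ℝ (pd c (f d)) x :=
    (contDiff_pd (m := 1) (by norm_num) (hf d) c).differentiable one_ne_zero x
  have hpd (j c d c' d' : Fin 3) :
      pd j (pd c (f d) - pd c' (f d')) x = pd j (pd c (f d)) x - pd j (pd c' (f d')) x :=
    congrArg (· (Pi.single j 1)) (fderiv_sub (hdiff c d) (hdiff c' d'))
  simp only [Fin.sum_univ_three, curl, curlOfDeriv, Matrix.cons_val_zero, Matrix.cons_val_one,
    Matrix.cons_val, hpd]
  rw [pd_pd_comm (hf 2) 0 1, pd_pd_comm (hf 1) 0 2, pd_pd_comm (hf 0) 1 2]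
  ring

lemma sum_integral_mul_curl_eq (hf : ∀ j, ContDiff ℝ 1 (f j)) (hfs : ∀ j, HasCompactSupport (f j))
    (hφ : ∀ j, ContDiff ℝ 1 (φ j)) :
    ∑ j, ∫ x, f j x * curl φ j x = ∑ d, ∫ x, curl f d x * φ d x := by
  have hleft (j c d) : Integrable fun x => f j x * pd c (φ d) x :=
    ((hf j).continuous.mul (contDiff_pd (m := 0) (by simp) (hφ d) c).continuous
      ).integrable_of_hasCompactSupport (hfs j).mul_right
  have hright (j c d) : Integrable fun x => pd c (f j) x * φ d x :=
    ((contDiff_pd (m := 0) (by simp) (hf j) c).continuous.mul (hφ d).continuous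
      ).integrable_of_hasCompactSupport ((hfs j).fderiv_apply ℝ _).mul_right
  simp only [Fin.sum_univ_three, curl, curlOfDeriv, Matrix.cons_val_zero, Matrix.cons_val_one,
    Matrix.cons_val, Pi.sub_apply, mul_sub, sub_mul, integral_sub (hleft _ _ _) (hleft _ _ _),
    integral_sub (hright _ _ _) (hright _ _ _), integral_mul_pd_eq_neg (hf _) (hfs _) (hφ _)]
  ring

end Curl

section MultiplierEstimates

open scoped Convolution SchwartzMap

lemma norm_le_sum_norm_apply_single {ι : Type*} [Fintype ι] [DecidableEq ι]
    (T : (ι → ℝ) →L[ℝ] ℝ) : ‖T‖ ≤ ∑ c, ‖T (Pi.single c 1)‖ := by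
  refine T.opNorm_le_bound (by positivity) fun v => ?_
  have hv : T v = ∑ c, v c * T (Pi.single c 1) := by
    conv_lhs => rw [← Finset.univ_sum_single v, map_sum]
    refine Finset.sum_congr rfl fun c _ => ?_
    rw [← smul_eq_mul, ← map_smul, ← Pi.single_smul, smul_eq_mul, mul_one]
  rw [hv, Finset.sum_mul]
  refine norm_sum_le_of_le _ fun c _ => ?_
  rw [norm_mul, mul_comm]
  exact mul_le_mul_of_nonneg_left (norm_le_pi_norm v c) (norm_nonneg _)

variable {ι : Type*} [Fintype ι] {f : (ι → ℝ) → ℝ} {q : ℝ}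

lemma exists_eLpNorm_convolution_dyadicSum_le [Nonempty ι] (hq : 2 < q)
    {m : 𝓢(EuclideanSpace ℝ ι, ℂ)} (h₀ : m 0 = 0) :
    ∃ C ≠ ⊤, ∀ (S : Finset ℤ) (f : (ι → ℝ) → ℝ), Continuous f → HasCompactSupport f →
      eLpNorm (f ⋆ realKernel (dyadicSum S m)) (ENNReal.ofReal q) volume ≤
        C * eLpNorm f (ENNReal.ofReal q) volume := by
  obtain ⟨B, hB, hK⟩ := exists_isCZKernel_realKernel_dyadicSum m h₀
  obtain ⟨C, hC, hle⟩ := exists_eLpNorm_convolution_le_of_two_lt (ι := ι) hq hB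
  exact ⟨C, hC, fun S => hle _ (hK S)⟩

lemma fderiv_convolution_dyadicPotential_single [DecidableEq ι] (hf : Integrable f)
    (m : 𝓢(EuclideanSpace ℝ ι, ℂ)) (S : Finset ℤ) (c : ι) (x : ι → ℝ) :
    fderiv ℝ (f ⋆ realKernel (dyadicPotential S m)) x (Pi.single c 1) =
      (f ⋆ realKernel (dyadicSum S (symbolDeriv c m))) x := by
  simp only [fderiv_convolution_schwartzMap_apply hf, fderiv_realKernel_single,
    symbolDeriv_dyadicPotential]

lemma exists_eLpNorm_fderiv_convolution_dyadicPotential_le [Nonempty ι] (hq : 2 < q)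
    (m : 𝓢(EuclideanSpace ℝ ι, ℂ)) :
    ∃ C ≠ ⊤, ∀ (S : Finset ℤ) (f : (ι → ℝ) → ℝ), Continuous f → HasCompactSupport f →
      eLpNorm (fderiv ℝ (f ⋆ realKernel (dyadicPotential S m))) (ENNReal.ofReal q) volume ≤
        C * eLpNorm f (ENNReal.ofReal q) volume := by
  classical
  choose C hC hle using fun c => exists_eLpNorm_convolution_dyadicSum_le hq
    (m := symbolDeriv c m) (by simp [symbolDeriv_apply])
  refine ⟨∑ c, C c, ENNReal.sum_ne_top.2 fun c _ => hC c, fun S f hf hfs => ?_⟩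
  have hi : Integrable f := hf.integrable_of_hasCompactSupport hfs
  have hcont (c : ι) : Continuous (f ⋆ realKernel (dyadicSum S (symbolDeriv c m))) :=
    (contDiff_one_convolution_schwartzMap hi _).continuous
  have hpt (x : ι → ℝ) : ‖fderiv ℝ (f ⋆ realKernel (dyadicPotential S m)) x‖ ≤
      (∑ c, fun x => ‖(f ⋆ realKernel (dyadicSum S (symbolDeriv c m))) x‖) x := by
    simpa only [Finset.sum_apply, fderiv_convolution_dyadicPotential_single hi] using
      norm_le_sum_norm_apply_single (fderiv ℝ (f ⋆ realKernel (dyadicPotential S m)) x)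
  calc eLpNorm (fderiv ℝ (f ⋆ realKernel (dyadicPotential S m))) (ENNReal.ofReal q) volume
      ≤ eLpNorm (∑ c, fun x => ‖(f ⋆ realKernel (dyadicSum S (symbolDeriv c m))) x‖)
          (ENNReal.ofReal q) volume :=
        eLpNorm_mono_real hpt
    _ ≤ ∑ c, eLpNorm (f ⋆ realKernel (dyadicSum S (symbolDeriv c m))) (ENNReal.ofReal q)
          volume := by
        simpa only [eLpNorm_norm] using eLpNorm_sum_le (s := Finset.univ)
          (fun c _ => (hcont c).norm.aestronglyMeasurable) (ENNReal.one_le_ofReal.2 (by linarith))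
    _ ≤ (∑ c, C c) * eLpNorm f (ENNReal.ofReal q) volume := by
        rw [Finset.sum_mul]
        exact Finset.sum_le_sum fun c _ => hle c S f hf hfs

end MultiplierEstimates

section KornMaxwellSobolev

open scoped Convolution SchwartzMap Matrix

variable {ω : Type*} {B : ω → Matrix (Fin 3) (Fin 3) ℝ}
  {ψ : 𝓢(EuclideanSpace ℝ (Fin 3), ℂ)} {F : Fin 3 → Fin 3 → (Fin 3 → ℝ) → ℝ}
  {G : (Fin 3 → ℝ) → ℝ}

lemma smul_convolution_dyadicSum_eq [Fintype ω] {k : ω → 𝓢(EuclideanSpace ℝ (Fin 3), ℂ)}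
    {l : Fin 3 → 𝓢(EuclideanSpace ℝ (Fin 3), ℂ)} {r : ℝ} {β : ω → ℝ} {j : Fin 3}
    (h : r • ψ = ∑ w, β w • k w + curlOfDeriv (fun c d => symbolDeriv c (l d)) j)
    (hG : Integrable G) (S : Finset ℤ) :
    r • (G ⋆ realKernel (dyadicSum S ψ)) = ∑ w, β w • (G ⋆ realKernel (dyadicSum S (k w))) +
      curl (fun d => G ⋆ realKernel (dyadicPotential S (l d))) j := by
  let L := convolutionLinearMap hG ∘ₗ
    (realKernel ∘L dyadicSum S : 𝓢(EuclideanSpace ℝ (Fin 3), ℂ) →L[ℝ] 𝓢(Fin 3 → ℝ, ℝ)).toLinearMap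
  have hcurl : (fun c d => L (symbolDeriv c (l d))) =
      fun c d => pd c (G ⋆ realKernel (dyadicPotential S (l d))) := by
    ext c d x
    exact (fderiv_convolution_dyadicPotential_single hG (l d) S c x).symm
  have hL := congrArg L h
  rw [map_add, map_smul, map_sum, map_curlOfDeriv, hcurl] at hL
  simp only [map_smul] at hL
  exact hL

section EntryExpansion

variable [Fintype ω] {k : ω → 𝓢(EuclideanSpace ℝ (Fin 3), ℂ)}
  {l : Fin 3 → Fin 3 → 𝓢(EuclideanSpace ℝ (Fin 3), ℂ)} {a b : Fin 3}

lemma mul_convolution_dyadicSum_eq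
    (h : ∀ i j, Matrix.single a b (1 : ℝ) i j • ψ =
      ∑ w, B w i j • k w + curlOfDeriv (fun c d => symbolDeriv c (l i d)) j)
    (hG : Integrable G) (S : Finset ℤ) (x : Fin 3 → ℝ) :
    F a b x * (G ⋆ realKernel (dyadicSum S ψ)) x =
      ∑ w, (∑ i, ∑ j, B w i j * F i j x) * (G ⋆ realKernel (dyadicSum S (k w))) x +
        ∑ i, ∑ j, F i j x * curl (fun d => G ⋆ realKernel (dyadicPotential S (l i d))) j x := by
  have hentry (i j) := congrFun (smul_convolution_dyadicSum_eq (h i j) hG S) x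
  simp only [Pi.smul_apply, Pi.add_apply, Finset.sum_apply, smul_eq_mul] at hentry
  calc F a b x * (G ⋆ realKernel (dyadicSum S ψ)) x
      = ∑ i, ∑ j, F i j x *
          (Matrix.single a b (1 : ℝ) i j * (G ⋆ realKernel (dyadicSum S ψ)) x) := by
        simp [Matrix.single_apply, ite_and]
    _ = _ := by
        simp only [hentry, mul_add, Finset.sum_add_distrib, Finset.mul_sum, Finset.sum_mul]
        rw [Finset.sum_comm_cycle]
        simp only [mul_assoc, mul_left_comm]

lemma integral_mul_convolution_dyadicSum_eq
    (h : ∀ i j, Matrix.single a b (1 : ℝ) i j • ψ =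
      ∑ w, B w i j • k w + curlOfDeriv (fun c d => symbolDeriv c (l i d)) j)
    (hF : ∀ i j, ContDiff ℝ 1 (F i j)) (hFs : ∀ i j, HasCompactSupport (F i j))
    (hG : Integrable G) (S : Finset ℤ) :
    ∫ x, F a b x * (G ⋆ realKernel (dyadicSum S ψ)) x =
      ∑ w, (∫ x, (∑ i, ∑ j, B w i j * F i j x) * (G ⋆ realKernel (dyadicSum S (k w))) x) +
        ∑ i, ∑ d, ∫ x, curl (F i) d x * (G ⋆ realKernel (dyadicPotential S (l i d))) x := by
  have hU (i d) : ContDiff ℝ 1 (G ⋆ realKernel (dyadicPotential S (l i d))) :=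
    contDiff_one_convolution_schwartzMap hG _
  have hT (w) : Continuous (G ⋆ realKernel (dyadicSum S (k w))) :=
    (contDiff_one_convolution_schwartzMap hG _).continuous
  have hint {i j} {u : (Fin 3 → ℝ) → ℝ} (hu : Continuous u) : Integrable fun x => F i j x * u x :=
    ((hF i j).continuous.mul hu).integrable_of_hasCompactSupport (hFs i j).mul_right
  have hcurl (i j) : Integrable fun x =>
      F i j x * curl (fun d => G ⋆ realKernel (dyadicPotential S (l i d))) j x :=
    hint (contDiff_curl (m := 0) (by simp) (hU i) j).continuous
  have hAF (w) : Integrable fun x =>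
      (∑ i, ∑ j, B w i j * F i j x) * (G ⋆ realKernel (dyadicSum S (k w))) x := by
    simp only [Finset.sum_mul, mul_assoc]
    exact integrable_finsetSum _ fun i _ => integrable_finsetSum _ fun j _ =>
      (hint (hT w)).const_mul _
  simp only [mul_convolution_dyadicSum_eq h hG S]
  rw [integral_add (integrable_finsetSum _ fun w _ => hAF w)
    (integrable_finsetSum _ fun i _ => integrable_finsetSum _ fun j _ => hcurl i j),
    integral_finsetSum _ fun w _ => hAF w,
    integral_finsetSum _ fun i _ => integrable_finsetSum _ fun j _ => hcurl i j]
  congr 1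
  refine Finset.sum_congr rfl fun i _ => ?_
  rw [integral_finsetSum _ fun j _ => hcurl i j]
  exact sum_integral_mul_curl_eq (hF i) (hFs i) (hU i)

end EntryExpansion

lemma enorm_integral_curl_mul_le {f : Fin 3 → (Fin 3 → ℝ) → ℝ} (hf : ∀ j, ContDiff ℝ 2 (f j))
    (hfs : ∀ j, HasCompactSupport (f j)) (d : Fin 3) {φ : (Fin 3 → ℝ) → ℝ} (hφ : ContDiff ℝ 1 φ) :
    ‖∫ x, curl f d x * φ x‖ₑ ≤
      4 * (∫⁻ x, ∑ j, ‖curl f j x‖ₑ) * eLpNorm (fderiv ℝ φ) (ENNReal.ofReal 3) volume := by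
  have hle := enorm_integral_mul_le_of_divergence_eq_zero two_ne_zero
    (fun j => contDiff_curl (m := 1) (by norm_num) hf j) (hasCompactSupport_curl hfs)
    (divergence_curl hf) d hφ
  rw [eLpNorm_ofReal_eq_lintegral three_pos]
  norm_num at hle ⊢
  exact hle

theorem exists_enorm_integral_mul_convolution_dyadicSum_le [Finite ω]
    (hB : ∀ ξ ≠ 0, Function.Injective (symbolMatrix B ξ).mulVec) (hψ : HasCompactSupport ψ)
    (h₀ : 0 ∉ tsupport ψ) (a b : Fin 3) :
    ∃ C ≠ ⊤, ∀ F : Fin 3 → Fin 3 → (Fin 3 → ℝ) → ℝ, (∀ i j, ContDiff ℝ 2 (F i j)) →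
      (∀ i j, HasCompactSupport (F i j)) → ∀ R : ℝ≥0∞,
      (∀ w, eLpNorm (fun x => ∑ i, ∑ j, B w i j * F i j x) (ENNReal.ofReal (3 / 2)) volume ≤ R) →
      (∀ i, ∫⁻ x, ∑ d, ‖curl (F i) d x‖ₑ ≤ R) → ∀ (S : Finset ℤ) (G : (Fin 3 → ℝ) → ℝ),
      Continuous G → HasCompactSupport G →
        ‖∫ x, F a b x * (G ⋆ realKernel (dyadicSum S ψ)) x‖ₑ ≤
          C * R * eLpNorm G (ENNReal.ofReal 3) volume := by
  cases nonempty_fintype ω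
  obtain ⟨k, l, hk₀, hkl⟩ := exists_symbol_decomposition hB hψ h₀ a b
  choose Ck hCk hk using fun w => exists_eLpNorm_convolution_dyadicSum_le
    (by norm_num : (2 : ℝ) < 3) (hk₀ w)
  choose Cl hCl hl using fun i d => exists_eLpNorm_fderiv_convolution_dyadicPotential_le
    (by norm_num : (2 : ℝ) < 3) (l i d)
  refine ⟨∑ w, Ck w + ∑ i, ∑ d, 4 * Cl i d, ENNReal.add_ne_top.2 ⟨ENNReal.sum_ne_top.2
    fun w _ => hCk w, ENNReal.sum_ne_top.2 fun i _ => ENNReal.sum_ne_top.2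
    fun d _ => ENNReal.mul_ne_top (by norm_num) (hCl i d)⟩,
    fun F hF hFs R hR hR' S G hG hGs => ?_⟩
  have hi : Integrable G := hG.integrable_of_hasCompactSupport hGs
  have hmain (w) : ‖∫ x, (∑ i, ∑ j, B w i j * F i j x) * (G ⋆ realKernel (dyadicSum S (k w))) x‖ₑ ≤
      Ck w * R * eLpNorm G (ENNReal.ofReal 3) volume := by
    have hF' (i j) : Continuous (F i j) := (hF i j).continuous
    have hAF : Continuous fun x => ∑ i, ∑ j, B w i j * F i j x := by fun_prop
    have hT : Continuous (G ⋆ realKernel (dyadicSum S (k w))) :=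
      (contDiff_one_convolution_schwartzMap hi _).continuous
    refine (enorm_integral_mul_le (p := 3 / 2) (q := 3) (by rw [Real.holderConjugate_iff]; norm_num)
      hAF.aemeasurable hT.aemeasurable).trans ?_
    exact (mul_le_mul' (hR w) (hk w S G hG hGs)).trans_eq (by ring)
  have hcurl (i d) : ‖∫ x, curl (F i) d x * (G ⋆ realKernel (dyadicPotential S (l i d))) x‖ₑ ≤
      4 * Cl i d * R * eLpNorm G (ENNReal.ofReal 3) volume := by
    refine (enorm_integral_curl_mul_le (hF i) (hFs i) d
      (contDiff_one_convolution_schwartzMap hi _)).trans ?_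
    refine (mul_le_mul' (mul_le_mul_right (hR' i) 4) (hl i d S G hG hGs)).trans_eq (by ring)
  rw [integral_mul_convolution_dyadicSum_eq hkl (fun i j => (hF i j).of_le one_le_two) hFs hi S]
  refine (enorm_add_le_of_le ((enorm_sum_le _ _).trans (Finset.sum_le_sum fun w _ => hmain w))
    ((enorm_sum_le _ _).trans (Finset.sum_le_sum fun i _ =>
      (enorm_sum_le _ _).trans (Finset.sum_le_sum fun d _ => hcurl i d)))).trans_eq ?_
  simp only [add_mul, Finset.sum_mul]

theorem exists_eLpNorm_entry_le [Finite ω]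
    (hB : ∀ ξ ≠ 0, Function.Injective (symbolMatrix B ξ).mulVec) (a b : Fin 3) :
    ∃ C ≠ ⊤, ∀ F : Fin 3 → Fin 3 → (Fin 3 → ℝ) → ℝ, (∀ i j, ContDiff ℝ 2 (F i j)) →
      (∀ i j, HasCompactSupport (F i j)) → ∀ R : ℝ≥0∞,
      (∀ w, eLpNorm (fun x => ∑ i, ∑ j, B w i j * F i j x) (ENNReal.ofReal (3 / 2)) volume ≤ R) →
      (∀ i, ∫⁻ x, ∑ d, ‖curl (F i) d x‖ₑ ≤ R) →
        eLpNorm (F a b) (ENNReal.ofReal (3 / 2)) volume ≤ C * R := by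
  obtain ⟨η, hηs, hη⟩ := exists_schwartzMap_eventually_eq_one (EuclideanSpace ℝ (Fin 3))
  obtain ⟨C, hC, hle⟩ := exists_enorm_integral_mul_convolution_dyadicSum_le hB
    (hasCompactSupport_annulusCutoff η hηs) (zero_notMem_tsupport_annulusCutoff η hη) a b
  refine ⟨C, hC, fun F hF hFs R hR hR' => ?_⟩
  refine eLpNorm_le_of_forall_enorm_integral_mul_le (p := 3 / 2) (q := 3)
    (by rw [Real.holderConjugate_iff]; norm_num) (hF a b).continuous fun G hG hGs => ?_
  have hlim := tendsto_integral_mul_convolution_dyadicSum_annulusCutoff η hη.self_of_nhds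
    ((hF a b).continuous.integrable_of_hasCompactSupport (hFs a b))
    (hG.integrable_of_hasCompactSupport hGs) hG
    (hG.norm.bddAbove_range_of_hasCompactSupport hGs.norm)
  exact le_of_tendsto hlim.enorm (.of_forall fun N => hle F hF hFs R hR hR' _ G hG hGs)

/-- The matrices `B w` for which `A M = (∑ i j, B w i j M_ij)_w`. -/
def entryMatrix (A : (Fin 3 → Fin 3 → ℝ) →ₗ[ℝ] (ω → ℝ)) (w : ω) : Matrix (Fin 3) (Fin 3) ℝ :=
  .of fun i j => A (Pi.single i (Pi.single j 1)) w

lemma apply_eq_sum_entryMatrix_mul (A : (Fin 3 → Fin 3 → ℝ) →ₗ[ℝ] (ω → ℝ))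
    (M : Fin 3 → Fin 3 → ℝ) (w : ω) : A M w = ∑ i, ∑ j, entryMatrix A w i j * M i j := by
  have hM : M = ∑ i, ∑ j, M i j • Pi.single i (Pi.single j 1) := by
    ext i j
    simp [Finset.sum_apply, Pi.single_apply, ite_apply]
  conv_lhs => rw [hM]
  simp only [map_sum, map_smul, Finset.sum_apply, Pi.smul_apply, entryMatrix, Matrix.of_apply,
    smul_eq_mul, mul_comm]

lemma IsElliptic.injective_symbolMatrix_mulVec {N : ℕ}
    {A : (Fin 3 → Fin 3 → ℝ) →ₗ[ℝ] (Fin N → ℝ)} (hA : IsElliptic A) {ξ : Fin 3 → ℝ} (hξ : ξ ≠ 0) :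
    Function.Injective (symbolMatrix (entryMatrix A) ξ).mulVec := by
  convert hA ξ hξ using 1
  ext v w
  rw [apply_eq_sum_entryMatrix_mul]
  simp only [Matrix.mulVec, dotProduct, symbolMatrix, Matrix.of_apply, Finset.sum_mul]
  exact Finset.sum_congr rfl fun i _ => Finset.sum_congr rfl fun j _ => by ring

lemma eLpNorm_le_sum_sum_eLpNorm {α : Type*} [MeasurableSpace α] {μ : Measure α} {ι κ : Type*}
    [Fintype ι] [Fintype κ] {f : α → ι → κ → ℝ} {p : ℝ≥0∞} (hp : 1 ≤ p)
    (hf : ∀ i j, AEStronglyMeasurable (fun x => f x i j) μ) :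
    eLpNorm f p μ ≤ ∑ i, ∑ j, eLpNorm (fun x => f x i j) p μ := by
  have hpt (x : α) : ‖f x‖ ≤ (∑ i, ∑ j, fun x => ‖f x i j‖) x := by
    simp only [Finset.sum_apply]
    refine (pi_norm_le_iff_of_nonneg (by positivity)).2 fun i =>
      (pi_norm_le_iff_of_nonneg (by positivity)).2 fun j => ?_
    exact (Finset.single_le_sum (fun j _ => norm_nonneg (f x i j)) (Finset.mem_univ j)).trans
      (Finset.single_le_sum (f := fun i => ∑ j, ‖f x i j‖)
        (fun i _ => by positivity) (Finset.mem_univ i))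
  have hrow (i : ι) : AEStronglyMeasurable (∑ j, fun x => ‖f x i j‖) μ :=
    Finset.aestronglyMeasurable_sum _ fun j _ => (hf i j).norm
  refine (eLpNorm_mono_real hpt).trans ((eLpNorm_sum_le (fun i _ => hrow i) hp).trans ?_)
  refine Finset.sum_le_sum fun i _ => ?_
  simpa only [eLpNorm_norm] using eLpNorm_sum_le (s := Finset.univ)
    (fun j _ => (hf i j).norm) hp

lemma eLpNorm_apply_le {α : Type*} [MeasurableSpace α] {μ : Measure α} {ι E : Type*} [Fintype ι]
    [NormedAddCommGroup E] (f : α → ι → E) (i : ι) (p : ℝ≥0∞) :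
    eLpNorm (fun x => f x i) p μ ≤ eLpNorm f p μ :=
  eLpNorm_mono fun x => norm_le_pi_norm (f x) i

lemma lintegral_sum_enorm_curl_le (F : (Fin 3 → ℝ) → Fin 3 → Fin 3 → ℝ) (i : Fin 3) :
    ∫⁻ x, ∑ j, ‖curl (fun d y => F y i d) j x‖ₑ ≤ 3 * eLpNorm (mcurl F) 1 volume := by
  rw [eLpNorm_one_eq_lintegral_enorm, ← lintegral_const_mul' _ _ (by norm_num)]
  refine lintegral_mono fun x => ?_
  have hle (j) : ‖curl (fun d y => F y i d) j x‖ₑ ≤ ‖mcurl F x‖ₑ := by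
    rw [← mcurl_apply_apply]
    exact enorm_le_iff_norm_le.2
      ((norm_le_pi_norm (mcurl F x i) j).trans (norm_le_pi_norm (mcurl F x) i))
  exact (Finset.sum_le_sum fun j _ => hle j).trans_eq (by simp)

theorem korn_maxwell_sobolev_p_one_general {N : ℕ}
    {A : (Fin 3 → Fin 3 → ℝ) →ₗ[ℝ] (Fin N → ℝ)} (hA : IsElliptic A) :
    ∃ c : ℝ, 0 < c ∧ ∀ F : (Fin 3 → ℝ) → Fin 3 → Fin 3 → ℝ,
      ContDiff ℝ 2 F → HasCompactSupport F →
        eLpNorm F (ENNReal.ofReal (3 / 2)) volume ≤ ENNReal.ofReal c *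
          (eLpNorm (fun x => A (F x)) (ENNReal.ofReal (3 / 2)) volume +
            eLpNorm (fun x => mcurl F x) 1 volume) := by
  choose C hC hle using exists_eLpNorm_entry_le (B := entryMatrix A)
    fun ξ hξ => hA.injective_symbolMatrix_mulVec hξ
  have hK : ∑ i, ∑ j, C i j * 3 ≠ ⊤ := ENNReal.sum_ne_top.2 fun i _ => ENNReal.sum_ne_top.2
    fun j _ => ENNReal.mul_ne_top (hC i j) (by norm_num)
  refine ⟨(∑ i, ∑ j, C i j * 3).toReal + 1, by positivity, fun F hF hFs => ?_⟩
  have hF' (i j) : ContDiff ℝ 2 fun x => F x i j := contDiff_pi.1 (contDiff_pi.1 hF i) j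
  have hFs' (i j) : HasCompactSupport fun x => F x i j :=
    hFs.comp_left (g := fun M : Fin 3 → Fin 3 → ℝ => M i j) rfl
  set P := eLpNorm (fun x => A (F x)) (ENNReal.ofReal (3 / 2)) volume
  set Q := eLpNorm (fun x => mcurl F x) 1 volume
  have hP (w : Fin N) : eLpNorm (fun x => ∑ i, ∑ j, entryMatrix A w i j * F x i j)
      (ENNReal.ofReal (3 / 2)) volume ≤ 3 * (P + Q) := by
    simp only [← apply_eq_sum_entryMatrix_mul]
    exact (eLpNorm_apply_le _ w _).trans (le_self_add.trans (le_mul_of_one_le_left' (by norm_num)))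
  have hQ (i : Fin 3) : ∫⁻ x, ∑ d, ‖curl (fun j y => F y i j) d x‖ₑ ≤ 3 * (P + Q) :=
    (lintegral_sum_enorm_curl_le F i).trans (mul_le_mul_right le_add_self 3)
  calc eLpNorm F (ENNReal.ofReal (3 / 2)) volume
      ≤ ∑ i, ∑ j, eLpNorm (fun x => F x i j) (ENNReal.ofReal (3 / 2)) volume :=
        eLpNorm_le_sum_sum_eLpNorm (ENNReal.one_le_ofReal.2 (by norm_num))
          fun i j => (hF' i j).continuous.aestronglyMeasurable
    _ ≤ ∑ i, ∑ j, C i j * (3 * (P + Q)) := by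
        gcongr with i _ j _
        exact hle i j (fun i j x => F x i j) hF' hFs' _ hP hQ
    _ = (∑ i, ∑ j, C i j * 3) * (P + Q) := by simp only [Finset.sum_mul, mul_assoc]
    _ ≤ _ := by
        gcongr
        rw [← ENNReal.ofReal_toReal hK]
        exact ENNReal.ofReal_le_ofReal (by simp)

end KornMaxwellSobolev

/-- Korn–Maxwell–Sobolev at `p = 1`: if `A` induces an elliptic operator, then
`‖F‖_{L^{3/2}(ℝ³)} ≤ c(‖A[F]‖_{L^{3/2}(ℝ³)} + ‖curl F‖_{L¹(ℝ³)})` for all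
`F ∈ C_c^∞(ℝ³; ℝ^{3×3})`. -/
theorem korn_maxwell_sobolev_p_one (N : ℕ)
    (A : (Fin 3 → Fin 3 → ℝ) →ₗ[ℝ] (Fin N → ℝ)) (hA : IsElliptic A) :
    ∃ c : ℝ, 0 < c ∧
      ∀ F : (Fin 3 → ℝ) → Fin 3 → Fin 3 → ℝ,
        ContDiff ℝ (⊤ : ℕ∞) F → HasCompactSupport F →
          eLpNorm F (ENNReal.ofReal (3 / 2)) volume ≤
            ENNReal.ofReal c *
              (eLpNorm (fun x => A (F x)) (ENNReal.ofReal (3 / 2)) volume +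
                eLpNorm (fun x => mcurl F x) 1 volume) := by
  obtain ⟨c, hc, hle⟩ := korn_maxwell_sobolev_p_one_general hA
  exact ⟨c, hc, fun F hF => hle F (hF.of_le (WithTop.coe_le_coe.2 le_top))⟩
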